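/- A(1/6;n) ∼ 2√2·cosh(π√(8n−1)/12)/√(8n−1) as n → ∞; that is, the quotient A(1/6;n)·√(8n−1)/(2√2·cosh(π√(8n−1)/12)) tends to 1 as n → ∞. (Here A(1/6;n) = N2(0,6,n) + N2(1,6,n) − N2(2,6,n) − N2(3,6,n).) -/

import Mathlib

open scoped Classical

/-- The M2-rank of a partition: ⌈ℓ/2⌉ − s, where ℓ is the largest part
(0 for the empty partition) and s is the number of parts. -/
def m2Rank {n : ℕ} (P : n.Partition) : ℤ :=
  (((P.parts.sup + 1) / 2 : ℕ) : ℤ) - (Multiset.card P.parts : ℤ)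

/-- A partition has no repeated odd parts. -/
def NoRepeatedOddParts {n : ℕ} (P : n.Partition) : Prop :=
  ∀ j : ℕ, Odd j → P.parts.count j ≤ 1

/-- `N2 r m n` is the number of partitions of `n` without repeated odd parts whose
M2-rank is congruent to `r` modulo `m`. -/
noncomputable def N2 (r : ℤ) (m n : ℕ) : ℕ :=
  Nat.card {P : n.Partition // NoRepeatedOddParts P ∧ m2Rank P ≡ r [ZMOD (m : ℤ)]}

/-- `Acoef a c n = Σ_{r=0}^{c−1} N2(r,c,n)·e^{2πiar/c}`, the coefficient of `q^n`
in the M2-rank generating function `R2(e^{2πia/c};q)`. -/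
noncomputable def Acoef (a : ℤ) (c n : ℕ) : ℂ :=
  ∑ r ∈ Finset.range c,
    (N2 (r : ℤ) c n : ℂ) * Complex.exp (2 * Real.pi * Complex.I * (a : ℂ) * (r : ℂ) / (c : ℂ))

section Part1

open Complex

/-! ### Part 1 : combinatorics -/

noncomputable def zz : ℂ := Complex.exp (Real.pi * I / 3)

lemma zz_pow (k : ℕ) : zz ^ k = Complex.exp (k * (Real.pi * I / 3)) := by
  rw [zz, ← Complex.exp_nat_mul]

lemma zz_cube : zz ^ 3 = -1 := by
  rw [zz_pow, ← Complex.exp_pi_mul_I]; congr 1; push_cast; ring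

lemma zz_six : zz ^ 6 = 1 := by
  have : zz ^ 6 = (zz ^ 3) ^ 2 := by ring
  rw [this, zz_cube]; norm_num

lemma zz_ne_zero : zz ≠ 0 := Complex.exp_ne_zero _

lemma norm_zz : ‖zz‖ = 1 := by
  have : (Real.pi * I / 3 : ℂ) = ((Real.pi / 3 : ℝ) : ℂ) * I := by push_cast; ring
  rw [zz, this, Complex.norm_exp_ofReal_mul_I]

lemma zz_ne : zz ≠ -1 := by
  intro h
  have h2 : zz.re = -1 := by rw [h]; simp
  have : (Real.pi * I / 3 : ℂ) = ((Real.pi / 3 : ℝ) : ℂ) * I := by push_cast; ring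
  rw [zz, this, Complex.exp_ofReal_mul_I_re, Real.cos_pi_div_three] at h2
  norm_num at h2

lemma zz_quad : zz ^ 2 - zz + 1 = 0 := by
  have h : (zz + 1) * (zz ^ 2 - zz + 1) = 0 := by linear_combination zz_cube
  rcases mul_eq_zero.1 h with h | h
  · exact absurd (eq_neg_of_add_eq_zero_left h) zz_ne
  · exact h

lemma zz_inv : zz⁻¹ = 1 - zz := by
  have := zz_ne_zero
  field_simp
  linear_combination zz_quad

lemma norm_zz_inv : ‖zz⁻¹‖ = 1 := by rw [norm_inv, norm_zz, inv_one]

/-- the weight sums -/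
noncomputable def ac (n : ℕ) : ℂ :=
  ∑ P : n.Partition, if NoRepeatedOddParts P then zz ^ (m2Rank P) else 0

lemma Acoef_eq_ac (n : ℕ) : Acoef 1 6 n = ac n := by
  have h1 : ∀ r : ℤ, (N2 r 6 n : ℂ) =
      ∑ P : n.Partition, if (NoRepeatedOddParts P ∧ m2Rank P ≡ r [ZMOD (6 : ℕ)]) then (1 : ℂ) else 0 := by
    intro r
    rw [N2, Nat.card_eq_fintype_card, Fintype.card_subtype, Finset.sum_boole]
  unfold Acoef ac
  simp_rw [h1, Finset.sum_mul]
  rw [Finset.sum_comm]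
  refine Finset.sum_congr rfl fun P _ => ?_
  by_cases hP : NoRepeatedOddParts P
  · simp only [hP, true_and, if_true]
    have h0 : 0 ≤ m2Rank P % 6 := Int.emod_nonneg _ (by norm_num)
    have h6 : m2Rank P % 6 < 6 := Int.emod_lt_of_pos _ (by norm_num)
    rw [Finset.sum_eq_single (m2Rank P % 6).toNat]
    · have e : (((m2Rank P % 6).toNat : ℕ) : ℤ) = m2Rank P % 6 := Int.toNat_of_nonneg h0
      rw [if_pos, one_mul]
      · have e2 : zz ^ (m2Rank P) = zz ^ ((m2Rank P % 6).toNat) := by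
          rw [← zpow_natCast, e]
          conv_lhs => rw [← Int.emod_add_mul_ediv (m2Rank P) 6]
          rw [zpow_add₀ zz_ne_zero, zpow_mul]
          have : zz ^ (6 : ℤ) = 1 := by exact_mod_cast zz_six
          rw [this, one_zpow, mul_one]
        rw [e2, zz_pow]
        congr 1; push_cast; ring
      · rw [e]
        exact (Int.mod_modEq _ _).symm
    · intro r hr hne
      rw [if_neg, zero_mul]
      intro h
      apply hne
      have : m2Rank P % 6 = (r : ℤ) % 6 := h
      have hr' := Finset.mem_range.1 hr
      omega
    · intro h
      exfalso; apply h
      rw [Finset.mem_range]; omega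
  · simp [hP]

lemma card_partition_le (n : ℕ) : Fintype.card n.Partition ≤ 2 ^ n := by
  calc Fintype.card n.Partition ≤ Fintype.card (Composition n) :=
        Fintype.card_le_of_surjective _ Nat.Partition.ofComposition_surj
    _ = 2 ^ (n - 1) := composition_card n
    _ ≤ 2 ^ n := Nat.pow_le_pow_right (by norm_num) (by omega)

noncomputable def tc (m n : ℕ) : ℂ :=
  ∑ P : n.Partition, if NoRepeatedOddParts P ∧ P.parts.sup ≤ 2 * m then zz⁻¹ ^ (Multiset.card P.parts) else 0

noncomputable def dc (m n : ℕ) : ℂ :=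
  ∑ P : n.Partition, if NoRepeatedOddParts P ∧ (P.parts.sup + 1) / 2 = m then zz⁻¹ ^ (Multiset.card P.parts) else 0

lemma dc_zero (n : ℕ) : dc 0 n = tc 0 n := by
  unfold dc tc
  refine Finset.sum_congr rfl fun P _ => ?_
  congr 1
  apply propext
  constructor <;> rintro ⟨h, h2⟩ <;> exact ⟨h, by omega⟩

lemma dc_succ (m n : ℕ) : dc (m + 1) n = tc (m + 1) n - tc m n := by
  unfold dc tc
  rw [← Finset.sum_sub_distrib]
  refine Finset.sum_congr rfl fun P _ => ?_
  by_cases hP : NoRepeatedOddParts P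
  · simp only [hP, true_and]
    by_cases h1 : P.parts.sup ≤ 2 * m
    · rw [if_neg (by omega), if_pos (by omega), if_pos h1, sub_self]
    · by_cases h2 : P.parts.sup ≤ 2 * (m + 1)
      · rw [if_pos (by omega), if_pos h2, if_neg h1, sub_zero]
      · rw [if_neg (by omega), if_neg h2, if_neg h1, sub_zero]
  · simp [hP]

lemma norm_sum_part_le (n : ℕ) (p : n.Partition → Prop) [DecidablePred p] (c : n.Partition → ℂ) (hc : ∀ P, ‖c P‖ = 1) :
    ‖∑ P : n.Partition, if p P then c P else 0‖ ≤ 2 ^ n := by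
  refine (norm_sum_le _ _).trans ?_
  have : ∀ P ∈ (Finset.univ : Finset n.Partition), ‖if p P then c P else 0‖ ≤ 1 := by
    intro P _
    split_ifs
    · rw [hc]
    · simp
  refine (Finset.sum_le_sum this).trans ?_
  simp only [Finset.sum_const, Finset.card_univ, nsmul_eq_mul, mul_one]
  exact_mod_cast card_partition_le n

lemma norm_dc_le (m n : ℕ) : ‖dc m n‖ ≤ 2 ^ n := by
  unfold dc
  exact norm_sum_part_le n _ _ (fun P => by rw [norm_pow, norm_zz_inv, one_pow])

lemma norm_tc_le (m n : ℕ) : ‖tc m n‖ ≤ 2 ^ n := by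
  unfold tc
  exact norm_sum_part_le n _ _ (fun P => by rw [norm_pow, norm_zz_inv, one_pow])

lemma norm_ac_le (n : ℕ) : ‖ac n‖ ≤ 2 ^ n :=
  norm_sum_part_le n _ _ (fun P => by rw [norm_zpow, norm_zz, one_zpow])

lemma sup_parts_le {n : ℕ} (P : n.Partition) : P.parts.sup ≤ n := by
  rw [Multiset.sup_le]
  intro b hb
  exact (Multiset.le_sum_of_mem hb).trans P.parts_sum.le

lemma dc_eq_zero {m n : ℕ} (h : n < m) : dc m n = 0 := by
  unfold dc
  refine Finset.sum_eq_zero fun P _ => ?_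
  rw [if_neg]
  rintro ⟨_, h2⟩
  have := sup_parts_le P
  omega

lemma ac_eq_sum (n : ℕ) : ac n = ∑ m ∈ Finset.range (n + 1), zz ^ m * dc m n := by
  unfold ac dc
  simp_rw [Finset.mul_sum]
  rw [Finset.sum_comm]
  refine Finset.sum_congr rfl fun P _ => ?_
  by_cases hP : NoRepeatedOddParts P
  · simp only [hP, true_and, if_true]
    have := sup_parts_le P
    rw [Finset.sum_eq_single ((P.parts.sup + 1) / 2)]
    · rw [if_pos rfl, m2Rank, zpow_sub₀ zz_ne_zero, zpow_natCast, zpow_natCast, inv_pow, div_eq_mul_inv]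
    · intro b _ hb
      rw [if_neg (fun h => hb h.symm), mul_zero]
    · intro h
      exfalso; apply h; rw [Finset.mem_range]; omega
  · simp [hP]

/-! generating function of `tc` -/
open PowerSeries in
noncomputable def Gs (m : ℕ) : PowerSeries ℂ := PowerSeries.mk (tc m)

noncomputable def gw (i c : ℕ) : ℂ := if (Odd i → c ≤ 1) then zz⁻¹ ^ c else 0

lemma Gs_eq_genFun (m : ℕ) :
    Gs m = Nat.Partition.genFun (fun i c => if i ≤ 2 * m then gw i c else 0) := by
  ext n
  rw [Nat.Partition.coeff_genFun, Gs, PowerSeries.coeff_mk, tc]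
  refine Finset.sum_congr rfl fun P _ => ?_
  rw [Finsupp.prod, Multiset.toFinsupp_support]
  simp only [Multiset.toFinsupp_apply]
  by_cases h : NoRepeatedOddParts P ∧ P.parts.sup ≤ 2 * m
  · rw [if_pos h]
    have : ∀ i ∈ P.parts.toFinset, (if i ≤ 2 * m then gw i (Multiset.count i P.parts) else 0) = zz⁻¹ ^ (Multiset.count i P.parts) := by
      intro i hi
      rw [if_pos ((Multiset.le_sup (Multiset.mem_toFinset.1 hi)).trans h.2), gw, if_pos (h.1 i)]
    rw [Finset.prod_congr rfl this, Finset.prod_pow_eq_pow_sum, Multiset.toFinset_sum_count_eq]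
  · rw [if_neg h]
    symm
    rw [Finset.prod_eq_zero_iff]
    by_contra hcon
    push Not at hcon
    apply h
    constructor
    · intro j hj
      by_cases hm : j ∈ P.parts.toFinset
      · have := hcon j hm
        by_contra h3
        apply this
        rw [gw, if_neg (c := Odd j → _), ite_self]
        intro h4; exact h3 (h4 hj)
      · rw [Multiset.count_eq_zero_of_notMem (fun h => hm (Multiset.mem_toFinset.2 h))]; omega
    · rw [Multiset.sup_le]
      intro b hb
      by_contra h3
      exact hcon b (Multiset.mem_toFinset.2 hb) (if_neg h3)

open scoped PowerSeries.WithPiTopology in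
noncomputable def Fac (i : ℕ) : PowerSeries ℂ :=
  1 + ∑' j, gw (i + 1) (j + 1) • (PowerSeries.X : PowerSeries ℂ) ^ ((i + 1) * (j + 1))

open scoped PowerSeries.WithPiTopology in
lemma Gs_eq_prod (m : ℕ) : Gs m = ∏ i ∈ Finset.range (2 * m), Fac i := by
  rw [Gs_eq_genFun]
  have h := Nat.Partition.hasProd_genFun (R := ℂ) (fun i c => if i ≤ 2 * m then gw i c else 0)
  have h2 := hasProd_prod_of_ne_finset_one (f := fun i : ℕ => (1 : PowerSeries ℂ) +
    ∑' j, (if i + 1 ≤ 2 * m then gw (i + 1) (j + 1) else 0) • (PowerSeries.X : PowerSeries ℂ) ^ ((i + 1) * (j + 1)))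
    (s := Finset.range (2 * m)) (by
      intro b hb
      have : ¬ (b + 1 ≤ 2 * m) := by rw [Finset.mem_range] at hb; omega
      simp [this]) (L := SummationFilter.unconditional ℕ)
  rw [h.unique h2]
  refine Finset.prod_congr rfl fun i hi => ?_
  have : i + 1 ≤ 2 * m := by rw [Finset.mem_range] at hi; omega
  simp [this, Fac]

open scoped PowerSeries.WithPiTopology in
lemma Fac_even (m : ℕ) : Fac (2 * m) = 1 + PowerSeries.C zz⁻¹ * PowerSeries.X ^ (2 * m + 1) := by
  rw [Fac, tsum_eq_single 0]
  · simp [gw, PowerSeries.smul_eq_C_mul]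
  · intro j hj
    rw [gw, if_neg, zero_smul]
    intro h
    have := h ⟨m, rfl⟩
    omega

open scoped PowerSeries.WithPiTopology in
lemma Fac_odd (m : ℕ) : (1 + PowerSeries.C (-zz⁻¹) * PowerSeries.X ^ (2 * m + 2)) * Fac (2 * m + 1) = 1 := by
  have hs := Nat.Partition.summable_genFun_term (R := ℂ) gw (2 * m + 1)
  have e : ∀ j, gw (2 * m + 1 + 1) (j + 1) • (PowerSeries.X : PowerSeries ℂ) ^ ((2 * m + 1 + 1) * (j + 1))
      = (PowerSeries.C zz⁻¹ * PowerSeries.X ^ (2 * m + 2)) ^ (j + 1) := by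
    intro j
    rw [gw, if_pos, PowerSeries.smul_eq_C_mul, mul_pow, ← pow_mul, map_pow]
    intro h
    exfalso
    rw [Nat.odd_iff] at h; omega
  rw [Fac]
  simp_rw [e] at hs ⊢
  set a := (PowerSeries.C zz⁻¹ * PowerSeries.X ^ (2 * m + 2) : PowerSeries ℂ)
  have h1 := hs.tsum_eq_zero_add
  have h2 : ∑' b : ℕ, a ^ (b + 1 + 1) = a * ∑' b : ℕ, a ^ (b + 1) := by
    rw [← hs.tsum_mul_left]
    congr 1; ext1 b; ring
  rw [h2] at h1
  rw [map_neg]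
  linear_combination h1

lemma Gs_succ (m : ℕ) : Gs (m + 1) * (1 + PowerSeries.C (-zz⁻¹) * PowerSeries.X ^ (2 * m + 2))
    = Gs m * (1 + PowerSeries.C zz⁻¹ * PowerSeries.X ^ (2 * m + 1)) := by
  rw [Gs_eq_prod, Gs_eq_prod, show 2 * (m + 1) = 2 * m + 1 + 1 by ring, Finset.prod_range_succ,
    Finset.prod_range_succ, Fac_even]
  linear_combination (∏ i ∈ Finset.range (2 * m), Fac i) * (1 + PowerSeries.C zz⁻¹ * PowerSeries.X ^ (2 * m + 1)) * Fac_odd m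

lemma Gs_zero : Gs 0 = 1 := by rw [Gs_eq_prod]; simp

lemma eval_mul (A : PowerSeries ℂ) (q : ℂ) (hs : Summable fun n => A.coeff n * q ^ n) (c : ℂ) (k : ℕ) :
    HasSum (fun n => (A * (1 + PowerSeries.C c * PowerSeries.X ^ k)).coeff n * q ^ n)
      ((∑' n, A.coeff n * q ^ n) * (1 + c * q ^ k)) := by
  have h1 := hs.hasSum
  have h2 : HasSum (fun n => (A * PowerSeries.X ^ k).coeff n * q ^ n) ((∑' n, A.coeff n * q ^ n) * q ^ k) := by
    rw [← hasSum_nat_add_iff' k]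
    have : ∑ i ∈ Finset.range k, (A * PowerSeries.X ^ k).coeff i * q ^ i = 0 := by
      refine Finset.sum_eq_zero fun i hi => ?_
      rw [PowerSeries.coeff_mul_X_pow', if_neg (by rw [Finset.mem_range] at hi; omega), zero_mul]
    rw [this, sub_zero]
    refine (h1.mul_right (q ^ k)).congr_fun ?_ |> fun h => h
    intro n
    rw [PowerSeries.coeff_mul_X_pow]; ring
  have h3 := h1.add (h2.mul_left c)
  convert h3 using 1
  · ext n
    rw [show A * (1 + PowerSeries.C c * PowerSeries.X ^ k) = A + PowerSeries.C c * (A * PowerSeries.X ^ k) by ring]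
    rw [map_add, PowerSeries.coeff_C_mul]; ring
  · ring

noncomputable def Tf (m : ℕ) (q : ℂ) : ℂ := ∑' n, tc m n * q ^ n

lemma summable_two_pow {q : ℂ} (hq : ‖q‖ ≤ 1 / 16) (f : ℕ → ℂ) (hf : ∀ n, ‖f n‖ ≤ 2 ^ n) :
    Summable fun n => f n * q ^ n := by
  refine Summable.of_norm_bounded (g := fun n : ℕ => (1 / 8 : ℝ) ^ n) (summable_geometric_of_lt_one (by norm_num) (by norm_num)) ?_
  intro n
  rw [norm_mul, norm_pow]
  calc ‖f n‖ * ‖q‖ ^ n ≤ 2 ^ n * (1 / 16) ^ n := by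
        gcongr; exact hf n
    _ = (1 / 8) ^ n := by rw [← mul_pow]; norm_num

lemma Tf_zero (q : ℂ) : Tf 0 q = 1 := by
  have : ∀ n, tc 0 n = (Gs 0).coeff n := fun n => by rw [Gs, PowerSeries.coeff_mk]
  unfold Tf
  simp_rw [this, Gs_zero, PowerSeries.coeff_one]
  rw [tsum_eq_single 0]
  · simp
  · intro n hn; simp [hn]

lemma Tf_succ {q : ℂ} (hq : ‖q‖ ≤ 1 / 16) (m : ℕ) :
    Tf (m + 1) q * (1 - zz⁻¹ * q ^ (2 * m + 2)) = Tf m q * (1 + zz⁻¹ * q ^ (2 * m + 1)) := by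
  have hs : ∀ m, Summable fun n => (Gs m).coeff n * q ^ n := by
    intro m
    simp only [Gs, PowerSeries.coeff_mk]
    exact summable_two_pow hq _ (norm_tc_le m)
  have h1 := eval_mul (Gs (m + 1)) q (hs _) (-zz⁻¹) (2 * m + 2)
  have h2 := eval_mul (Gs m) q (hs _) (zz⁻¹) (2 * m + 1)
  rw [Gs_succ] at h1
  have := h1.unique h2
  simp only [Gs, PowerSeries.coeff_mk] at this
  rw [Tf, Tf]
  rw [← this]; ring

noncomputable def Df (m : ℕ) (q : ℂ) : ℂ := ∑' n, dc m n * q ^ n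

lemma Df_zero (q : ℂ) : Df 0 q = 1 := by
  unfold Df
  simp_rw [dc_zero]
  exact Tf_zero q

lemma Df_succ {q : ℂ} (hq : ‖q‖ ≤ 1 / 16) (m : ℕ) : Df (m + 1) q = Tf (m + 1) q - Tf m q := by
  unfold Df Tf
  simp_rw [dc_succ, sub_mul]
  exact (summable_two_pow hq _ (norm_tc_le _)).tsum_sub (summable_two_pow hq _ (norm_tc_le _))

lemma hasSum_ac {q : ℂ} (hq : ‖q‖ ≤ 1 / 16) :
    Summable (fun m => zz ^ m * Df m q) ∧ HasSum (fun n => ac n * q ^ n) (∑' m, zz ^ m * Df m q) := by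
  have hsum : Summable (fun p : ℕ × ℕ => zz ^ p.1 * (dc p.1 p.2 * q ^ p.2)) := by
    refine Summable.of_norm_bounded (g := fun p : ℕ × ℕ => (1 / 2 : ℝ) ^ p.1 * (1 / 4 : ℝ) ^ p.2) ?_ ?_
    · exact Summable.mul_of_nonneg (summable_geometric_of_lt_one (by norm_num) (by norm_num))
        (summable_geometric_of_lt_one (by norm_num) (by norm_num)) (fun _ => by positivity) (fun _ => by positivity)
    · rintro ⟨m, n⟩
      simp only
      rcases lt_or_ge n m with h | h
      · rw [dc_eq_zero h]; simp
      · rw [norm_mul, norm_pow, norm_zz, one_pow, one_mul, norm_mul, norm_pow]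
        calc ‖dc m n‖ * ‖q‖ ^ n ≤ 2 ^ n * (1 / 16) ^ n := by
              gcongr; exact norm_dc_le m n
          _ = (1 / 2) ^ n * (1 / 4) ^ n := by rw [← mul_pow, ← mul_pow]; norm_num
          _ ≤ (1 / 2) ^ m * (1 / 4) ^ n := by
              gcongr ?_ * _
              exact pow_le_pow_of_le_one (by norm_num) (by norm_num) h
  have e1 : ∀ m, ∑' n, zz ^ m * (dc m n * q ^ n) = zz ^ m * Df m q := by
    intro m; rw [tsum_mul_left, Df]
  have hprod := hsum.prod
  simp only [e1] at hprod
  refine ⟨hprod, ?_⟩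
  have h2 : Summable (fun p : ℕ × ℕ => zz ^ p.2 * (dc p.2 p.1 * q ^ p.1)) := hsum.prod_symm
  have e2 : ∀ n, ∑' m, zz ^ m * (dc m n * q ^ n) = ac n * q ^ n := by
    intro n
    rw [tsum_eq_sum (s := Finset.range (n + 1)), ac_eq_sum, Finset.sum_mul]
    · refine Finset.sum_congr rfl fun _ _ => by ring
    · intro m hm
      rw [dc_eq_zero (by rw [Finset.mem_range] at hm; omega)]; simp
  have h3 := h2.prod
  simp only [e2] at h3
  have h4 : ∑' n, ac n * q ^ n = ∑' m, zz ^ m * Df m q := by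
    simp_rw [← e1, ← e2]
    exact (Summable.tsum_comm' hsum (fun m => hsum.prod_factor m) (fun n => h2.prod_factor n)) 
  rw [← h4]
  exact h3.hasSum

end Part1

section Part2

open Complex

/-! ### Part 2 : Fine's transformation -/

noncomputable def rho (q : ℂ) (k : ℕ) : ℂ :=
  q ^ (2 * k + 1) * (1 + q ^ (2 * k + 1)) / (1 - q ^ (2 * k + 2) + q ^ (4 * k + 4))

noncomputable def Ht (q : ℂ) (n : ℕ) : ℂ := ∏ k ∈ Finset.range n, rho q k

noncomputable def Hf (q : ℂ) : ℂ := ∑' n, Ht q n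

lemma quad_factor (y : ℂ) : 1 - y + y ^ 2 = (1 - zz * y) * (1 - zz⁻¹ * y) := by
  have h1 : zz * zz⁻¹ = 1 := mul_inv_cancel₀ zz_ne_zero
  have h2 := zz_inv
  linear_combination (-y ^ 2) * h1 + y * h2

lemma norm_one_sub_ge (c y : ℂ) (hc : ‖c‖ = 1) : 1 - ‖y‖ ≤ ‖1 - c * y‖ := by
  have := norm_sub_norm_le (1 : ℂ) (c * y)
  rw [norm_mul, hc, one_mul, norm_one] at this
  exact this

lemma norm_quad_ge (y : ℂ) (hy : ‖y‖ ≤ 1) : (1 - ‖y‖) ^ 2 ≤ ‖1 - y + y ^ 2‖ := by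
  rw [quad_factor, norm_mul, sq]
  have h1 := norm_one_sub_ge zz y norm_zz
  have h2 := norm_one_sub_ge zz⁻¹ y norm_zz_inv
  have : 0 ≤ 1 - ‖y‖ := by linarith
  gcongr

lemma one_sub_ne {c y : ℂ} (hc : ‖c‖ = 1) (hy : ‖y‖ < 1) : 1 - c * y ≠ 0 := by
  have := norm_one_sub_ge c y hc
  intro h
  rw [h, norm_zero] at this
  linarith

lemma norm_pow_le_self {q : ℂ} (hq : ‖q‖ < 1) {k : ℕ} (hk : 1 ≤ k) : ‖q ^ k‖ ≤ ‖q‖ := by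
  rw [norm_pow]
  exact pow_le_of_le_one (norm_nonneg _) hq.le (by omega)

lemma norm_pow_lt_one {q : ℂ} (hq : ‖q‖ < 1) {k : ℕ} (hk : 1 ≤ k) : ‖q ^ k‖ < 1 :=
  (norm_pow_le_self hq hk).trans_lt hq

lemma quad_ne {q : ℂ} (hq : ‖q‖ < 1) (k : ℕ) : 1 - q ^ (2 * k + 2) + q ^ (4 * k + 4) ≠ 0 := by
  have : q ^ (4 * k + 4) = (q ^ (2 * k + 2)) ^ 2 := by rw [← pow_mul]; ring_nf
  rw [this, quad_factor]
  exact mul_ne_zero (one_sub_ne norm_zz (norm_pow_lt_one hq (by omega)))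
    (one_sub_ne norm_zz_inv (norm_pow_lt_one hq (by omega)))

lemma norm_rho_le {q : ℂ} {r : ℝ} (hqr : ‖q‖ ≤ r) (hr : r < 1) (k : ℕ) :
    ‖rho q k‖ ≤ r ^ (2 * k + 1) * (2 / (1 - r) ^ 2) := by
  have hq : ‖q‖ < 1 := hqr.trans_lt hr
  have e : q ^ (4 * k + 4) = (q ^ (2 * k + 2)) ^ 2 := by rw [← pow_mul]; ring_nf
  rw [rho, norm_div, norm_mul, mul_div_assoc, e, norm_pow]
  have h1 : ‖1 + q ^ (2 * k + 1)‖ ≤ 2 := by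
    refine (norm_add_le _ _).trans ?_
    rw [norm_one]
    have := norm_pow_lt_one hq (k := 2 * k + 1) (by omega)
    linarith
  have h2 : (1 - r) ^ 2 ≤ ‖1 - q ^ (2 * k + 2) + (q ^ (2 * k + 2)) ^ 2‖ := by
    have h3 := norm_pow_le_self hq (k := 2 * k + 2) (by omega)
    refine le_trans ?_ (norm_quad_ge _ (h3.trans hq.le))
    have : 0 ≤ 1 - r := by linarith
    gcongr
    exact h3.trans hqr
  have : 0 < 1 - r := by linarith
  have hr0 : 0 ≤ r := (norm_nonneg _).trans hqr
  gcongr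

lemma Ht_succ (q : ℂ) (n : ℕ) : Ht q (n + 1) = Ht q n * rho q n := by
  rw [Ht, Finset.prod_range_succ, ← Ht]

lemma norm_Ht_le {q : ℂ} {r : ℝ} (hqr : ‖q‖ ≤ r) (hr : r < 1) (n : ℕ) :
    ‖Ht q n‖ ≤ r ^ (n ^ 2) * (2 / (1 - r) ^ 2) ^ n := by
  have hr0 : 0 ≤ r := (norm_nonneg _).trans hqr
  induction n with
  | zero => simp [Ht]
  | succ n ih =>
    rw [Ht, Finset.prod_range_succ, ← Ht, norm_mul]
    calc ‖Ht q n‖ * ‖rho q n‖ ≤ (r ^ (n ^ 2) * (2 / (1 - r) ^ 2) ^ n) * (r ^ (2 * n + 1) * (2 / (1 - r) ^ 2)) := by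
          gcongr
          exact norm_rho_le hqr hr n
      _ = r ^ (n ^ 2 + (2 * n + 1)) * (2 / (1 - r) ^ 2) ^ (n + 1) := by rw [pow_add, pow_succ]; ring
      _ = _ := by congr 2; ring

lemma summable_gauss {r : ℝ} (hr0 : 0 ≤ r) (hr : r < 1) (D : ℝ) (hD : 0 ≤ D) :
    Summable fun n : ℕ => r ^ (n ^ 2) * D ^ n := by
  have ht : Filter.Tendsto (fun n : ℕ => r ^ n * D) Filter.atTop (nhds (0 * D)) :=
    (tendsto_pow_atTop_nhds_zero_of_lt_one hr0 hr).mul_const D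
  rw [zero_mul] at ht
  have hev := ht.eventually (gt_mem_nhds (show (0 : ℝ) < 1 / 2 by norm_num))
  refine Summable.of_norm_bounded_eventually_nat (g := fun n : ℕ => (1 / 2 : ℝ) ^ n)
    (summable_geometric_of_lt_one (by norm_num) (by norm_num)) ?_
  filter_upwards [hev] with n hn
  rw [Real.norm_of_nonneg (by positivity), sq, pow_mul, ← mul_pow]
  gcongr

lemma summable_Ht {q : ℂ} (hq : ‖q‖ < 1) : Summable (Ht q) := by
  refine Summable.of_norm_bounded (summable_gauss (norm_nonneg q) hq _ ?_) (norm_Ht_le le_rfl hq)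
  positivity

noncomputable def Af (q : ℂ) (k m : ℕ) : ℂ :=
  ∏ j ∈ Finset.range m, (1 + zz⁻¹ * q ^ (2 * j + 1)) / (1 - zz⁻¹ * q ^ (2 * k + 2 * j + 2))

noncomputable def Sf (q : ℂ) (k : ℕ) : ℂ := ∑' m, (zz * q ^ (2 * k)) ^ m * Af q k m

lemma Af_succ (q : ℂ) (k m : ℕ) : Af q k (m + 1) =
    Af q k m * ((1 + zz⁻¹ * q ^ (2 * m + 1)) / (1 - zz⁻¹ * q ^ (2 * k + 2 * m + 2))) := by
  rw [Af, Finset.prod_range_succ, ← Af]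

lemma Af_shift {q : ℂ} (hq : ‖q‖ < 1) (k m : ℕ) :
    Af q (k + 1) m * (1 - zz⁻¹ * q ^ (2 * k + 2 * m + 2)) = Af q k m * (1 - zz⁻¹ * q ^ (2 * k + 2)) := by
  induction m with
  | zero => simp [Af]
  | succ m ih =>
    have h1 : 1 - zz⁻¹ * q ^ (2 * k + 2 * m + 2) ≠ 0 := one_sub_ne norm_zz_inv (norm_pow_lt_one hq (by omega))
    have h2 : 1 - zz⁻¹ * q ^ (2 * k + 2 * (m + 1) + 2) ≠ 0 := one_sub_ne norm_zz_inv (norm_pow_lt_one hq (by omega))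
    rw [Af_succ, Af_succ]
    rw [show 2 * (k + 1) + 2 * m + 2 = 2 * k + 2 * (m + 1) + 2 by ring]
    have ih2 : Af q (k + 1) m = Af q k m * (1 - zz⁻¹ * q ^ (2 * k + 2)) / (1 - zz⁻¹ * q ^ (2 * k + 2 * m + 2)) := by
      rw [eq_div_iff h1, ih]
    rw [ih2, mul_assoc, div_mul_cancel₀ _ h2]
    ring

lemma Af_diff {q : ℂ} (hq : ‖q‖ < 1) (k m : ℕ) :
    (zz * q ^ (2 * k)) ^ (m + 1) * (Af q k (m + 1) - Af q k m) =
    q ^ (2 * k + 1) * (1 + q ^ (2 * k + 1)) / (1 - zz⁻¹ * q ^ (2 * k + 2)) *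
      ((zz * q ^ (2 * (k + 1))) ^ m * Af q (k + 1) m) := by
  have h1 : 1 - zz⁻¹ * q ^ (2 * k + 2 * m + 2) ≠ 0 := one_sub_ne norm_zz_inv (norm_pow_lt_one hq (by omega))
  have h2 : 1 - zz⁻¹ * q ^ (2 * k + 2) ≠ 0 := one_sub_ne norm_zz_inv (norm_pow_lt_one hq (by omega))
  have h3 := Af_shift hq k m
  have h4 : Af q (k + 1) m = Af q k m * (1 - zz⁻¹ * q ^ (2 * k + 2)) / (1 - zz⁻¹ * q ^ (2 * k + 2 * m + 2)) := by
    rw [eq_div_iff h1, h3]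
  have h5 : Af q k (m + 1) = Af q k m * ((1 + zz⁻¹ * q ^ (2 * m + 1)) / (1 - zz⁻¹ * q ^ (2 * k + 2 * m + 2))) := by
    rw [Af, Finset.prod_range_succ, ← Af]
  have hz : zz * zz⁻¹ = 1 := mul_inv_cancel₀ zz_ne_zero
  rw [h4, h5]
  generalize zz⁻¹ = w at *
  field_simp
  have e : (1 + w * q ^ (2 * m + 1)) - (1 - w * q ^ (2 * k + 2 * m + 2)) = w * (q ^ (2 * m + 1) * (1 + q ^ (2 * k + 1))) := by
    ring
  rw [e]
  have e2 : (zz * q ^ (k * 2)) ^ (m + 1) * (w * (q ^ (2 * m + 1) * (1 + q ^ (2 * k + 1))))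
     = (zz * w) * (zz ^ m * (q ^ (2 * k + 1)) * (1 + q ^ (2 * k + 1)) * (q ^ (2 * (k + 1))) ^ m) := by
    ring
  simp only [mul_comm k 2] at *
  rw [hz] at e2
  rw [mul_pow zz (q ^ (2 * (k + 1)))]
  linear_combination (Af q k m) * e2

lemma norm_Af_le {q : ℂ} (hq : ‖q‖ ≤ 1 / 16) (k m : ℕ) : ‖Af q k m‖ ≤ 2 ^ m := by
  rw [Af, norm_prod]
  refine (Finset.prod_le_prod (g := fun _ => (2 : ℝ)) (fun _ _ => norm_nonneg _) ?_).trans (by simp)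
  intro j _
  rw [norm_div]
  have hq1 : ‖q‖ < 1 := by linarith
  have h1 : ‖1 + zz⁻¹ * q ^ (2 * j + 1)‖ ≤ 17 / 16 := by
    refine (norm_add_le _ _).trans ?_
    rw [norm_one, norm_mul, norm_zz_inv, one_mul]
    have := norm_pow_le_self hq1 (k := 2 * j + 1) (by omega)
    linarith
  have h2 : 15 / 16 ≤ ‖1 - zz⁻¹ * q ^ (2 * k + 2 * j + 2)‖ := by
    refine le_trans ?_ (norm_one_sub_ge _ _ norm_zz_inv)
    have := norm_pow_le_self hq1 (k := 2 * k + 2 * j + 2) (by omega)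
    linarith
  rw [div_le_iff₀ (by linarith)]
  linarith

lemma norm_Sterm_le {q : ℂ} (hq : ‖q‖ ≤ 1 / 16) {k : ℕ} (hk : 1 ≤ k) (m : ℕ) :
    ‖(zz * q ^ (2 * k)) ^ m * Af q k m‖ ≤ (1 / 2) ^ m := by
  rw [norm_mul, norm_pow, norm_mul, norm_zz, one_mul]
  have hq1 : ‖q‖ < 1 := by linarith
  calc ‖q ^ (2 * k)‖ ^ m * ‖Af q k m‖ ≤ (1 / 16) ^ m * 2 ^ m := by
        gcongr
        · exact (norm_pow_le_self hq1 (by omega)).trans hq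
        · exact norm_Af_le hq k m
    _ = (1 / 8) ^ m := by rw [← mul_pow]; norm_num
    _ ≤ (1 / 2) ^ m := by gcongr; norm_num

lemma summable_Sterm {q : ℂ} (hq : ‖q‖ ≤ 1 / 16) {k : ℕ} (hk : 1 ≤ k) :
    Summable fun m => (zz * q ^ (2 * k)) ^ m * Af q k m :=
  Summable.of_norm_bounded (summable_geometric_of_lt_one (by norm_num) (by norm_num)) (norm_Sterm_le hq hk)

lemma norm_Sf_le {q : ℂ} (hq : ‖q‖ ≤ 1 / 16) {k : ℕ} (hk : 1 ≤ k) : ‖Sf q k‖ ≤ 2 := by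
  refine tsum_of_norm_bounded (g := fun m : ℕ => (1 / 2 : ℝ) ^ m) ?_ (norm_Sterm_le hq hk)
  exact hasSum_geometric_two

noncomputable def Uf (q : ℂ) (k : ℕ) : ℂ := (1 - zz * q ^ (2 * k)) * Sf q k

lemma Uf_succ {q : ℂ} (hq : ‖q‖ ≤ 1 / 16) {k : ℕ} (hk : 1 ≤ k) : Uf q k = 1 + rho q k * Uf q (k + 1) := by
  have hq1 : ‖q‖ < 1 := by linarith
  have hs := summable_Sterm hq hk
  have hs2 := summable_Sterm hq (k := k + 1) (by omega)
  have h1 := hs.tsum_eq_zero_add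
  have h2 : Uf q k = 1 + ∑' m, (zz * q ^ (2 * k)) ^ (m + 1) * (Af q k (m + 1) - Af q k m) := by
    have hs' := (summable_nat_add_iff 1).2 hs
    have e : ∀ m, (zz * q ^ (2 * k)) ^ (m + 1) * (Af q k (m + 1) - Af q k m)
       = (zz * q ^ (2 * k)) ^ (m + 1) * Af q k (m + 1) - (zz * q ^ (2 * k)) * ((zz * q ^ (2 * k)) ^ m * Af q k m) := by
      intro m; ring
    simp_rw [e]
    rw [hs'.tsum_sub (hs.mul_left _), tsum_mul_left, Uf, Sf]
    have h0 : Af q k 0 = 1 := by simp [Af]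
    rw [pow_zero, h0] at h1
    linear_combination h1
  rw [h2]
  simp_rw [Af_diff hq1]
  rw [tsum_mul_left, ← Sf, Uf, rho]
  congr 1
  have h3 : 1 - zz⁻¹ * q ^ (2 * k + 2) ≠ 0 := one_sub_ne norm_zz_inv (norm_pow_lt_one hq1 (by omega))
  have h4 : 1 - zz * q ^ (2 * k + 2) ≠ 0 := one_sub_ne norm_zz (norm_pow_lt_one hq1 (by omega))
  have e : q ^ (4 * k + 4) = (q ^ (2 * k + 2)) ^ 2 := by rw [← pow_mul]; ring_nf
  rw [e, quad_factor, show 2 * (k + 1) = 2 * k + 2 by ring]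
  generalize 1 - zz⁻¹ * q ^ (2 * k + 2) = d1 at *
  generalize 1 - zz * q ^ (2 * k + 2) = d2 at *
  field_simp

lemma Tf_eq_Af {q : ℂ} (hq : ‖q‖ ≤ 1 / 16) (m : ℕ) : Tf m q = Af q 0 m := by
  have hq1 : ‖q‖ < 1 := by linarith
  induction m with
  | zero => rw [Tf_zero]; simp [Af]
  | succ m ih =>
    have h3 : 1 - zz⁻¹ * q ^ (2 * m + 2) ≠ 0 := one_sub_ne norm_zz_inv (norm_pow_lt_one hq1 (by omega))
    have h := Tf_succ hq m
    rw [Af, Finset.prod_range_succ, ← Af, ← ih]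
    rw [show 2 * 0 + 2 * m + 2 = 2 * m + 2 by ring, mul_div_assoc', eq_div_iff h3, h]

lemma tsum_Df {q : ℂ} (hq : ‖q‖ ≤ 1 / 16) : ∑' m, zz ^ m * Df m q = 1 + rho q 0 * Uf q 1 := by
  have hq1 : ‖q‖ < 1 := by linarith
  rw [(hasSum_ac hq).1.tsum_eq_zero_add]
  simp_rw [Df_succ hq, Tf_eq_Af hq]
  have h := Af_diff hq1 0
  simp only [mul_zero, pow_zero, mul_one] at h
  simp_rw [h]
  rw [tsum_mul_left, ← Sf, Df_zero, Uf, rho]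
  simp only [mul_zero, pow_zero, mul_one, zero_add, pow_one]
  congr 1
  have h3 : 1 - zz⁻¹ * q ^ 2 ≠ 0 := one_sub_ne norm_zz_inv (norm_pow_lt_one hq1 (by omega))
  have h4 : 1 - zz * q ^ 2 ≠ 0 := one_sub_ne norm_zz (norm_pow_lt_one hq1 (by omega))
  have e : q ^ 4 = (q ^ 2) ^ 2 := by ring
  rw [e, quad_factor]
  generalize 1 - zz⁻¹ * q ^ 2 = d1 at *
  generalize 1 - zz * q ^ 2 = d2 at *
  field_simp

lemma tsum_Df_eq_partial {q : ℂ} (hq : ‖q‖ ≤ 1 / 16) (N : ℕ) :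
    ∑' m, zz ^ m * Df m q = ∑ n ∈ Finset.range (N + 1), Ht q n + Ht q (N + 1) * Uf q (N + 1) := by
  induction N with
  | zero =>
    rw [tsum_Df hq]
    simp [Ht]
  | succ N ih =>
    rw [ih, Uf_succ hq (by omega), Finset.sum_range_succ _ (N + 1), Ht_succ q (N + 1)]
    ring

lemma tsum_Df_eq_Hf {q : ℂ} (hq : ‖q‖ ≤ 1 / 16) : ∑' m, zz ^ m * Df m q = Hf q := by
  have hq1 : ‖q‖ < 1 := by linarith
  have hs := summable_Ht hq1
  have h1 : Filter.Tendsto (fun N => ∑ n ∈ Finset.range (N + 1), Ht q n) Filter.atTop (nhds (Hf q)) :=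
    hs.hasSum.tendsto_sum_nat.comp (Filter.tendsto_add_atTop_nat 1)
  have h2 : Filter.Tendsto (fun N => Ht q (N + 1) * Uf q (N + 1)) Filter.atTop (nhds 0) := by
    have h3 : Filter.Tendsto (fun N => ‖Ht q (N + 1)‖ * 4) Filter.atTop (nhds (0 * 4)) := by
      apply Filter.Tendsto.mul_const
      have := (hs.tendsto_atTop_zero.comp (Filter.tendsto_add_atTop_nat 1)).norm
      simpa using this
    rw [zero_mul] at h3
    refine squeeze_zero_norm (fun N => ?_) h3
    rw [norm_mul]
    gcongr
    rw [Uf, norm_mul]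
    have h5 : ‖1 - zz * q ^ (2 * (N + 1))‖ ≤ 2 := by
      refine (norm_sub_le _ _).trans ?_
      rw [norm_one, norm_mul, norm_zz, one_mul]
      have := norm_pow_lt_one hq1 (k := 2 * (N + 1)) (by omega)
      linarith
    have h6 := norm_Sf_le hq (k := N + 1) (by omega)
    calc _ ≤ 2 * 2 := by gcongr
      _ = (4 : ℝ) := by norm_num
  have h4 := h1.add h2
  rw [add_zero] at h4
  refine tendsto_nhds_unique ?_ h4
  simp_rw [← tsum_Df_eq_partial hq]
  exact tendsto_const_nhds

lemma hasSum_Hf {q : ℂ} (hq : ‖q‖ ≤ 1 / 16) : HasSum (fun n => ac n * q ^ n) (Hf q) := by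
  rw [← tsum_Df_eq_Hf hq]; exact (hasSum_ac hq).2

lemma differentiableOn_Hf : DifferentiableOn ℂ Hf (Metric.ball 0 1) := by
  intro q hq
  have hq1 : ‖q‖ < 1 := by simpa using hq
  obtain ⟨r, hr1, hr2⟩ := exists_between hq1
  have hr0 : 0 ≤ r := (norm_nonneg q).trans hr1.le
  have : DifferentiableOn ℂ (fun w => ∑' n, Ht w n) (Metric.ball 0 r) := by
    refine differentiableOn_tsum_of_summable_norm (u := fun n : ℕ => r ^ (n ^ 2) * (2 / (1 - r) ^ 2) ^ n)
      (summable_gauss hr0 hr2 _ (by positivity)) ?_ Metric.isOpen_ball ?_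
    · intro n w hw
      have hw1 : ‖w‖ < 1 := (by simpa using hw : ‖w‖ < r).trans hr2
      apply DifferentiableAt.differentiableWithinAt
      unfold Ht
      apply DifferentiableAt.fun_finsetProd
      intro k _
      unfold rho
      exact DifferentiableAt.fun_div (by fun_prop) (by fun_prop) (quad_ne hw1 k)
    · intro n w hw
      exact norm_Ht_le (by simpa using (le_of_lt (by simpa using hw : ‖w‖ < r))) hr2 n
  refine (this.differentiableAt (Metric.isOpen_ball.mem_nhds ?_)).differentiableWithinAt
  simpa using hr1

lemma ac_eq_integral (n : ℕ) {t : ℝ} (ht : 0 < t) :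
    ac n = (1 / (2 * Real.pi) : ℂ) * ∫ φ in (-Real.pi)..Real.pi,
      Hf (Complex.exp (-(t - φ * I))) * Complex.exp (n * (t - φ * I)) := by
  set R : ℝ := Real.exp (-t) with hR
  have hR0 : 0 < R := Real.exp_pos _
  have hR1 : R < 1 := by rw [hR]; rw [← Real.exp_zero]; exact Real.exp_lt_exp.2 (by linarith)
  have hd : DiffContOnCl ℂ Hf (Metric.ball 0 R) := by
    apply DifferentiableOn.diffContOnCl
    refine differentiableOn_Hf.mono ?_
    rw [closure_ball _ hR0.ne']
    intro x hx
    simp only [Metric.mem_closedBall, dist_zero_right, Metric.mem_ball] at hx ⊢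
    linarith
  have h1 := hd.hasFPowerSeriesOnBall (R := ⟨R, hR0.le⟩) hR0
  have h2 : HasFPowerSeriesOnBall Hf (FormalMultilinearSeries.ofScalars ℂ ac) 0 (ENNReal.ofReal (1 / 16)) := by
    refine ⟨?_, by simp, ?_⟩
    · refine ENNReal.le_of_forall_nnreal_lt fun r hr => ?_
      apply FormalMultilinearSeries.le_radius_of_bound _ 1
      intro n
      have hr' : (r : ℝ) ≤ 1 / 16 := by
        have := ENNReal.coe_lt_coe.1 hr
        have h3 : (r : ℝ) < ((1/16 : ℝ).toNNReal : ℝ) := by exact_mod_cast this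
        rw [Real.coe_toNNReal _ (by norm_num)] at h3
        exact h3.le
      rw [FormalMultilinearSeries.ofScalars_norm]
      calc ‖ac n‖ * (r : ℝ) ^ n ≤ 2 ^ n * (1 / 16) ^ n := by gcongr; exact norm_ac_le n
        _ = (1 / 8) ^ n := by rw [← mul_pow]; norm_num
        _ ≤ 1 := pow_le_one₀ (by norm_num) (by norm_num)
    · intro y hy
      have hy' : ‖y‖ ≤ 1 / 16 := by
        rw [Metric.mem_eball, edist_zero_right, ← ofReal_norm] at hy
        exact ((ENNReal.ofReal_lt_ofReal_iff (by norm_num)).1 hy).le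
      have := hasSum_Hf hy'
      rw [zero_add]
      have e : ∀ n, (FormalMultilinearSeries.ofScalars ℂ ac n fun _ => y) = ac n * y ^ n := by
        intro n; rw [FormalMultilinearSeries.ofScalars_apply_eq]; simp
      simpa only [e] using this
  have h3 := h1.hasFPowerSeriesAt.eq_formalMultilinearSeries h2.hasFPowerSeriesAt
  have h4 := congrArg (fun p => p.coeff n) h3
  simp only [FormalMultilinearSeries.coeff_ofScalars] at h4
  rw [← h4, FormalMultilinearSeries.coeff]
  have h5 := cauchyPowerSeries_apply Hf 0 R n 1
  have h6 : (fun _ : Fin n => (1 : ℂ)) = 1 := rfl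
  rw [h6] at h5
  change (cauchyPowerSeries Hf 0 R n) 1 = _
  rw [h5, circleIntegral]
  have hp : Function.Periodic (fun θ : ℝ => deriv (circleMap 0 R) θ • ((1 / (circleMap 0 R θ - 0)) ^ n •
    (circleMap 0 R θ - 0)⁻¹ • Hf (circleMap 0 R θ))) (2 * Real.pi) := by
    intro θ
    simp only [deriv_circleMap, periodic_circleMap 0 R θ]
  have h7 := hp.intervalIntegral_add_eq 0 (-Real.pi)
  rw [zero_add, show -Real.pi + 2 * Real.pi = Real.pi by ring] at h7
  rw [h7, ← intervalIntegral.integral_smul, ← intervalIntegral.integral_const_mul]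
  refine intervalIntegral.integral_congr fun φ _ => ?_
  have e1 : circleMap 0 R φ = Complex.exp (-(t - φ * I)) := by
    rw [circleMap, zero_add, hR, ofReal_exp, ← Complex.exp_add]; congr 1; push_cast; ring
  have e2 : Complex.exp (n * (t - φ * I)) = (1 / Complex.exp (-(t - φ * I))) ^ n := by
    rw [Complex.exp_neg, one_div, inv_inv, ← Complex.exp_nat_mul]
  simp only [deriv_circleMap, sub_zero, smul_eq_mul, e1, e2]
  have hne := Complex.exp_ne_zero (-(t - φ * I))
  have hpi : (Real.pi : ℂ) ≠ 0 := by exact_mod_cast Real.pi_ne_zero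
  have hI := I_ne_zero
  generalize Hf (Complex.exp (-(t - φ * I))) = X at *
  generalize Complex.exp (-(t - φ * I)) = Y at *
  field_simp

end Part2

section Part3

open Complex

/-! ### Part 3 : Bailey identity -/

noncomputable def Qf (q : ℂ) (n : ℕ) : ℂ := ∏ j ∈ Finset.range n, (1 - q ^ (2 * j + 2))

lemma Qf_zero (q : ℂ) : Qf q 0 = 1 := by simp [Qf]

lemma Qf_succ (q : ℂ) (n : ℕ) : Qf q (n + 1) = Qf q n * (1 - q ^ (2 * n + 2)) := by
  rw [Qf, Finset.prod_range_succ, ← Qf]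

lemma norm_Qf_ge {q : ℂ} (hq : ‖q‖ < 1) (n : ℕ) : (1 - ‖q‖) ^ n ≤ ‖Qf q n‖ := by
  induction n with
  | zero => simp [Qf]
  | succ n ih =>
    rw [Qf_succ, norm_mul, pow_succ]
    have h1 : 0 ≤ 1 - ‖q‖ := by linarith
    have h2 : 1 - ‖q‖ ≤ ‖1 - q ^ (2 * n + 2)‖ := by
      have := norm_one_sub_ge 1 (q ^ (2 * n + 2)) norm_one
      rw [one_mul] at this
      have h3 := norm_pow_le_self hq (k := 2 * n + 2) (by omega)
      linarith
    gcongr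

lemma Qf_ne {q : ℂ} (hq : ‖q‖ < 1) (n : ℕ) : Qf q n ≠ 0 := by
  have := norm_Qf_ge hq n
  have h : 0 < (1 - ‖q‖) ^ n := pow_pos (by linarith) n
  intro h0
  rw [h0, norm_zero] at this
  linarith

lemma one_sub_pow_ne {q : ℂ} (hq : ‖q‖ < 1) {k : ℕ} (hk : 1 ≤ k) : 1 - q ^ k ≠ 0 := by
  have := one_sub_ne (c := 1) norm_one (norm_pow_lt_one hq hk)
  rwa [one_mul] at this

noncomputable def dl (q : ℂ) (n : ℕ) : ℂ := q ^ (n ^ 2) * ∏ k ∈ Finset.range n, (1 + q ^ (2 * k + 1))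

lemma dl_succ (q : ℂ) (n : ℕ) : dl q (n + 1) = dl q n * (q ^ (2 * n + 1) * (1 + q ^ (2 * n + 1))) := by
  rw [dl, Finset.prod_range_succ, dl, show (n + 1) ^ 2 = n ^ 2 + (2 * n + 1) by ring, pow_add]
  ring

lemma norm_dl_le {q : ℂ} (hq : ‖q‖ < 1) (n : ℕ) : ‖dl q n‖ ≤ ‖q‖ ^ (n ^ 2) * 2 ^ n := by
  rw [dl, norm_mul, norm_pow, norm_prod]
  gcongr
  refine (Finset.prod_le_prod (g := fun _ => (2 : ℝ)) (fun _ _ => norm_nonneg _) ?_).trans (by simp)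
  intro j _
  refine (norm_add_le _ _).trans ?_
  rw [norm_one]
  have := norm_pow_lt_one hq (k := 2 * j + 1) (by omega)
  linarith

noncomputable def alp (q : ℂ) : ℕ → ℂ
  | 0 => 1
  | r + 1 => (-1) ^ (r + 1) * q ^ ((r + 1) * r) * (1 + q ^ (2 * (r + 1)))

noncomputable def al (q : ℂ) : ℕ → ℂ
  | 0 => 1
  | r + 1 => (-1) ^ (r + 1) * q ^ ((r + 1) * (r + 2)) * (1 + q ^ (2 * r + 2)) / (1 - q ^ (2 * r + 2) + q ^ (4 * r + 4))

lemma trivial_partial {q : ℂ} (hq : ‖q‖ < 1) (n : ℕ) : ∀ R s, R + 1 + s = n →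
    (1 - q ^ (2 * n)) * ∑ r ∈ Finset.range (R + 1), alp q r / (Qf q (n - r) * Qf q (n + r)) =
      (-1) ^ R * q ^ (R * (R + 1)) / (Qf q s * Qf q (n + R)) := by
  intro R
  induction R with
  | zero =>
    intro s hs
    simp only [zero_add, Finset.range_one, Finset.sum_singleton, alp, Nat.sub_zero, add_zero, pow_zero, zero_mul, mul_one]
    have hn : n = s + 1 := by omega
    subst hn
    have h1 := Qf_ne hq s
    have h2 := Qf_ne hq (s + 1)
    have h3 := Qf_succ q s
    rw [mul_one_div, div_eq_div_iff (mul_ne_zero h2 h2) (mul_ne_zero h1 h2), h3]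
    ring
  | succ R ih =>
    intro s hs
    have ih' := ih (s + 1) (by omega)
    rw [Finset.sum_range_succ, mul_add, ih', show n - (R + 1) = s + 1 by omega, alp]
    have h1 := Qf_ne hq s
    have h4 := Qf_ne hq (n + R)
    have h5 : 1 - q ^ (2 * s + 2) ≠ 0 := one_sub_pow_ne hq (by omega)
    have h6 : 1 - q ^ (2 * (n + R) + 2) ≠ 0 := one_sub_pow_ne hq (by omega)
    rw [← add_assoc n R 1, Qf_succ, Qf_succ]
    have hn : n = R + 1 + 1 + s := by omega
    subst hn
    field_simp
    ring

lemma trivial_pair {q : ℂ} (hq : ‖q‖ < 1) (n : ℕ) :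
    ∑ r ∈ Finset.range (n + 1), alp q r / (Qf q (n - r) * Qf q (n + r)) = if n = 0 then 1 else 0 := by
  rcases n with _ | n
  · simp [alp, Qf]
  · rw [if_neg (by omega)]
    have h0 : 1 - q ^ (2 * (n + 1)) ≠ 0 := one_sub_pow_ne hq (by omega)
    have h := trivial_partial hq (n + 1) n 0 (by omega)
    apply mul_left_cancel₀ h0
    rw [Finset.sum_range_succ, mul_add, h, mul_zero, alp, Nat.sub_self, Qf_zero,
      show n + 1 + (n + 1) = (n + 1 + n) + 1 by ring, Qf_succ]
    have h4 := Qf_ne hq (n + 1 + n)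
    have h6 : 1 - q ^ (2 * (n + 1 + n) + 2) ≠ 0 := one_sub_pow_ne hq (by omega)
    field_simp
    ring

noncomputable def Dn (q : ℂ) (n : ℕ) : ℂ := ∑ r ∈ Finset.range (n + 1), al q r / (Qf q (n - r) * Qf q (n + r))

lemma Dn_step {q : ℂ} (hq : ‖q‖ < 1) (n r : ℕ) (h : r ≤ n) :
    al q r / (Qf q (n - r) * Qf q (n + r)) - (1 - q ^ (2 * n + 2) + q ^ (4 * n + 4)) * (al q r / (Qf q (n + 1 - r) * Qf q (n + 1 + r)))
    = - q ^ (2 * n + 2) * (alp q r / (Qf q (n + 1 - r) * Qf q (n + 1 + r))) := by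
  obtain ⟨s, rfl⟩ := Nat.exists_eq_add_of_le h
  rw [show r + s - r = s by omega, show r + s + 1 - r = s + 1 by omega, show r + s + 1 + r = r + s + r + 1 by ring,
    Qf_succ, Qf_succ]
  have h1 := Qf_ne hq s
  have h4 := Qf_ne hq (r + s + r)
  have h5 : 1 - q ^ (2 * s + 2) ≠ 0 := one_sub_pow_ne hq (by omega)
  have h6 : 1 - q ^ (2 * (r + s + r) + 2) ≠ 0 := one_sub_pow_ne hq (by omega)
  rcases r with _ | r
  · simp only [al, alp]
    field_simp
    ring
  · have h7 := quad_ne hq r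
    simp only [al, alp]
    field_simp
    ring

lemma Dn_succ {q : ℂ} (hq : ‖q‖ < 1) (n : ℕ) : Dn q n = (1 - q ^ (2 * n + 2) + q ^ (4 * n + 4)) * Dn q (n + 1) := by
  have h := trivial_pair hq (n + 1)
  rw [if_neg (by omega), Finset.sum_range_succ] at h
  rw [Dn, Dn, Finset.sum_range_succ _ (n + 1), mul_add]
  have h2 := Finset.sum_congr rfl (fun r hr => Dn_step hq n r (by simpa [Nat.lt_succ_iff] using hr) : ∀ r ∈ Finset.range (n + 1), _ = _)
  rw [Finset.sum_sub_distrib, ← Finset.mul_sum, ← Finset.mul_sum] at h2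
  have h3 : (1 - q ^ (2 * n + 2) + q ^ (4 * n + 4)) * al q (n + 1) = q ^ (2 * n + 2) * alp q (n + 1) := by
    have h7 := quad_ne hq n
    simp only [al, alp]
    field_simp
    ring
  linear_combination h2 + (-q ^ (2 * n + 2)) * h - h3 / (Qf q (n + 1 - (n + 1)) * Qf q (n + 1 + (n + 1)))

lemma dl_mul_Dn {q : ℂ} (hq : ‖q‖ < 1) (n : ℕ) : dl q n * Dn q n = Ht q n := by
  induction n with
  | zero => simp [dl, Dn, Ht, al, Qf]
  | succ n ih =>
    have h7 := quad_ne hq n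
    have h := Dn_succ hq n
    rw [Ht_succ, ← ih, dl_succ, h, rho]
    field_simp

noncomputable def gmt (q : ℂ) (r m : ℕ) : ℂ := dl q (r + m) / (Qf q m * Qf q (m + 2 * r))

noncomputable def gm (q : ℂ) (r : ℕ) : ℂ := ∑' m, gmt q r m

noncomputable def bD (q : ℂ) : ℝ := 2 * (1 / (1 - ‖q‖)) ^ 2

lemma bD_nonneg (q : ℂ) : 0 ≤ bD q := by unfold bD; positivity

lemma norm_gmt_le {q : ℂ} (hq : ‖q‖ < 1) (r m : ℕ) :
    ‖gmt q r m‖ ≤ (‖q‖ ^ (r ^ 2) * bD q ^ r) * (‖q‖ ^ (m ^ 2) * bD q ^ m) := by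
  have h0 : 0 < 1 - ‖q‖ := by linarith
  rw [gmt, norm_div, norm_mul]
  have h1 := norm_dl_le hq (r + m)
  have h2 := norm_Qf_ge hq m
  have h3 := norm_Qf_ge hq (m + 2 * r)
  calc ‖dl q (r + m)‖ / (‖Qf q m‖ * ‖Qf q (m + 2 * r)‖)
      ≤ (‖q‖ ^ ((r + m) ^ 2) * 2 ^ (r + m)) / ((1 - ‖q‖) ^ m * (1 - ‖q‖) ^ (m + 2 * r)) := by gcongr
    _ = ‖q‖ ^ ((r + m) ^ 2) * (bD q ^ r * bD q ^ m) := by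
        rw [bD, ← pow_add, ← pow_add, mul_pow, ← pow_mul, one_div, inv_pow,
          show m + (m + 2 * r) = 2 * (r + m) by ring]; ring
    _ ≤ ‖q‖ ^ (r ^ 2 + m ^ 2) * (bD q ^ r * bD q ^ m) := by
        have := bD_nonneg q
        refine mul_le_mul_of_nonneg_right (pow_le_pow_of_le_one (norm_nonneg _) hq.le ?_) (by positivity)
        nlinarith [Nat.zero_le (r * m)]
    _ = _ := by rw [pow_add]; ring

lemma summable_gmt {q : ℂ} (hq : ‖q‖ < 1) (r : ℕ) : Summable (gmt q r) :=
  Summable.of_norm_bounded ((summable_gauss (norm_nonneg q) hq _ (bD_nonneg q)).mul_left _) (norm_gmt_le hq r)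

lemma gm_succ {q : ℂ} (hq : ‖q‖ < 1) (r : ℕ) : gm q (r + 1) = q ^ (2 * r + 1) * gm q r := by
  set V : ℕ → ℂ := fun m => (1 - q ^ (2 * r + 1)) * (1 - q ^ (2 * m)) * gmt q r m with hV
  set W : ℕ → ℂ := fun m => (1 - q ^ (2 * m)) * dl q (r + m) / (Qf q m * Qf q (m + 2 * r + 1)) with hW
  have hs := summable_gmt hq r
  have hs1 := summable_gmt hq (r + 1)
  have hW1 : ∀ m, W (m + 1) = gmt q (r + 1) m := by
    intro m
    have h1 := Qf_ne hq m
    have h4 := Qf_ne hq (m + 2 * r + 2)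
    have h5 : 1 - q ^ (2 * m + 2) ≠ 0 := one_sub_pow_ne hq (by omega)
    simp only [hW, gmt]
    rw [Qf_succ, show m + 1 + 2 * r + 1 = m + 2 * r + 2 by ring, show m + 2 * (r + 1) = m + 2 * r + 2 by ring,
      show r + (m + 1) = r + 1 + m by ring, show 2 * (m + 1) = 2 * m + 2 by ring]
    field_simp
  have hW0 : W 0 = 0 := by simp [hW]
  have hWs : Summable W := by
    rw [← summable_nat_add_iff 1]
    simpa only [hW1] using hs1
  have hV0 : V 0 = 0 := by simp [hV]
  have hVW : ∀ m, V (m + 1) - V m = q ^ (2 * r + 1) * gmt q r m - W m := by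
    intro m
    have h1 := Qf_ne hq m
    have h4 := Qf_ne hq (m + 2 * r)
    have h5 : 1 - q ^ (2 * m + 2) ≠ 0 := one_sub_pow_ne hq (by omega)
    have h6 : 1 - q ^ (2 * (m + 2 * r) + 2) ≠ 0 := one_sub_pow_ne hq (by omega)
    simp only [hV, hW, gmt]
    rw [Qf_succ, show m + 1 + 2 * r = m + 2 * r + 1 by ring, Qf_succ,
      show r + (m + 1) = r + m + 1 by ring, dl_succ, show 2 * (m + 1) = 2 * m + 2 by ring]
    field_simp
    ring
  have hVs : Summable V := by
    have hb : ∀ m, ‖V m‖ ≤ 4 * ‖gmt q r m‖ := by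
      intro m
      simp only [hV]
      rw [norm_mul, norm_mul]
      have e : ∀ k, ‖1 - q ^ k‖ ≤ 2 := by
        intro k
        refine (norm_sub_le _ _).trans ?_
        rw [norm_one, norm_pow]
        have := pow_le_one₀ (norm_nonneg q) hq.le (n := k)
        linarith
      calc _ ≤ 2 * 2 * ‖gmt q r m‖ := by gcongr <;> exact e _
        _ = _ := by ring
    exact Summable.of_norm_bounded (hs.norm.mul_left 4) hb
  have e1 := hVs.tsum_eq_zero_add
  have e2 := hWs.tsum_eq_zero_add
  have hVs1 := (summable_nat_add_iff 1).2 hVs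
  have e3 : ∑' m, (V (m + 1) - V m) = ∑' m, (q ^ (2 * r + 1) * gmt q r m - W m) := by simp_rw [hVW]
  rw [hVs1.tsum_sub hVs, (hs.mul_left _).tsum_sub hWs, tsum_mul_left] at e3
  simp_rw [hW1] at e2
  rw [gm, gm]
  rw [hV0] at e1
  rw [hW0] at e2
  linear_combination -e2 + e3 + e1

lemma gm_eq {q : ℂ} (hq : ‖q‖ < 1) (r : ℕ) : gm q r = q ^ (r ^ 2) * gm q 0 := by
  induction r with
  | zero => simp
  | succ r ih => rw [gm_succ hq, ih, show (r + 1) ^ 2 = r ^ 2 + (2 * r + 1) by ring, pow_add]; ring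

lemma tsum_antidiag {F : ℕ × ℕ → ℂ} (hF : Summable F) :
    ∑' p, F p = ∑' n, ∑ p ∈ Finset.HasAntidiagonal.antidiagonal n, F p := by
  rw [← Finset.HasAntidiagonal.sigmaAntidiagonalEquivProd.tsum_eq F]
  have h1 : Summable (F ∘ Finset.HasAntidiagonal.sigmaAntidiagonalEquivProd) := Finset.HasAntidiagonal.sigmaAntidiagonalEquivProd.summable_iff.2 hF
  have h2 := h1.tsum_sigma' (fun n => (hasSum_fintype _).summable)
  simp only [Function.comp] at h2
  rw [h2]
  congr 1
  ext n
  rw [tsum_fintype]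
  exact Finset.sum_attach (Finset.HasAntidiagonal.antidiagonal n) F

lemma bailey_swap {q : ℂ} (hq : ‖q‖ < 1) (a : ℕ → ℂ) (C : ℝ) (ha : ∀ r, ‖a r‖ ≤ C) :
    ∑' n, dl q n * ∑ r ∈ Finset.range (n + 1), a r / (Qf q (n - r) * Qf q (n + r))
      = gm q 0 * ∑' r, a r * q ^ (r ^ 2) := by
  have hC : 0 ≤ C := (norm_nonneg _).trans (ha 0)
  set F : ℕ × ℕ → ℂ := fun p => a p.1 * gmt q p.1 p.2 with hF
  have hg := summable_gauss (norm_nonneg q) hq _ (bD_nonneg q)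
  have hb := bD_nonneg q
  have hFs : Summable F := by
    have h1 := (Summable.mul_of_nonneg hg hg (fun n => by positivity) (fun n => by positivity)).mul_left C
    refine Summable.of_norm_bounded h1 ?_
    intro p
    simp only [hF]
    rw [norm_mul]
    gcongr
    · exact ha _
    · exact norm_gmt_le hq _ _
  have h1 := tsum_antidiag hFs
  have h2 := hFs.tsum_prod
  rw [h1] at h2
  have h3 : ∀ n, ∑ p ∈ Finset.HasAntidiagonal.antidiagonal n, F p = dl q n * ∑ r ∈ Finset.range (n + 1), a r / (Qf q (n - r) * Qf q (n + r)) := by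
    intro n
    rw [Finset.Nat.sum_antidiagonal_eq_sum_range_succ_mk, Finset.mul_sum]
    refine Finset.sum_congr rfl fun r hr => ?_
    have hr' : r ≤ n := by simpa [Nat.lt_succ_iff] using hr
    simp only [hF, gmt]
    rw [show r + (n - r) = n by omega, show n - r + 2 * r = n + r by omega]
    ring
  simp_rw [h3] at h2
  rw [h2, ← tsum_mul_left]
  congr 1
  ext r
  simp only [hF]
  rw [tsum_mul_left, ← gm, gm_eq hq]
  ring

noncomputable def Bf (q : ℂ) : ℂ := ∑' r, al q r * q ^ (r ^ 2)
noncomputable def thf (q : ℂ) : ℂ := ∑' r, alp q r * q ^ (r ^ 2)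

lemma norm_alp_le {q : ℂ} (hq : ‖q‖ < 1) (r : ℕ) : ‖alp q r‖ ≤ 2 := by
  rcases r with _ | r
  · simp [alp]
  · rw [alp, norm_mul, norm_mul, norm_pow, norm_neg, norm_one, one_pow, one_mul]
    have h1 : ‖q ^ ((r + 1) * r)‖ ≤ 1 := by rw [norm_pow]; exact pow_le_one₀ (norm_nonneg _) hq.le
    have h2 : ‖1 + q ^ (2 * (r + 1))‖ ≤ 2 := by
      refine (norm_add_le _ _).trans ?_
      have := norm_pow_lt_one hq (k := 2 * (r + 1)) (by omega)
      rw [norm_one]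
      linarith
    calc _ ≤ 1 * (2 : ℝ) := by gcongr
      _ = 2 := by norm_num

lemma norm_al_le {q : ℂ} (hq : ‖q‖ < 1) (r : ℕ) : ‖al q r‖ ≤ 2 / (1 - ‖q‖) ^ 2 := by
  have h0 : 0 < 1 - ‖q‖ := by linarith
  rcases r with _ | r
  · rw [al, norm_one, le_div_iff₀ (by positivity)]
    have := norm_nonneg q
    nlinarith
  · rw [al, norm_div, norm_mul, norm_mul, norm_pow, norm_neg, norm_one, one_pow, one_mul]
    have h1 : ‖q ^ ((r + 1) * (r + 2))‖ ≤ 1 := by rw [norm_pow]; exact pow_le_one₀ (norm_nonneg _) hq.le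
    have h2 : ‖1 + q ^ (2 * r + 2)‖ ≤ 2 := by
      refine (norm_add_le _ _).trans ?_
      have := norm_pow_lt_one hq (k := 2 * r + 2) (by omega)
      rw [norm_one]
      linarith
    have h3 : (1 - ‖q‖) ^ 2 ≤ ‖1 - q ^ (2 * r + 2) + q ^ (4 * r + 4)‖ := by
      have e : q ^ (4 * r + 4) = (q ^ (2 * r + 2)) ^ 2 := by rw [← pow_mul]; ring_nf
      rw [e]
      have h3 := norm_pow_le_self hq (k := 2 * r + 2) (by omega)
      refine le_trans ?_ (norm_quad_ge _ (h3.trans hq.le))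
      gcongr
    calc _ ≤ 1 * (2 : ℝ) / (1 - ‖q‖) ^ 2 := by gcongr
      _ = _ := by rw [one_mul]

theorem gm_mul_thf {q : ℂ} (hq : ‖q‖ < 1) : gm q 0 * thf q = 1 := by
  have h := bailey_swap hq (alp q) 2 (norm_alp_le hq)
  rw [thf, ← h]
  simp_rw [trivial_pair hq]
  rw [tsum_eq_single 0]
  · simp [dl]
  · intro n hn; simp [hn]

theorem Hf_eq_gm {q : ℂ} (hq : ‖q‖ < 1) : Hf q = gm q 0 * Bf q := by
  have h := bailey_swap hq (al q) _ (norm_al_le hq)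
  rw [Bf, ← h, Hf]
  congr 1
  ext n
  rw [← dl_mul_Dn hq, Dn]

theorem Hf_mul_thf {q : ℂ} (hq : ‖q‖ < 1) : Hf q * thf q = Bf q := by
  rw [Hf_eq_gm hq]
  linear_combination Bf q * gm_mul_thf hq

end Part3

section Part4

open Complex

/-! ### Part 4 : partial fractions and Fourier representation -/

lemma mem_ic {x : ℂ} (h : ∀ n : ℤ, (n : ℂ) ≠ x) : x ∈ integerComplement := by
  rintro ⟨n, hn⟩
  exact h n hn

lemma csc_series {x : ℂ} (hx : x ∈ integerComplement) :
    HasSum (fun n : ℕ => (-1 : ℂ) ^ (n + 1) * (1 / (x - (n + 1)) + 1 / (x + (n + 1))))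
      (Real.pi / sin (Real.pi * x) - 1 / x) := by
  have hx2 : x / 2 ∈ integerComplement := by
    apply mem_ic
    intro n hn
    apply hx
    refine ⟨2 * n, ?_⟩
    push_cast
    rw [hn]; ring
  set c : ℕ → ℂ := fun n => 1 / (x - (n + 1)) + 1 / (x + (n + 1)) with hc
  have hs : Summable c := summable_cotTerm hx
  have hs2 : Summable (fun n : ℕ => 1 / (x / 2 - (n + 1)) + 1 / (x / 2 + (n + 1))) := summable_cotTerm hx2
  have h1 := cot_series_rep' hx
  have h2 := cot_series_rep' hx2
  have hodd : ∀ n : ℕ, 1 / (x / 2 - (n + 1)) + 1 / (x / 2 + (n + 1)) = 2 * c (2 * n + 1) := by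
    intro n
    simp only [hc]
    push_cast
    have e1 : x / 2 - (n + 1) = (x - (2 * n + 1 + 1)) / 2 := by ring
    have e2 : x / 2 + (n + 1) = (x + (2 * n + 1 + 1)) / 2 := by ring
    rw [e1, e2, one_div_div, one_div_div]
    ring
  have ho : Summable fun k => c (2 * k + 1) := hs.comp_injective (fun a b h => by simp at h; exact h)
  have he : Summable fun k => c (2 * k) := hs.comp_injective (fun a b h => by simp at h; exact h)
  simp_rw [hodd] at h2
  rw [tsum_mul_left] at h2
  have h3 := tsum_even_add_odd he ho
  have hval : Real.pi / sin (Real.pi * x) - 1 / x = (∑' k, -c (2 * k)) + ∑' k, c (2 * k + 1) := by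
    rw [tsum_neg]
    have h4 : (Real.pi : ℂ) / sin (Real.pi * x) = Real.pi * cot (Real.pi * (x / 2)) - Real.pi * cot (Real.pi * x) := by
      have hs1 := sin_pi_mul_ne_zero hx
      have hs2 := sin_pi_mul_ne_zero hx2
      have e : (Real.pi : ℂ) * x = 2 * (Real.pi * (x / 2)) := by ring
      rw [Complex.cot, Complex.cot]
      rw [e] at hs1 ⊢
      rw [sin_two_mul, cos_two_mul] at *
      have hc' : cos (Real.pi * (x / 2)) ≠ 0 := by
        intro h; apply hs1; rw [h]; ring
      field_simp
      ring
    rw [h4]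
    have hx0 : x ≠ 0 := by rintro rfl; exact hx ⟨0, by simp⟩
    have e5 : (1 : ℂ) / (x / 2) = 2 / x := by field_simp
    rw [e5] at h2
    linear_combination h2 - h1 + h3
  rw [hval]
  apply HasSum.even_add_odd
  · have h := he.neg.hasSum
    refine h.congr_fun fun k => ?_
    rw [pow_succ, pow_mul]; simp [hc]
  · have h := ho.hasSum
    refine h.congr_fun fun k => ?_
    rw [pow_succ, pow_succ, pow_mul]; simp [hc]

noncomputable def hh (u : ℂ) : ℂ := 2 * cosh u / (2 * cosh (2 * u) - 1)

noncomputable def pA (k : ℕ) : ℝ := Real.pi * (k + 1 / 6)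
noncomputable def pB (k : ℕ) : ℝ := Real.pi * (k + 5 / 6)

lemma hh_partial {u : ℂ} (hu : u = 0 ∨ u.re ≠ 0) :
    Filter.Tendsto (fun N : ℕ => ∑ k ∈ Finset.range N, (-1 : ℂ) ^ k * (pA k / (pA k ^ 2 + u ^ 2) + pB k / (pB k ^ 2 + u ^ 2)))
      Filter.atTop (nhds (hh u)) := by
  have hpi : (Real.pi : ℂ) ≠ 0 := by exact_mod_cast Real.pi_ne_zero
  set v : ℂ := I * u / Real.pi with hv
  have hne : ∀ (r : ℝ), r ≠ 0 → (r : ℂ) + v ≠ 0 ∧ (r : ℂ) - v ≠ 0 := by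
    intro r hr
    rcases hu with rfl | hu
    · have : (r : ℂ) ≠ 0 := by exact_mod_cast hr
      simp [hv, this]
    · have e : v.im = u.re / Real.pi := by
        rw [hv, Complex.div_ofReal_im]; simp
      have e0 : v.im ≠ 0 := by rw [e]; exact div_ne_zero hu Real.pi_ne_zero
      constructor
      · intro h
        have := congrArg Complex.im h
        simp at this
        exact e0 this
      · intro h
        have := congrArg Complex.im h
        simp at this
        exact e0 this
  have hr6 : ∀ n : ℤ, ((1 / 6 - n : ℝ)) ≠ 0 := by
    intro n h
    have h1 : (6 * n : ℝ) = 1 := by linarith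
    have h2 : (6 * n : ℤ) = 1 := by exact_mod_cast h1
    omega
  have hx1 : 1 / 6 + v ∈ integerComplement := by
    apply mem_ic
    intro n hn
    apply (hne _ (hr6 n)).1
    push_cast
    rw [hn]; ring
  have hx2 : 1 / 6 - v ∈ integerComplement := by
    apply mem_ic
    intro n hn
    apply (hne _ (hr6 n)).2
    push_cast
    rw [hn]; ring
  have s1 := csc_series hx1
  have s2 := csc_series hx2
  have s3 := ((s1.add s2).tendsto_sum_nat).const_mul (1 / (2 * Real.pi) : ℂ)
  have hterm : ∀ n : ℕ, (1 / (2 * Real.pi) : ℂ) * ((-1 : ℂ) ^ (n + 1) * (1 / (1 / 6 + v - (n + 1)) + 1 / (1 / 6 + v + (n + 1))) +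
      (-1 : ℂ) ^ (n + 1) * (1 / (1 / 6 - v - (n + 1)) + 1 / (1 / 6 - v + (n + 1)))) =
      (-1 : ℂ) ^ n * (pB n / (pB n ^ 2 + u ^ 2)) - (-1 : ℂ) ^ n * (pA (n + 1) / (pA (n + 1) ^ 2 + u ^ 2)) := by
    intro n
    have e1 := hne (n + 5 / 6) (by positivity)
    have e2 := hne (n + 1 + 1 / 6) (by positivity)
    have f1 : (1 / 6 + v - (n + 1)) = -(((n + 5 / 6 : ℝ) : ℂ) - v) := by push_cast; ring
    have f2 : (1 / 6 - v - (n + 1)) = -(((n + 5 / 6 : ℝ) : ℂ) + v) := by push_cast; ring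
    have f3 : (1 / 6 + v + (n + 1)) = (((n + 1 + 1 / 6 : ℝ) : ℂ) + v) := by push_cast; ring
    have f4 : (1 / 6 - v + (n + 1)) = (((n + 1 + 1 / 6 : ℝ) : ℂ) - v) := by push_cast; ring
    have g : u ^ 2 = - (Real.pi ^ 2 * v ^ 2) := by
      rw [hv, div_pow, mul_pow, I_sq]; field_simp
    have g1 : (pB n : ℂ) ^ 2 + u ^ 2 = Real.pi ^ 2 * ((((n + 5 / 6 : ℝ) : ℂ) - v) * (((n + 5 / 6 : ℝ) : ℂ) + v)) := by
      rw [g, pB]; push_cast; ring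
    have g2 : (pA (n + 1) : ℂ) ^ 2 + u ^ 2 = Real.pi ^ 2 * ((((n + 1 + 1 / 6 : ℝ) : ℂ) - v) * (((n + 1 + 1 / 6 : ℝ) : ℂ) + v)) := by
      rw [g, pA]; push_cast; ring
    have g3 : (pB n : ℂ) = Real.pi * ((n + 5 / 6 : ℝ) : ℂ) := by rw [pB]; push_cast; ring
    have g4 : (pA (n + 1) : ℂ) = Real.pi * ((n + 1 + 1 / 6 : ℝ) : ℂ) := by rw [pA]; push_cast; ring
    rw [f1, f2, f3, f4, g1, g2, g3, g4]
    obtain ⟨e11, e12⟩ := e1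
    obtain ⟨e21, e22⟩ := e2
    generalize ((n + 5 / 6 : ℝ) : ℂ) = a at *
    generalize ((n + 1 + 1 / 6 : ℝ) : ℂ) = b at *
    rw [pow_succ, one_div_neg_eq_neg_one_div, one_div_neg_eq_neg_one_div]
    field_simp
    ring
  have ha0 : Filter.Tendsto (fun N : ℕ => (-1 : ℂ) ^ N * (pA N / (pA N ^ 2 + u ^ 2))) Filter.atTop (nhds 0) := by
    have hA : Filter.Tendsto pA Filter.atTop Filter.atTop := by
      unfold pA
      exact Filter.Tendsto.const_mul_atTop Real.pi_pos
        (Filter.tendsto_atTop_add_const_right _ _ tendsto_natCast_atTop_atTop)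
    have hAi : Filter.Tendsto (fun N : ℕ => ((pA N)⁻¹ : ℂ)) Filter.atTop (nhds 0) := by
      have := (Complex.continuous_ofReal.tendsto 0).comp (tendsto_inv_atTop_zero.comp hA)
      simpa [Function.comp_def] using this
    have h1 : Filter.Tendsto (fun N : ℕ => ((pA N)⁻¹ : ℂ) / (1 + u ^ 2 * ((pA N)⁻¹ : ℂ) ^ 2)) Filter.atTop (nhds (0 / (1 + u ^ 2 * 0 ^ 2))) := by
      apply hAi.div
      · exact ((hAi.pow 2).const_mul _).const_add _
      · simp
    have h2 : Filter.Tendsto (fun N : ℕ => (pA N : ℂ) / (pA N ^ 2 + u ^ 2)) Filter.atTop (nhds 0) := by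
      rw [zero_div] at h1
      refine h1.congr fun N => ?_
      have : (pA N : ℂ) ≠ 0 := by
        have : 0 < pA N := by unfold pA; have := Real.pi_pos; positivity
        exact_mod_cast this.ne'
      have e : (pA N : ℂ) ^ 2 + u ^ 2 = (pA N : ℂ) ^ 2 * (1 + u ^ 2 * ((pA N)⁻¹ : ℂ) ^ 2) := by
        field_simp
      rw [e]
      generalize 1 + u ^ 2 * ((pA N)⁻¹ : ℂ) ^ 2 = d
      rw [← div_div, sq, ← div_div, div_self this, one_div]
    rw [tendsto_zero_iff_norm_tendsto_zero] at h2 ⊢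
    simpa using h2
  have hfin := (s3.add_const ((pA 0 : ℂ) / (pA 0 ^ 2 + u ^ 2))).sub ha0
  rw [sub_zero] at hfin
  convert hfin using 1
  · ext N
    rw [Finset.mul_sum]
    simp_rw [hterm]
    clear hfin s3
    induction N with
    | zero => simp
    | succ N ih =>
      rw [Finset.sum_range_succ, ih, Finset.sum_range_succ, pow_succ]
      ring
  · congr 1
    have e1 := hne (1 / 6) (by norm_num)
    have g : u ^ 2 = - (Real.pi ^ 2 * v ^ 2) := by
      rw [hv, div_pow, mul_pow, I_sq]; field_simp
    have g2 : (pA 0 : ℂ) ^ 2 + u ^ 2 = Real.pi ^ 2 * ((1 / 6 - v) * (1 / 6 + v)) := by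
      rw [g, pA]; push_cast; ring
    have g4 : (pA 0 : ℂ) = Real.pi * (1 / 6) := by rw [pA]; push_cast; ring
    have n1 := sin_pi_mul_ne_zero hx1
    have n2 := sin_pi_mul_ne_zero hx2
    have hs3 : ((Real.sqrt 3 : ℝ) : ℂ) ^ 2 = 3 := by
      rw [← ofReal_pow, Real.sq_sqrt (by norm_num)]; norm_num
    have c6 : Complex.cos (Real.pi / 6) = (Real.sqrt 3 : ℝ) / 2 := by
      have := Real.cos_pi_div_six
      rw [show (Real.pi : ℂ) / 6 = ((Real.pi / 6 : ℝ) : ℂ) by push_cast; ring, ← ofReal_cos, this]; push_cast; ring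
    have s6 : Complex.sin (Real.pi / 6) = 1 / 2 := by
      have := Real.sin_pi_div_six
      rw [show (Real.pi : ℂ) / 6 = ((Real.pi / 6 : ℝ) : ℂ) by push_cast; ring, ← ofReal_sin, this]; push_cast; ring
    have k1 : sin (Real.pi * (1 / 6 + v)) = 1 / 2 * cosh u + (Real.sqrt 3 : ℝ) / 2 * (sinh u * I) := by
      rw [show (Real.pi : ℂ) * (1 / 6 + v) = Real.pi / 6 + u * I by rw [hv]; field_simp, sin_add, c6, s6, cos_mul_I, sin_mul_I]
    have k2 : sin (Real.pi * (1 / 6 - v)) = 1 / 2 * cosh u - (Real.sqrt 3 : ℝ) / 2 * (sinh u * I) := by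
      rw [show (Real.pi : ℂ) * (1 / 6 - v) = Real.pi / 6 - u * I by rw [hv]; field_simp, sin_sub, c6, s6, cos_mul_I, sin_mul_I]
    have k3 : sin (Real.pi * (1 / 6 + v)) * sin (Real.pi * (1 / 6 - v)) = (2 * cosh (2 * u) - 1) / 4 := by
      rw [k1, k2, cosh_two_mul]
      have := cosh_sq u
      have hI := I_sq
      linear_combination (-1/4) * sinh u ^ 2 * I ^ 2 * hs3 - (3 / 4) * sinh u ^ 2 * hI - this / 4
    have k4 : sin (Real.pi * (1 / 6 + v)) + sin (Real.pi * (1 / 6 - v)) = cosh u := by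
      rw [k1, k2]; ring
    obtain ⟨e11, e12⟩ := e1
    push_cast at e11 e12
    rw [g2, g4, hh, ← k4, show 2 * cosh (2 * u) - 1 = 4 * (sin (Real.pi * (1 / 6 + v)) * sin (Real.pi * (1 / 6 - v))) by rw [k3]; ring]
    generalize sin (Real.pi * (1 / 6 + v)) = S1 at *
    generalize sin (Real.pi * (1 / 6 - v)) = S2 at *
    have e13 : (1 : ℂ) / (1 / 6 + v) + 1 / (1 / 6 - v) = (1 / 3) / ((1 / 6 - v) * (1 / 6 + v)) := by
      rw [div_add_div _ _ e11 e12, div_eq_div_iff (mul_ne_zero e11 e12) (mul_ne_zero e12 e11)]; ring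
    have e14 : (Real.pi : ℂ) * (1 / 6) / (Real.pi ^ 2 * ((1 / 6 - v) * (1 / 6 + v))) = (1 / (2 * Real.pi)) * ((1 : ℂ) / (1 / 6 + v) + 1 / (1 / 6 - v)) := by
      rw [e13]; field_simp; norm_num
    rw [e14]
    field_simp
    ring

end Part4

section Part5

open Complex

/-! ### Part 5 : Fourier representation in a cone -/

noncomputable def Kk (s : ℂ) : ℂ :=
  exp (-(Real.pi * s / 6)) * (1 + exp (-(2 * Real.pi * s / 3))) / (1 + exp (-(Real.pi * s)))

lemma exists_cone_const (K : ℝ) (hK : 0 < K) : ∃ c : ℝ, 0 < c ∧ c ≤ 1 ∧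
    ∀ z : ℂ, 0 ≤ z.re → |z.im| ≤ K * z.re → c ≤ ‖1 + exp (-z)‖ := by
  have hp : 0 < Real.pi / (2 * K) := by have := Real.pi_pos; positivity
  refine ⟨1 - Real.exp (-(Real.pi / (2 * K))), ?_, ?_, ?_⟩
  · have : Real.exp (-(Real.pi / (2 * K))) < 1 := by
      rw [← Real.exp_zero]; exact Real.exp_lt_exp.2 (by linarith)
    linarith
  · have := Real.exp_pos (-(Real.pi / (2 * K))); linarith
  · intro z hz0 hz
    have hepos := Real.exp_pos (-(Real.pi / (2 * K)))
    rcases le_or_gt |z.im| (Real.pi / 2) with h | h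
    · have h1 : 1 ≤ (1 + exp (-z)).re := by
        rw [add_re, one_re, exp_re, neg_im, Real.cos_neg]
        have := Real.cos_nonneg_of_mem_Icc (abs_le.1 h)
        have h2 := (Real.exp_pos (-z).re).le
        nlinarith [mul_nonneg h2 this]
      have := (re_le_norm (1 + exp (-z)))
      linarith
    · have h1 : Real.pi / (2 * K) ≤ z.re := by
        rw [div_le_iff₀ (by positivity)]
        linarith
      have h2 := norm_sub_norm_le (1 : ℂ) (-exp (-z))
      rw [norm_one, norm_neg, norm_exp, neg_re, sub_neg_eq_add] at h2
      have h3 : Real.exp (-z.re) ≤ Real.exp (-(Real.pi / (2 * K))) := Real.exp_le_exp.2 (by linarith)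
      linarith

lemma pi_cone {K : ℝ} {s : ℂ} (h0 : 0 ≤ s.re) (hs : |s.im| ≤ K * s.re) :
    0 ≤ (Real.pi * s : ℂ).re ∧ |(Real.pi * s : ℂ).im| ≤ K * (Real.pi * s : ℂ).re := by
  have := Real.pi_pos
  simp only [re_ofReal_mul, im_ofReal_mul, abs_mul, abs_of_pos this]
  constructor
  · positivity
  · nlinarith

lemma norm_exp_neg_real_mul (a : ℝ) (s : ℂ) : ‖exp (-((a : ℂ) * s))‖ = Real.exp (-(a * s.re)) := by
  rw [norm_exp, neg_re, re_ofReal_mul]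

lemma Kk_norm_le {K c : ℝ} (hc : 0 < c)
    (hcK : ∀ z : ℂ, 0 ≤ z.re → |z.im| ≤ K * z.re → c ≤ ‖1 + exp (-z)‖) {s : ℂ} (h0 : 0 ≤ s.re) (hs : |s.im| ≤ K * s.re) :
    ‖Kk s‖ ≤ 2 / c * Real.exp (-(Real.pi / 6 * s.re)) := by
  obtain ⟨h1, h2⟩ := pi_cone h0 hs
  have h3 := hcK _ h1 h2
  have hpi := Real.pi_pos
  have e1 : ‖exp (-(Real.pi * s / 6))‖ = Real.exp (-(Real.pi / 6 * s.re)) := by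
    rw [← norm_exp_neg_real_mul]; push_cast; congr 3; ring
  have e2 : ‖1 + exp (-(2 * Real.pi * s / 3))‖ ≤ 2 := by
    refine (norm_add_le _ _).trans ?_
    have : ‖exp (-(2 * Real.pi * s / 3))‖ = Real.exp (-(2 * Real.pi / 3 * s.re)) := by
      rw [← norm_exp_neg_real_mul]; push_cast; congr 3; ring
    rw [this, norm_one]
    have : Real.exp (-(2 * Real.pi / 3 * s.re)) ≤ 1 := Real.exp_le_one_iff.2 (by
      have : 0 ≤ 2 * Real.pi / 3 * s.re := by positivity
      linarith)
    linarith
  rw [Kk, norm_div, norm_mul, e1]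
  calc _ ≤ Real.exp (-(Real.pi / 6 * s.re)) * 2 / c := by gcongr
    _ = _ := by ring

lemma Kk_sub_norm_le {K c : ℝ} (hc : 0 < c)
    (hcK : ∀ z : ℂ, 0 ≤ z.re → |z.im| ≤ K * z.re → c ≤ ‖1 + exp (-z)‖) {s : ℂ} (h0 : 0 ≤ s.re) (hs : |s.im| ≤ K * s.re) :
    ‖Kk s - exp (-(Real.pi * s / 6))‖ ≤ 2 / c * Real.exp (-(5 * Real.pi / 6 * s.re)) := by
  obtain ⟨h1, h2⟩ := pi_cone h0 hs
  have h3 := hcK _ h1 h2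
  have hpi := Real.pi_pos
  have hne : 1 + exp (-(Real.pi * s)) ≠ 0 := by
    intro h; rw [h, norm_zero] at h3; linarith
  have e0 : Kk s - exp (-(Real.pi * s / 6)) =
      (exp (-(5 * Real.pi * s / 6)) - exp (-(7 * Real.pi * s / 6))) / (1 + exp (-(Real.pi * s))) := by
    rw [Kk, eq_div_iff hne, sub_mul, div_mul_cancel₀ _ hne, mul_add, mul_add, ← exp_add, ← exp_add]
    rw [show -(Real.pi * s / 6) + -(2 * Real.pi * s / 3) = -(5 * Real.pi * s / 6) by ring,
      show -(Real.pi * s / 6) + -(Real.pi * s) = -(7 * Real.pi * s / 6) by ring]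
    ring
  have e1 : ‖exp (-(5 * Real.pi * s / 6))‖ = Real.exp (-(5 * Real.pi / 6 * s.re)) := by
    rw [← norm_exp_neg_real_mul]; push_cast; congr 3; ring
  have e2 : ‖exp (-(7 * Real.pi * s / 6))‖ ≤ Real.exp (-(5 * Real.pi / 6 * s.re)) := by
    have : ‖exp (-(7 * Real.pi * s / 6))‖ = Real.exp (-(7 * Real.pi / 6 * s.re)) := by
      rw [← norm_exp_neg_real_mul]; push_cast; congr 3; ring
    rw [this]
    apply Real.exp_le_exp.2
    have := mul_nonneg hpi.le h0
    nlinarith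
  rw [e0, norm_div]
  have e3 : ‖exp (-(5 * Real.pi * s / 6)) - exp (-(7 * Real.pi * s / 6))‖ ≤ 2 * Real.exp (-(5 * Real.pi / 6 * s.re)) := by
    refine (norm_sub_le _ _).trans ?_
    linarith
  calc _ ≤ 2 * Real.exp (-(5 * Real.pi / 6 * s.re)) / c := by gcongr
    _ = _ := by ring

lemma Kk_expand {s : ℂ} (hne : 1 + exp (-(Real.pi * s)) ≠ 0) (N : ℕ) :
    Kk s = ∑ k ∈ Finset.range N, (-1 : ℂ) ^ k * (exp (-(pA k * s)) + exp (-(pB k * s)))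
      + (-1) ^ N * exp (-((N * Real.pi : ℝ) * s)) * Kk s := by
  induction N with
  | zero => simp
  | succ N ih =>
    rw [Finset.sum_range_succ]
    have : (-1 : ℂ) ^ N * exp (-((N * Real.pi : ℝ) * s)) * Kk s = (-1 : ℂ) ^ N * (exp (-(pA N * s)) + exp (-(pB N * s)))
       + (-1) ^ (N + 1) * exp (-(((N + 1 : ℕ) * Real.pi : ℝ) * s)) * Kk s := by
      have e1 : exp (-(pA N * s)) = exp (-((N * Real.pi : ℝ) * s)) * exp (-(Real.pi * s / 6)) := by
        rw [← exp_add, pA]; push_cast; congr 1; ring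
      have e2 : exp (-(pB N * s)) = exp (-((N * Real.pi : ℝ) * s)) * exp (-(Real.pi * s / 6)) * exp (-(2 * Real.pi * s / 3)) := by
        rw [← exp_add, ← exp_add, pB]; push_cast; congr 1; ring
      have e3 : exp (-(((N + 1 : ℕ) * Real.pi : ℝ) * s)) = exp (-((N * Real.pi : ℝ) * s)) * exp (-(Real.pi * s)) := by
        rw [← exp_add]; push_cast; congr 1; ring
      rw [e1, e2, e3, Kk, pow_succ]
      clear e1 e2 e3 ih
      generalize exp (-(Real.pi * s)) = y at *
      generalize exp (-(Real.pi * s / 6)) = y1 at *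
      generalize exp (-(2 * Real.pi * s / 3)) = y2 at *
      field_simp
      ring
    rw [add_assoc, ← this]
    exact ih

lemma integrable_exp_cos {a : ℂ} (ha : 0 < a.re) (n : ℝ) :
    MeasureTheory.IntegrableOn (fun σ : ℝ => exp (-(a * σ)) * (Real.cos (n * σ) : ℂ)) (Set.Ioi 0) ∧
    ∫ σ in Set.Ioi (0 : ℝ), exp (-(a * σ)) * (Real.cos (n * σ) : ℂ) = a / (a ^ 2 + n ^ 2) := by
  have h1 : (-a + n * I).re < 0 := by simpa using ha
  have h2 : (-a - n * I).re < 0 := by simpa using ha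
  have e : (fun σ : ℝ => exp (-(a * σ)) * (Real.cos (n * σ) : ℂ)) =
      fun σ : ℝ => (1 / 2 : ℂ) * (exp ((-a + n * I) * σ) + exp ((-a - n * I) * σ)) := by
    ext σ
    rw [ofReal_cos, Complex.cos, show (-a + n * I) * σ = -(a * σ) + ((n * σ : ℝ) : ℂ) * I by push_cast; ring,
      show (-a - n * I) * σ = -(a * σ) + -((n * σ : ℝ) : ℂ) * I by push_cast; ring, exp_add, exp_add]
    ring
  have i1 := integrableOn_exp_mul_complex_Ioi h1 0
  have i2 := integrableOn_exp_mul_complex_Ioi h2 0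
  rw [e]
  refine ⟨(i1.add i2).const_mul _, ?_⟩
  rw [MeasureTheory.integral_const_mul, MeasureTheory.integral_add i1 i2, integral_exp_mul_complex_Ioi h1,
    integral_exp_mul_complex_Ioi h2]
  have n1 : (-a + n * I) ≠ 0 := by intro h; rw [h] at h1; simp at h1
  have n2 : (-a - n * I) ≠ 0 := by intro h; rw [h] at h2; simp at h2
  have e3 : a ^ 2 + n ^ 2 = (-a + n * I) * (-a - n * I) := by
    linear_combination ((n : ℂ) ^ 2) * I_sq
  rw [e3]
  simp only [ofReal_zero, mul_zero, exp_zero]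
  rw [div_add_div _ _ n1 n2, mul_div_assoc', div_eq_div_iff (mul_ne_zero n1 n2) (mul_ne_zero n1 n2)]
  ring

lemma inv_cone {K : ℝ} {τ : ℂ} (ht : 0 < τ.re) (hc : |τ.im| ≤ K * τ.re) :
    0 < (τ⁻¹).re ∧ ∀ σ : ℝ, 0 ≤ σ → 0 ≤ (σ / τ : ℂ).re ∧ |(σ / τ : ℂ).im| ≤ K * (σ / τ : ℂ).re ∧ (σ / τ : ℂ).re = σ * (τ⁻¹).re := by
  have hn : 0 < normSq τ := normSq_pos.2 (by rintro rfl; simp at ht)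
  have h1 : 0 < (τ⁻¹).re := by rw [inv_re]; positivity
  refine ⟨h1, fun σ hσ => ?_⟩
  rw [div_eq_mul_inv, re_ofReal_mul, im_ofReal_mul]
  refine ⟨by positivity, ?_, rfl⟩
  rw [abs_mul, abs_of_nonneg hσ, inv_im, inv_re, abs_div, abs_neg, abs_of_pos hn]
  calc σ * (|τ.im| / normSq τ) ≤ σ * ((K * τ.re) / normSq τ) := by gcongr
    _ = _ := by ring

lemma measurable_Kk (τ : ℂ) : Measurable fun σ : ℝ => Kk (σ / τ) := by
  unfold Kk
  fun_prop

lemma fourier_Kk {K : ℝ} (hK : 0 < K) {τ : ℂ} (ht : 0 < τ.re) (hc : |τ.im| ≤ K * τ.re) (n : ℤ) :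
    ∫ σ in Set.Ioi (0 : ℝ), Kk (σ / τ) * (Real.cos (n * σ) : ℂ) = τ * hh (τ * n) := by
  obtain ⟨c, hc0, hc1, hcK⟩ := exists_cone_const K hK
  obtain ⟨hρ, hcone⟩ := inv_cone ht hc
  set ρ := (τ⁻¹).re with hρd
  have hpi := Real.pi_pos
  have hτ : τ ≠ 0 := by rintro rfl; simp at ht
  set J := ∫ σ in Set.Ioi (0 : ℝ), Kk (σ / τ) * (Real.cos (n * σ) : ℂ) with hJ
  have hone : ∀ a : ℝ, 0 < a → MeasureTheory.IntegrableOn (fun σ : ℝ => exp (-(a * (σ / τ))) * (Real.cos (n * σ) : ℂ)) (Set.Ioi 0) ∧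
    ∫ σ in Set.Ioi (0 : ℝ), exp (-(a * (σ / τ))) * (Real.cos (n * σ) : ℂ) = τ * (a / (a ^ 2 + (τ * n) ^ 2)) := by
    intro a ha
    have h1 : 0 < (a / τ : ℂ).re := by rw [div_eq_mul_inv, re_ofReal_mul]; positivity
    have h2 := integrable_exp_cos h1 n
    have e : ∀ σ : ℝ, (a : ℂ) * (σ / τ) = a / τ * σ := by intro σ; ring
    simp_rw [e]
    refine ⟨h2.1, ?_⟩
    rw [h2.2]
    push_cast
    have e2 : (a : ℂ) ^ 2 + (τ * n) ^ 2 = τ ^ 2 * ((a / τ) ^ 2 + n ^ 2) := by field_simp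
    rw [e2]
    generalize ((a / τ : ℂ)) ^ 2 + (n : ℂ) ^ 2 = d
    rcases eq_or_ne d 0 with rfl | hd
    · simp
    · field_simp
  set R : ℕ → ℂ := fun N => ∫ σ in Set.Ioi (0 : ℝ), (-1) ^ N * exp (-((N * Real.pi : ℝ) * (σ / τ))) * Kk (σ / τ) * (Real.cos (n * σ) : ℂ) with hR
  have hbd : ∀ N : ℕ, ∀ σ ∈ Set.Ioi (0 : ℝ), ‖(-1) ^ N * exp (-((N * Real.pi : ℝ) * (σ / τ))) * Kk (σ / τ) * (Real.cos (n * σ) : ℂ)‖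
      ≤ 2 / c * Real.exp (-((N + 1 / 6) * Real.pi * ρ) * σ) := by
    intro N σ hσ
    obtain ⟨k1, k2, k3⟩ := hcone σ (le_of_lt hσ)
    have h1 := Kk_norm_le hc0 hcK k1 k2
    rw [norm_mul, norm_mul, norm_mul, norm_pow, norm_neg, norm_one, one_pow, one_mul, norm_exp_neg_real_mul, norm_real]
    have h2 := Real.abs_cos_le_one (n * σ)
    rw [k3] at h1 ⊢
    calc _ ≤ Real.exp (-(N * Real.pi * (σ * ρ))) * (2 / c * Real.exp (-(Real.pi / 6 * (σ * ρ)))) * 1 := by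
          gcongr
          exact h2
      _ = 2 / c * (Real.exp (-(N * Real.pi * (σ * ρ))) * Real.exp (-(Real.pi / 6 * (σ * ρ)))) := by ring
      _ = _ := by rw [← Real.exp_add]; congr 2; ring
  have hmeas : ∀ N : ℕ, MeasureTheory.AEStronglyMeasurable (fun σ : ℝ => (-1) ^ N * exp (-((N * Real.pi : ℝ) * (σ / τ))) * Kk (σ / τ) * (Real.cos (n * σ) : ℂ)) (MeasureTheory.volume.restrict (Set.Ioi 0)) := by
    intro N
    have := measurable_Kk τ
    apply Measurable.aestronglyMeasurable
    fun_prop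
  have hbi : ∀ N : ℕ, MeasureTheory.IntegrableOn (fun σ : ℝ => 2 / c * Real.exp (-((N + 1 / 6) * Real.pi * ρ) * σ)) (Set.Ioi 0) := by
    intro N
    exact (exp_neg_integrableOn_Ioi 0 (by positivity)).const_mul _
  have hinteg : ∀ N : ℕ, MeasureTheory.IntegrableOn (fun σ : ℝ => (-1) ^ N * exp (-((N * Real.pi : ℝ) * (σ / τ))) * Kk (σ / τ) * (Real.cos (n * σ) : ℂ)) (Set.Ioi 0) := by
    intro N
    refine MeasureTheory.Integrable.mono' (hbi N) (hmeas N) ?_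
    exact (MeasureTheory.ae_restrict_iff' measurableSet_Ioi).2 (Filter.Eventually.of_forall (hbd N))
  have hRn : ∀ N : ℕ, ‖R N‖ ≤ 2 / c * (1 / ((N + 1 / 6) * Real.pi * ρ)) := by
    intro N
    refine (MeasureTheory.norm_integral_le_of_norm_le (hbi N)
      ((MeasureTheory.ae_restrict_iff' measurableSet_Ioi).2 (Filter.Eventually.of_forall (hbd N)))).trans ?_
    rw [MeasureTheory.integral_const_mul, integral_exp_mul_Ioi (by
      have : 0 < (N + 1 / 6 : ℝ) * Real.pi * ρ := by positivity
      linarith)]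
    simp only [mul_zero, Real.exp_zero]
    rw [neg_div_neg_eq]
  have hR0 : Filter.Tendsto R Filter.atTop (nhds 0) := by
    refine squeeze_zero_norm hRn ?_
    have h1 : Filter.Tendsto (fun N : ℕ => (N + 1 / 6 : ℝ) * Real.pi * ρ) Filter.atTop Filter.atTop :=
      ((Filter.tendsto_atTop_add_const_right _ _ tendsto_natCast_atTop_atTop).atTop_mul_const hpi).atTop_mul_const hρ
    have h2 := (tendsto_inv_atTop_zero.comp h1).const_mul (2 / c)
    simpa [Function.comp_def] using h2
  have hsum : ∀ N : ℕ, J - R N = τ * ∑ k ∈ Finset.range N, (-1 : ℂ) ^ k * (pA k / (pA k ^ 2 + (τ * n) ^ 2) + pB k / (pB k ^ 2 + (τ * n) ^ 2)) := by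
    intro N
    have hApos : ∀ k, 0 < pA k := fun k => by unfold pA; positivity
    have hBpos : ∀ k, 0 < pB k := fun k => by unfold pB; positivity
    have e1 : J = ∫ σ in Set.Ioi (0 : ℝ), (∑ k ∈ Finset.range N, ((-1 : ℂ) ^ k * (exp (-(pA k * (σ / τ))) * (Real.cos (n * σ) : ℂ)) + (-1 : ℂ) ^ k * (exp (-(pB k * (σ / τ))) * (Real.cos (n * σ) : ℂ)))
        + (-1) ^ N * exp (-((N * Real.pi : ℝ) * (σ / τ))) * Kk (σ / τ) * (Real.cos (n * σ) : ℂ)) := by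
      refine MeasureTheory.setIntegral_congr_fun measurableSet_Ioi fun σ hσ => ?_
      obtain ⟨k1, k2, k3⟩ := hcone σ (le_of_lt hσ)
      obtain ⟨l1, l2⟩ := pi_cone k1 k2
      have l3 := hcK _ l1 l2
      have hne : 1 + exp (-(Real.pi * (σ / τ : ℂ))) ≠ 0 := by
        intro h; rw [h, norm_zero] at l3; linarith
      have := Kk_expand hne N
      conv_lhs => rw [this]
      rw [add_mul, Finset.sum_mul]
      congr 1
      refine Finset.sum_congr rfl fun k _ => ?_
      ring
    rw [e1, MeasureTheory.integral_add _ (hinteg N), MeasureTheory.integral_finsetSum]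
    · change _ + R N - R N = _
      rw [add_sub_cancel_right, Finset.mul_sum]
      refine Finset.sum_congr rfl fun k _ => ?_
      rw [MeasureTheory.integral_add ((hone _ (hApos k)).1.const_mul _) ((hone _ (hBpos k)).1.const_mul _),
        MeasureTheory.integral_const_mul, MeasureTheory.integral_const_mul, (hone _ (hApos k)).2, (hone _ (hBpos k)).2]
      ring
    · intro k _
      exact ((hone _ (hApos k)).1.const_mul _).add ((hone _ (hBpos k)).1.const_mul _)
    · refine MeasureTheory.integrable_finsetSum _ fun k _ => ?_
      exact ((hone _ (hApos k)).1.const_mul _).add ((hone _ (hBpos k)).1.const_mul _)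
  have hu : τ * n = 0 ∨ (τ * n : ℂ).re ≠ 0 := by
    rcases eq_or_ne n 0 with rfl | hn
    · left; simp
    · right
      have : (τ * n : ℂ).re = τ.re * n := by simp
      rw [this]
      exact mul_ne_zero ht.ne' (by exact_mod_cast hn)
  have hl := (hh_partial hu).const_mul τ
  simp_rw [← hsum] at hl
  have hl2 := (tendsto_const_nhds (x := J) (f := Filter.atTop)).sub hR0
  rw [sub_zero] at hl2
  exact tendsto_nhds_unique hl2 hl

end Part5

section Part6

open Complex

/-! ### Part 6 : asymptotics in a cone -/

lemma summable_gz {τ : ℂ} (ht : 0 < τ.re) (b : ℂ) :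
    Summable fun n : ℤ => exp (-2 * τ * (n : ℂ) ^ 2 + b * n) := by
  have hpi := Real.pi_pos
  have hpi' : (Real.pi : ℂ) ≠ 0 := by exact_mod_cast hpi.ne'
  have h := (summable_jacobiTheta₂_term_iff (b / (2 * Real.pi * I)) (((2 / Real.pi : ℝ) : ℂ) * (τ * I))).2 (by
    rw [im_ofReal_mul]
    simp only [mul_im, I_im, I_re, mul_one, mul_zero, add_zero]
    positivity)
  refine h.congr fun n => ?_
  rw [jacobiTheta₂_term]
  congr 1
  push_cast
  field_simp
  linear_combination (2 * (n : ℂ) ^ 2 * τ ) * I_sq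

lemma theta_transform {τ : ℂ} (ht : 0 < τ.re) (b : ℂ) :
    HasSum (fun n : ℤ => exp (-2 * τ * (n : ℂ) ^ 2 + b * n))
      (1 / ((2 / Real.pi : ℝ) * τ : ℂ) ^ (1 / 2 : ℂ) * ∑' n : ℤ, exp (-(2 * Real.pi * n + I * b) ^ 2 / (8 * τ))) := by
  have hpi := Real.pi_pos
  have hpi' : (Real.pi : ℂ) ≠ 0 := by exact_mod_cast hpi.ne'
  have hτ : τ ≠ 0 := by rintro rfl; simp at ht
  have h := Complex.tsum_exp_neg_quadratic (a := ((2 / Real.pi : ℝ) * τ : ℂ)) (by rw [re_ofReal_mul]; positivity) (b / (2 * Real.pi))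
  have e1 : ∀ n : ℤ, -(Real.pi : ℂ) * ((2 / Real.pi : ℝ) * τ : ℂ) * (n : ℂ) ^ 2 + 2 * Real.pi * (b / (2 * Real.pi)) * n = -2 * τ * (n : ℂ) ^ 2 + b * n := by
    intro n; push_cast; field_simp
  have e2 : ∀ n : ℤ, -(Real.pi : ℂ) / ((2 / Real.pi : ℝ) * τ : ℂ) * ((n : ℂ) + I * (b / (2 * Real.pi))) ^ 2 = -(2 * Real.pi * n + I * b) ^ 2 / (8 * τ) := by
    intro n; push_cast; field_simp; ring
  simp_rw [e1, e2] at h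
  rw [← h]
  exact (summable_gz ht b).hasSum

lemma tail_two {f : ℤ → ℂ} (hf : Summable f) {A r : ℝ} (hr0 : 0 ≤ r) (hr : r ≤ 1 / 2) 
    (h1 : ∀ j : ℕ, ‖f (j + 2)‖ ≤ A * r ^ j) (h2 : ∀ j : ℕ, ‖f (-(j + 1))‖ ≤ A * r ^ j) :
    ‖∑' n, f n - (f 0 + f 1)‖ ≤ 4 * A := by
  have hA : 0 ≤ A := by have := (norm_nonneg _).trans (h1 0); simpa using this
  have s1 : Summable fun n : ℕ => f n := hf.comp_injective Nat.cast_injective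
  have s2 : Summable fun n : ℕ => f (-(n + 1)) := hf.comp_injective (i := fun n : ℕ => (-(n + 1) : ℤ)) (by intro a b h; simpa using h)
  rw [tsum_of_nat_of_neg_add_one s1 s2, ← s1.sum_add_tsum_nat_add 2]
  have hg : HasSum (fun j : ℕ => A * r ^ j) (A * (1 - r)⁻¹) := (hasSum_geometric_of_lt_one hr0 (by linarith)).mul_left A
  have b1 : ‖∑' n : ℕ, f ((n + 2 : ℕ) : ℤ)‖ ≤ A * (1 - r)⁻¹ := tsum_of_norm_bounded hg (fun j => by simpa using h1 j)
  have b2 : ‖∑' n : ℕ, f (-(n + 1))‖ ≤ A * (1 - r)⁻¹ := tsum_of_norm_bounded hg h2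
  have b3 : A * (1 - r)⁻¹ ≤ A * 2 := by
    gcongr
    rw [inv_le_comm₀ (by linarith) (by norm_num)]; linarith
  have e : ∑ i ∈ Finset.range 2, f (i : ℤ) = f 0 + f 1 := by simp [Finset.sum_range_succ]
  rw [e]
  have : f 0 + f 1 + ∑' n : ℕ, f ((n + 2 : ℕ) : ℤ) + ∑' n : ℕ, f (-(n + 1)) - (f 0 + f 1) = ∑' n : ℕ, f ((n + 2 : ℕ) : ℤ) + ∑' n : ℕ, f (-(n + 1)) := by ring
  rw [this]
  refine (norm_add_le _ _).trans ?_
  linarith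

lemma exp_int_pi (n : ℤ) : exp (Real.pi * I * n) = (-1) ^ n := by
  rw [mul_comm, exp_int_mul, exp_pi_mul_I]

lemma qpow (τ : ℂ) (k : ℕ) : exp (-τ) ^ k = exp (-(k * τ)) := by
  rw [← exp_nat_mul]; congr 1; ring

lemma norm_q_lt {τ : ℂ} (ht : 0 < τ.re) : ‖exp (-τ)‖ < 1 := by
  rw [norm_exp, neg_re, Real.exp_lt_one_iff]; linarith

lemma thf_eq_int {τ : ℂ} (ht : 0 < τ.re) :
    HasSum (fun n : ℤ => exp (-2 * τ * (n : ℂ) ^ 2 + (Real.pi * I - τ) * n)) (thf (exp (-τ))) := by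
  have hs := (summable_gz ht (Real.pi * I - τ)).hasSum
  set m := ∑' n : ℤ, exp (-2 * τ * (n : ℂ) ^ 2 + (Real.pi * I - τ) * n) with hm
  have h1 := hs.nat_add_neg
  have h2 := h1.sub (hasSum_ite_eq (0 : ℕ) (1 : ℂ))
  have h3 : HasSum (fun r => alp (exp (-τ)) r * exp (-τ) ^ (r ^ 2)) (m + 1 - 1) := by
    have e0 : exp (-2 * τ * ((0 : ℤ) : ℂ) ^ 2 + (Real.pi * I - τ) * (0 : ℤ)) = 1 := by simp
    rw [e0] at h2
    refine h2.congr_fun fun r => ?_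
    rcases r with _ | r
    · simp [alp]
    · have p1 : exp (Real.pi * I * ((r + 1 : ℕ) : ℤ)) = (-1) ^ (r + 1) := by
        rw [exp_int_pi, zpow_natCast]
      have p2 : exp (Real.pi * I * (-((r + 1 : ℕ) : ℤ) : ℤ)) = (-1) ^ (r + 1) := by
        rw [exp_int_pi, zpow_neg, zpow_natCast, ← inv_pow]; norm_num
      have q1 : exp (-2 * τ * (((r + 1 : ℕ) : ℤ) : ℂ) ^ 2 + (Real.pi * I - τ) * (((r + 1 : ℕ) : ℤ) : ℂ)) =
          (-1) ^ (r + 1) * exp (-τ) ^ (2 * (r + 1) ^ 2 + (r + 1)) := by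
        rw [← p1, qpow, ← exp_add]; congr 1; push_cast; ring
      have q2 : exp (-2 * τ * ((-((r + 1 : ℕ) : ℤ) : ℤ) : ℂ) ^ 2 + (Real.pi * I - τ) * ((-((r + 1 : ℕ) : ℤ) : ℤ) : ℂ)) =
          (-1) ^ (r + 1) * exp (-τ) ^ (2 * (r + 1) * r + (r + 1)) := by
        rw [← p2, qpow, ← exp_add]; congr 1; push_cast; ring
      rw [q1, q2, alp, if_neg (Nat.succ_ne_zero r)]
      ring
  rw [add_sub_cancel_right] at h3
  rw [thf, h3.tsum_eq]
  exact hs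

lemma hh_zero : hh 0 = 2 := by simp [hh]; norm_num

lemma hh_neg (u : ℂ) : hh (-u) = hh u := by simp [hh]

lemma hh_eq {u : ℂ} (hu : 1 - exp (-(2 * u)) + exp (-(4 * u)) ≠ 0) :
    hh u = exp (-u) * (1 + exp (-(2 * u))) / (1 - exp (-(2 * u)) + exp (-(4 * u))) := by
  have e2 : exp (-(2 * u)) = exp (-u) ^ 2 := by rw [← exp_nat_mul]; congr 1; push_cast; ring
  have e4 : exp (-(4 * u)) = exp (-u) ^ 4 := by rw [← exp_nat_mul]; congr 1; push_cast; ring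
  have e3 : exp (2 * u) = (exp (-u))⁻¹ ^ 2 := by rw [← exp_neg, neg_neg, ← exp_nat_mul]; push_cast; rfl
  have e5 : exp u = (exp (-u))⁻¹ := by rw [← exp_neg, neg_neg]
  rw [e2, e4] at hu
  rw [hh, Complex.cosh, Complex.cosh, e2, e4, e3, e5]
  clear e2 e4 e3 e5
  have hx := exp_ne_zero (-u)
  generalize exp (-u) = x at *
  have : (2 * ((x⁻¹ ^ 2 + x ^ 2) / 2) - 1) = x⁻¹ ^ 2 * (1 - x ^ 2 + x ^ 4) := by field_simp; ring
  rw [this, div_eq_div_iff (mul_ne_zero (pow_ne_zero _ (inv_ne_zero hx)) hu) hu]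
  field_simp

lemma Bf_eq_int {τ : ℂ} (ht : 0 < τ.re) {m : ℂ}
    (hs : HasSum (fun n : ℤ => exp (-2 * τ * (n : ℂ) ^ 2 + Real.pi * I * n) * hh (τ * n)) m) :
    2 * Bf (exp (-τ)) = m := by
  have h1 := hs.nat_add_neg
  have h2 := h1.sub (hasSum_ite_eq (0 : ℕ) (2 : ℂ))
  have h3 : HasSum (fun r => 2 * (al (exp (-τ)) r * exp (-τ) ^ (r ^ 2))) (m + 2 - 2) := by
    have e0 : exp (-2 * τ * ((0 : ℤ) : ℂ) ^ 2 + Real.pi * I * (0 : ℤ)) * hh (τ * (0 : ℤ)) = 2 := by simp [hh_zero]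
    rw [e0] at h2
    refine h2.congr_fun fun r => ?_
    rcases r with _ | r
    · simp [al, hh_zero]
    · have p1 : exp (Real.pi * I * ((r + 1 : ℕ) : ℤ)) = (-1) ^ (r + 1) := by
        rw [exp_int_pi, zpow_natCast]
      have p2 : exp (Real.pi * I * (-((r + 1 : ℕ) : ℤ) : ℤ)) = (-1) ^ (r + 1) := by
        rw [exp_int_pi, zpow_neg, zpow_natCast, ← inv_pow]; norm_num
      have q1 : exp (-2 * τ * (((r + 1 : ℕ) : ℤ) : ℂ) ^ 2 + Real.pi * I * (((r + 1 : ℕ) : ℤ) : ℂ)) =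
          (-1) ^ (r + 1) * exp (-τ) ^ (2 * (r + 1) ^ 2) := by
        rw [← p1, qpow, ← exp_add]; congr 1; push_cast; ring
      have q2 : exp (-2 * τ * ((-((r + 1 : ℕ) : ℤ) : ℤ) : ℂ) ^ 2 + Real.pi * I * ((-((r + 1 : ℕ) : ℤ) : ℤ) : ℂ)) =
          (-1) ^ (r + 1) * exp (-τ) ^ (2 * (r + 1) ^ 2) := by
        rw [← p2, qpow, ← exp_add]; congr 1; push_cast; ring
      have hd := quad_ne (norm_q_lt ht) r
      have e2 : exp (-(2 * (τ * ((r + 1 : ℕ) : ℤ)))) = exp (-τ) ^ (2 * r + 2) := by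
        rw [qpow]; congr 1; push_cast; ring
      have e4 : exp (-(4 * (τ * ((r + 1 : ℕ) : ℤ)))) = exp (-τ) ^ (4 * r + 4) := by
        rw [qpow]; congr 1; push_cast; ring
      have e1 : exp (-(τ * ((r + 1 : ℕ) : ℤ))) = exp (-τ) ^ (r + 1) := by
        rw [qpow]; congr 1; push_cast; ring
      have hhe : hh (τ * ((r + 1 : ℕ) : ℤ)) = exp (-τ) ^ (r + 1) * (1 + exp (-τ) ^ (2 * r + 2)) / (1 - exp (-τ) ^ (2 * r + 2) + exp (-τ) ^ (4 * r + 4)) := by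
        rw [hh_eq (by rw [e2, e4]; exact hd), e2, e4, e1]
      have hhn : hh (τ * (-((r + 1 : ℕ) : ℤ) : ℤ)) = hh (τ * ((r + 1 : ℕ) : ℤ)) := by
        rw [← hh_neg]; congr 1; push_cast; ring
      rw [q1, q2, hhn, hhe, al, if_neg (Nat.succ_ne_zero r)]
      ring
  rw [add_sub_cancel_right] at h3
  rw [Bf, ← tsum_mul_left, h3.tsum_eq]

noncomputable def Tt (τ : ℂ) (σ : ℝ) : ℂ := ∑' n : ℤ, exp (-(2 * Real.pi * n - (σ + Real.pi)) ^ 2 / (8 * τ))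

noncomputable def cst (τ : ℂ) : ℂ := 1 / ((2 / Real.pi : ℝ) * τ : ℂ) ^ (1 / 2 : ℂ)

lemma cst_ne {τ : ℂ} (ht : 0 < τ.re) : cst τ ≠ 0 := by
  have hτ : τ ≠ 0 := by rintro rfl; simp at ht
  have hpi := Real.pi_pos
  have hpi' : ((2 / Real.pi : ℝ) : ℂ) ≠ 0 := by
    have : (2 / Real.pi : ℝ) ≠ 0 := by positivity
    exact_mod_cast this
  unfold cst
  rw [one_div]
  refine inv_ne_zero fun h => ?_
  rw [cpow_eq_zero_iff] at h
  exact mul_ne_zero hpi' hτ h.1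

lemma theta_cos {τ : ℂ} (ht : 0 < τ.re) (σ : ℝ) :
    HasSum (fun n : ℤ => exp (-2 * τ * (n : ℂ) ^ 2 + Real.pi * I * n) * (Real.cos (n * σ) : ℂ)) (cst τ * Tt τ σ) := by
  have h := theta_transform ht (I * (σ + Real.pi))
  have e : ∀ n : ℤ, -(2 * Real.pi * n + I * (I * (σ + Real.pi))) ^ 2 / (8 * τ) = -(2 * Real.pi * n - (σ + Real.pi)) ^ 2 / (8 * τ) := by
    intro n
    congr 2
    rw [← mul_assoc, I_mul_I]; ring
  simp_rw [e] at h
  change HasSum _ (cst τ * Tt τ σ) at h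
  have h2 := (Equiv.neg ℤ).hasSum_iff.2 h
  have h3 := (h.add h2).mul_left (1 / 2 : ℂ)
  rw [show (1 / 2 : ℂ) * (cst τ * Tt τ σ + cst τ * Tt τ σ) = cst τ * Tt τ σ by ring] at h3
  refine h3.congr_fun fun n => ?_
  simp only [Function.comp_apply, Equiv.neg_apply]
  have e1 : exp (-2 * τ * (n : ℂ) ^ 2 + I * (σ + Real.pi) * n) = exp (-2 * τ * (n : ℂ) ^ 2 + Real.pi * I * n) * exp ((n * σ : ℝ) * I) := by
    rw [← exp_add]; congr 1; push_cast; ring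
  have e2 : exp (-2 * τ * ((-n : ℤ) : ℂ) ^ 2 + I * (σ + Real.pi) * (-n : ℤ)) = exp (-2 * τ * (n : ℂ) ^ 2 + Real.pi * I * n) * exp (-(n * σ : ℝ) * I) := by
    have : exp (-2 * τ * (n : ℂ) ^ 2 + Real.pi * I * n) = exp (-2 * τ * (n : ℂ) ^ 2 - Real.pi * I * n) := by
      rw [exp_eq_exp_iff_exists_int]
      exact ⟨n, by ring⟩
    rw [this, ← exp_add]; congr 1; push_cast; ring
  rw [e1, e2, ofReal_cos, Complex.cos]
  ring

lemma Kk_integrable {K : ℝ} (hK : 0 < K) {τ : ℂ} (ht : 0 < τ.re) (hc : |τ.im| ≤ K * τ.re) :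
    MeasureTheory.IntegrableOn (fun σ : ℝ => Kk (σ / τ)) (Set.Ioi 0) := by
  obtain ⟨c, hc0, hc1, hcK⟩ := exists_cone_const K hK
  obtain ⟨hρ, hcone⟩ := inv_cone ht hc
  have hpi := Real.pi_pos
  have hbi : MeasureTheory.IntegrableOn (fun σ : ℝ => 2 / c * Real.exp (-(Real.pi / 6 * (τ⁻¹).re) * σ)) (Set.Ioi 0) :=
    (exp_neg_integrableOn_Ioi 0 (by positivity)).const_mul _
  refine MeasureTheory.Integrable.mono' hbi (measurable_Kk τ).aestronglyMeasurable ?_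
  refine (MeasureTheory.ae_restrict_iff' measurableSet_Ioi).2 (Filter.Eventually.of_forall fun σ hσ => ?_)
  obtain ⟨k1, k2, k3⟩ := hcone σ (le_of_lt hσ)
  have h1 := Kk_norm_le hc0 hcK k1 k2
  rw [k3] at h1
  refine h1.trans (le_of_eq ?_)
  congr 2; ring

lemma Bf_integral {K : ℝ} (hK : 0 < K) {τ : ℂ} (ht : 0 < τ.re) (hc : |τ.im| ≤ K * τ.re) :
    2 * τ * Bf (exp (-τ)) = cst τ * ∫ σ in Set.Ioi (0 : ℝ), Kk (σ / τ) * Tt τ σ := by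
  have hki := Kk_integrable hK ht hc
  have hτ : τ ≠ 0 := by rintro rfl; simp at ht
  set F : ℤ → ℝ → ℂ := fun n σ => exp (-2 * τ * (n : ℂ) ^ 2 + Real.pi * I * n) * (Kk (σ / τ) * (Real.cos (n * σ) : ℂ)) with hF
  have hFi : ∀ n, MeasureTheory.IntegrableOn (F n) (Set.Ioi 0) := by
    intro n
    refine MeasureTheory.Integrable.const_mul ?_ _
    refine hki.mul_bdd (c := 1) ?_ ?_
    · apply Measurable.aestronglyMeasurable; fun_prop
    · refine Filter.Eventually.of_forall fun σ => ?_
      rw [norm_real]; exact Real.abs_cos_le_one _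
  have hFs : Summable fun n => ∫ σ in Set.Ioi (0 : ℝ), ‖F n σ‖ := by
    have h0 := ((summable_gz ht (Real.pi * I)).norm.mul_right (∫ σ in Set.Ioi (0 : ℝ), ‖Kk (σ / τ)‖))
    refine Summable.of_nonneg_of_le (fun n => MeasureTheory.integral_nonneg fun σ => norm_nonneg _) (fun n => ?_) h0
    rw [← MeasureTheory.integral_const_mul]
    refine MeasureTheory.integral_mono (hFi n).norm (hki.norm.const_mul _) fun σ => ?_
    simp only [hF, norm_mul]
    gcongr
    rw [norm_real]
    have := Real.abs_cos_le_one (n * σ)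
    calc _ ≤ ‖Kk (σ / τ)‖ * 1 := by gcongr; exact this
      _ = _ := mul_one _
  have h := MeasureTheory.hasSum_integral_of_summable_integral_norm hFi hFs
  have e1 : ∀ n : ℤ, ∫ σ in Set.Ioi (0 : ℝ), F n σ = τ * (exp (-2 * τ * (n : ℂ) ^ 2 + Real.pi * I * n) * hh (τ * n)) := by
    intro n
    simp only [hF]
    rw [MeasureTheory.integral_const_mul, fourier_Kk hK ht hc]
    ring
  have e2 : ∀ σ : ℝ, ∑' n, F n σ = cst τ * (Kk (σ / τ) * Tt τ σ) := by
    intro σ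
    have := (theta_cos ht σ).mul_left (Kk (σ / τ))
    rw [show cst τ * (Kk (σ / τ) * Tt τ σ) = Kk (σ / τ) * (cst τ * Tt τ σ) by ring, ← this.tsum_eq]
    congr 1; ext n; simp only [hF]; ring
  simp_rw [e1, e2] at h
  rw [MeasureTheory.integral_const_mul] at h
  have h2 := h.mul_left τ⁻¹
  have h3 := Bf_eq_int ht (h2.congr_fun (fun n => by field_simp))
  linear_combination τ * h3 + (mul_inv_cancel₀ hτ) * (cst τ * ∫ σ in Set.Ioi (0 : ℝ), Kk (σ / τ) * Tt τ σ)

end Part6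

section Part7

open Complex

lemma re_real_div (x : ℝ) (τ : ℂ) : ((x : ℂ) / τ).re = x * (τ⁻¹).re := by
  rw [div_eq_mul_inv, re_ofReal_mul]

lemma thf_transform {τ : ℂ} (ht : 0 < τ.re) (hρ : 1 ≤ (τ⁻¹).re) : ∃ D : ℂ,
    thf (exp (-τ)) * exp (Real.pi ^ 2 / (8 * τ)) = cst τ * D ∧
    ‖D - (√2 : ℝ) * exp (τ / 8)‖ ≤ 4 * (Real.exp (τ.re / 8) * Real.exp (-(Real.pi ^ 2 * (τ⁻¹).re))) := by
  have hτ : τ ≠ 0 := by rintro rfl; simp at ht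
  have hpi := Real.pi_gt_three
  set ρ := (τ⁻¹).re with hρd
  have h := (thf_eq_int ht).unique (theta_transform ht (Real.pi * I - τ))
  change _ = cst τ * _ at h
  set g : ℤ → ℂ := fun n => exp (-(2 * Real.pi * n + I * (Real.pi * I - τ)) ^ 2 / (8 * τ)) * exp (Real.pi ^ 2 / (8 * τ)) with hg
  have e : ∀ n : ℤ, g n = exp (((-(n * (n - 1) * Real.pi ^ 2 / 2) : ℝ) : ℂ) / τ + τ / 8 + ((2 * n - 1) * Real.pi / 4 : ℝ) * I) := by
    intro n
    simp only [hg]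
    rw [← exp_add]
    congr 1
    push_cast
    field_simp
    ring_nf
    simp only [I_sq, I_pow_four, show (I : ℂ) ^ 3 = -I from I_pow_three]
    ring
  have en : ∀ n : ℤ, ‖g n‖ = Real.exp (τ.re / 8) * Real.exp (-(n * (n - 1) / 2 * (Real.pi ^ 2 * ρ))) := by
    intro n
    rw [e, norm_exp, add_re, add_re, re_real_div, ← Real.exp_add]
    congr 1
    have : (τ / 8).re = τ.re / 8 := by simp
    rw [this, re_ofReal_mul, I_re, ← hρd]
    ring
  have hx : 9 ≤ Real.pi ^ 2 * ρ := by nlinarith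
  set x := Real.pi ^ 2 * ρ with hxd
  have hr : Real.exp (-x) ≤ 1 / 2 := by
    have h1 := Real.add_one_le_exp x
    rw [Real.exp_neg, inv_le_comm₀ (Real.exp_pos _) (by norm_num)]
    linarith
  have key : ∀ j : ℕ, Real.exp (-((j + 2) * (j + 1) / 2 * x)) ≤ Real.exp (-x) * Real.exp (-x) ^ j := by
    intro j
    rw [← Real.exp_nat_mul, ← Real.exp_add]
    apply Real.exp_le_exp.2
    have hj : (0 : ℝ) ≤ j := by positivity
    nlinarith [mul_nonneg hj (by linarith : 0 ≤ x), mul_nonneg (mul_nonneg hj hj) (by linarith : 0 ≤ x)]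
  have hgs : Summable g := by
    apply Summable.mul_right
    by_contra hns
    rw [tsum_eq_zero_of_not_summable hns, mul_zero] at h
    have h2 := gm_mul_thf (norm_q_lt ht)
    rw [h, mul_zero] at h2
    exact zero_ne_one h2
  refine ⟨∑' n, g n, ?_, ?_⟩
  · rw [h, tsum_mul_right]; ring
  · have := tail_two hgs (A := Real.exp (τ.re / 8) * Real.exp (-x)) (r := Real.exp (-x)) (Real.exp_pos _).le hr ?_ ?_
    · have e01 : g 0 + g 1 = (√2 : ℝ) * exp (τ / 8) := by
        rw [e, e, exp_add, exp_add _ (((2 * (1 : ℤ) - 1) * Real.pi / 4 : ℝ) * I)]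
        have a1 : exp (((2 * (0 : ℤ) - 1) * Real.pi / 4 : ℝ) * I) + exp (((2 * (1 : ℤ) - 1) * Real.pi / 4 : ℝ) * I) = (√2 : ℝ) := by
          have c1 := Complex.two_cos (Real.pi / 4 : ℝ)
          rw [← ofReal_cos, Real.cos_pi_div_four] at c1
          have : (√2 : ℝ) = 2 * ((√2 / 2 : ℝ) : ℂ) := by push_cast; ring
          rw [this, c1]
          rw [add_comm]
          congr 2 <;> push_cast <;> ring
        rw [← a1]
        simp only [Int.cast_zero, Int.cast_one, zero_mul, sub_self, mul_zero, zero_div, neg_zero, ofReal_zero, zero_add]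
        ring
      rw [e01] at this
      exact this
    · intro j
      rw [en, mul_assoc]
      gcongr
      refine le_trans (le_of_eq ?_) (key j)
      congr 1; push_cast; ring
    · intro j
      rw [en, mul_assoc]
      gcongr
      refine le_trans (le_of_eq ?_) (key j)
      congr 1; push_cast; ring

lemma main_integral {τ : ℂ} (ht : 0 < τ.re) (hρ : 0 < (τ⁻¹).re) :
    MeasureTheory.Integrable (fun σ : ℝ => exp (-(Real.pi * (σ / τ) / 6)) * exp (-(2 * Real.pi * (1 : ℤ) - (σ + Real.pi)) ^ 2 / (8 * τ))) ∧
    ∫ σ : ℝ, exp (-(Real.pi * (σ / τ) / 6)) * exp (-(2 * Real.pi * (1 : ℤ) - (σ + Real.pi)) ^ 2 / (8 * τ)) =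
      (8 * Real.pi * τ) ^ (1 / 2 : ℂ) * exp (-(Real.pi ^ 2 / (9 * τ))) := by
  have hτ : τ ≠ 0 := by rintro rfl; simp at ht
  have e : ∀ σ : ℝ, exp (-(Real.pi * (σ / τ) / 6)) * exp (-(2 * Real.pi * (1 : ℤ) - (σ + Real.pi)) ^ 2 / (8 * τ)) =
      exp ((((-1 / 8 : ℝ) : ℂ) / τ) * (σ : ℂ) ^ 2 + (Real.pi / (12 * τ)) * σ + (-(Real.pi ^ 2 / (8 * τ)))) := by
    intro σ
    rw [← exp_add]; congr 1; push_cast; field_simp; ring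
  simp_rw [e]
  have hb : (((-1 / 8 : ℝ) : ℂ) / τ).re < 0 := by rw [re_real_div]; linarith
  refine ⟨integrable_cexp_quadratic' hb _ _, ?_⟩
  rw [integral_cexp_quadratic hb]
  congr 2
  · push_cast; field_simp; 
  · push_cast; field_simp; ring

lemma summable_Tt {τ : ℂ} (hρ : 0 < (τ⁻¹).re) (σ : ℝ) :
    Summable fun n : ℤ => exp (-(2 * Real.pi * n - (σ + Real.pi)) ^ 2 / (8 * τ)) := by
  have hτ : τ ≠ 0 := by rintro rfl; simp at hρ
  have hpi := Real.pi_pos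
  have h := summable_gz (τ := ((Real.pi ^ 2 / 4 : ℝ) : ℂ) / τ) (by rw [re_real_div]; positivity) (Real.pi * (σ + Real.pi) / (2 * τ))
  refine (h.mul_left (exp (-(σ + Real.pi) ^ 2 / (8 * τ)))).congr fun n => ?_
  rw [← exp_add]
  congr 1
  push_cast
  field_simp
  ring

lemma norm_Tt_term (τ : ℂ) (σ : ℝ) (n : ℤ) :
    ‖exp (-(2 * Real.pi * n - (σ + Real.pi)) ^ 2 / (8 * τ))‖ = Real.exp (-((2 * Real.pi * n - (σ + Real.pi)) ^ 2 / 8 * (τ⁻¹).re)) := by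
  have : -(2 * Real.pi * n - (σ + Real.pi)) ^ 2 / (8 * τ) = ((-((2 * Real.pi * n - (σ + Real.pi)) ^ 2 / 8) : ℝ) : ℂ) / τ := by
    push_cast; ring
  rw [this, norm_exp, re_real_div]
  congr 1; ring

lemma pointwise_err {K c : ℝ} (hc0 : 0 < c)
    (hcK : ∀ z : ℂ, 0 ≤ z.re → |z.im| ≤ K * z.re → c ≤ ‖1 + exp (-z)‖) {τ : ℂ} (ht : 0 < τ.re)
    (hc : |τ.im| ≤ K * τ.re) (hρ : 1 ≤ (τ⁻¹).re) {σ : ℝ} (hσ : 0 ≤ σ) :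
    ‖Kk (σ / τ) * Tt τ σ - exp (-(Real.pi * (σ / τ) / 6)) * exp (-(2 * Real.pi * (1 : ℤ) - (σ + Real.pi)) ^ 2 / (8 * τ))‖
      ≤ 12 / c * (Real.exp (-(Real.pi ^ 2 / 8 * (τ⁻¹).re)) * Real.exp (-(Real.pi / 12 * (τ⁻¹).re) * σ)) := by
  have hpi := Real.pi_gt_three
  obtain ⟨hρ0, hcone⟩ := inv_cone ht hc
  obtain ⟨k1, k2, k3⟩ := hcone σ hσ
  have b1 := Kk_norm_le hc0 hcK k1 k2
  have b2 := Kk_sub_norm_le hc0 hcK k1 k2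
  rw [k3] at b1 b2
  set ρ := (τ⁻¹).re with hρd
  rw [← Real.exp_add]
  set Ex := Real.exp (-(Real.pi ^ 2 / 8 * ρ) + -(Real.pi / 12 * ρ) * σ) with hEx
  have hEx0 : 0 < Ex := Real.exp_pos _
  set f : ℤ → ℂ := fun n => Kk (σ / τ) * exp (-(2 * Real.pi * n - (σ + Real.pi)) ^ 2 / (8 * τ)) with hf
  have hfs : Summable f := (summable_Tt hρ0 σ).mul_left _
  have hfn : ∀ n, ‖f n‖ ≤ 2 / c * Real.exp (-((Real.pi / 6 * σ + (2 * Real.pi * n - (σ + Real.pi)) ^ 2 / 8) * ρ)) := by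
    intro n
    simp only [hf]
    rw [norm_mul, norm_Tt_term]
    calc _ ≤ 2 / c * Real.exp (-(Real.pi / 6 * (σ * ρ))) * Real.exp (-((2 * Real.pi * n - (σ + Real.pi)) ^ 2 / 8 * ρ)) := by gcongr
      _ = _ := by rw [mul_assoc, ← Real.exp_add]; congr 2; ring
  have hx : 1 ≤ Real.pi ^ 2 / 6 * ρ := by nlinarith
  have hr : Real.exp (-(Real.pi ^ 2 / 6 * ρ)) ≤ 1 / 2 := by
    have h1 := Real.add_one_le_exp (Real.pi ^ 2 / 6 * ρ)
    rw [Real.exp_neg, inv_le_comm₀ (Real.exp_pos _) (by norm_num)]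
    linarith
  have hgen : ∀ (n : ℤ) (j : ℕ), Real.pi / 12 * σ + Real.pi ^ 2 / 8 + j * (Real.pi ^ 2 / 6) ≤ Real.pi / 6 * σ + (2 * Real.pi * n - (σ + Real.pi)) ^ 2 / 8 →
      ‖f n‖ ≤ 2 / c * Ex * Real.exp (-(Real.pi ^ 2 / 6 * ρ)) ^ j := by
    intro n j hnj
    refine (hfn n).trans ?_
    rw [mul_assoc (2 / c) Ex, hEx, ← Real.exp_nat_mul, ← Real.exp_add]
    gcongr
    nlinarith [mul_le_mul_of_nonneg_right hnj hρ0.le]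
  have hps : 0 ≤ Real.pi * σ := by positivity
  have t1 := tail_two hfs (A := 2 / c * Ex) (r := Real.exp (-(Real.pi ^ 2 / 6 * ρ))) (Real.exp_pos _).le hr
    (fun j => hgen _ _ (by
      push_cast
      have hj : (0 : ℝ) ≤ j := by positivity
      nlinarith [sq_nonneg (σ - (2 * j + 3) * Real.pi + Real.pi / 3), sq_nonneg Real.pi]))
    (fun j => hgen _ _ (by
      push_cast
      have hj : (0 : ℝ) ≤ j := by positivity
      have e : (2 * Real.pi * (-((j : ℝ) + 1)) - (σ + Real.pi)) ^ 2 = (σ + (2 * j + 3) * Real.pi) ^ 2 := by ring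
      rw [e]
      nlinarith [mul_nonneg hps hj, mul_nonneg (sq_nonneg Real.pi) hj, mul_nonneg (sq_nonneg Real.pi) (mul_nonneg hj hj), sq_nonneg σ, sq_nonneg Real.pi]))
  have t0 : ‖f 0‖ ≤ 2 / c * Ex := by
    have := hgen 0 0 (by push_cast; nlinarith [sq_nonneg σ])
    simpa using this
  have tm : ‖f 1 - exp (-(Real.pi * (σ / τ) / 6)) * exp (-(2 * Real.pi * (1 : ℤ) - (σ + Real.pi)) ^ 2 / (8 * τ))‖ ≤ 2 / c * Ex := by
    simp only [hf]
    rw [← sub_mul, norm_mul, norm_Tt_term]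
    calc _ ≤ 2 / c * Real.exp (-(5 * Real.pi / 6 * (σ * ρ))) * Real.exp (-((2 * Real.pi * (1 : ℤ) - (σ + Real.pi)) ^ 2 / 8 * ρ)) := by gcongr
      _ ≤ 2 / c * Ex := by
        rw [mul_assoc, ← Real.exp_add, hEx]
        refine mul_le_mul_of_nonneg_left (Real.exp_le_exp.2 ?_) (by positivity)
        push_cast
        have hnj : Real.pi / 12 * σ + Real.pi ^ 2 / 8 ≤ 5 * Real.pi / 6 * σ + (2 * Real.pi * 1 - (σ + Real.pi)) ^ 2 / 8 := by
          nlinarith [sq_nonneg σ]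
        nlinarith [mul_le_mul_of_nonneg_right hnj hρ0.le]
  have hT : Kk (σ / τ) * Tt τ σ = ∑' n, f n := by rw [Tt, ← tsum_mul_left]
  rw [hT]
  set M := exp (-(Real.pi * (σ / τ) / 6)) * exp (-(2 * Real.pi * (1 : ℤ) - (σ + Real.pi)) ^ 2 / (8 * τ))
  calc ‖∑' n, f n - M‖ = ‖(∑' n, f n - (f 0 + f 1)) + f 0 + (f 1 - M)‖ := by congr 1; ring
    _ ≤ 4 * (2 / c * Ex) + 2 / c * Ex + 2 / c * Ex := by
      refine (norm_add_le _ _).trans (add_le_add ((norm_add_le _ _).trans (add_le_add t1 t0)) tm)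
    _ = 12 / c * Ex := by ring

lemma measurable_Tt {K : ℝ} {τ : ℂ} (ht : 0 < τ.re) (hc : |τ.im| ≤ K * τ.re) : Measurable (Tt τ) := by
  obtain ⟨hρ0, hcone⟩ := inv_cone ht hc
  unfold Tt
  refine measurable_of_tendsto_metrizable' (u := (Filter.atTop : Filter (Finset ℤ)))
    (f := fun (s : Finset ℤ) (σ : ℝ) => ∑ n ∈ s, exp (-(2 * Real.pi * n - (σ + Real.pi)) ^ 2 / (8 * τ))) ?_ ?_
  · intro s; fun_prop
  · rw [tendsto_pi_nhds]
    intro σ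
    exact (summable_Tt hρ0 σ).hasSum

lemma integral_err {K c : ℝ} (hc0 : 0 < c) (hc1 : c ≤ 1)
    (hcK : ∀ z : ℂ, 0 ≤ z.re → |z.im| ≤ K * z.re → c ≤ ‖1 + exp (-z)‖) {τ : ℂ} (ht : 0 < τ.re)
    (hc : |τ.im| ≤ K * τ.re) (hρ : 1 ≤ (τ⁻¹).re) :
    ‖(∫ σ in Set.Ioi (0 : ℝ), Kk (σ / τ) * Tt τ σ) - (8 * Real.pi * τ) ^ (1 / 2 : ℂ) * exp (-(Real.pi ^ 2 / (9 * τ)))‖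
      ≤ 100 / c * Real.exp (-(Real.pi ^ 2 / 8 * (τ⁻¹).re)) := by
  have hpi := Real.pi_gt_three
  obtain ⟨hρ0, hcone⟩ := inv_cone ht hc
  obtain ⟨m1, m2⟩ := main_integral ht hρ0
  set ρ := (τ⁻¹).re with hρd
  set M : ℝ → ℂ := fun σ => exp (-(Real.pi * (σ / τ) / 6)) * exp (-(2 * Real.pi * (1 : ℤ) - (σ + Real.pi)) ^ 2 / (8 * τ)) with hM
  have hbi : MeasureTheory.IntegrableOn (fun σ : ℝ => 12 / c * (Real.exp (-(Real.pi ^ 2 / 8 * ρ)) * Real.exp (-(Real.pi / 12 * ρ) * σ))) (Set.Ioi 0) :=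
    ((exp_neg_integrableOn_Ioi 0 (by positivity)).const_mul _).const_mul _
  have hbe : ∀ᵐ σ : ℝ ∂(MeasureTheory.volume.restrict (Set.Ioi (0 : ℝ))), ‖Kk (σ / τ) * Tt τ σ - M σ‖ ≤ 12 / c * (Real.exp (-(Real.pi ^ 2 / 8 * ρ)) * Real.exp (-(Real.pi / 12 * ρ) * σ)) :=
    (MeasureTheory.ae_restrict_iff' measurableSet_Ioi).2 (Filter.Eventually.of_forall fun σ hσ => pointwise_err hc0 hcK ht hc hρ (le_of_lt hσ))
  have hdi : MeasureTheory.IntegrableOn (fun σ : ℝ => Kk (σ / τ) * Tt τ σ - M σ) (Set.Ioi 0) := by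
    refine MeasureTheory.Integrable.mono' hbi ?_ hbe
    have h1 := measurable_Tt ht hc
    have h2 := measurable_Kk τ
    apply Measurable.aestronglyMeasurable
    simp only [hM]
    fun_prop
  have hki : MeasureTheory.IntegrableOn (fun σ : ℝ => Kk (σ / τ) * Tt τ σ) (Set.Ioi 0) := by
    have := hdi.add m1.integrableOn
    refine this.congr (Filter.Eventually.of_forall fun σ => ?_)
    simp
  have i0 : ∫ σ in Set.Ioi (0 : ℝ), Real.exp (-(Real.pi / 12 * ρ) * σ) ≤ 4 := by
    rw [integral_exp_mul_Ioi (by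
      have : 0 < Real.pi / 12 * ρ := by positivity
      linarith)]
    simp only [mul_zero, Real.exp_zero]
    rw [neg_div_neg_eq, div_le_iff₀ (by positivity)]
    nlinarith
  have b1 : ‖∫ σ in Set.Ioi (0 : ℝ), (Kk (σ / τ) * Tt τ σ - M σ)‖ ≤ 12 / c * (Real.exp (-(Real.pi ^ 2 / 8 * ρ)) * 4) := by
    refine (MeasureTheory.norm_integral_le_of_norm_le hbi hbe).trans ?_
    rw [MeasureTheory.integral_const_mul, MeasureTheory.integral_const_mul]
    gcongr
  have b2 : ‖∫ σ in Set.Iic (0 : ℝ), M σ‖ ≤ Real.exp (-(Real.pi ^ 2 / 8 * ρ)) * 4 := by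
    have e : ∫ σ in Set.Iic (0 : ℝ), M σ = ∫ σ in Set.Ioi (0 : ℝ), M (-σ) := by
      rw [integral_comp_neg_Ioi, neg_zero]
    rw [e]
    refine (MeasureTheory.norm_integral_le_of_norm_le (g := fun σ => (Real.exp (-(Real.pi ^ 2 / 8 * ρ)) * Real.exp (-(Real.pi / 12 * ρ) * σ)))
      ((exp_neg_integrableOn_Ioi 0 (by positivity)).const_mul _) ?_).trans ?_
    · refine (MeasureTheory.ae_restrict_iff' measurableSet_Ioi).2 (Filter.Eventually.of_forall fun σ hσ => ?_)
      simp only [hM]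
      have e1 : -(Real.pi * (((-σ : ℝ) : ℂ) / τ) / 6) = -(((-(Real.pi * σ / 6) : ℝ) : ℂ) * τ⁻¹) := by push_cast; ring
      rw [norm_mul, norm_Tt_term, e1, norm_exp_neg_real_mul, ← Real.exp_add, ← Real.exp_add]
      apply Real.exp_le_exp.2
      rw [← hρd]
      push_cast
      have hσ0 : 0 < σ := hσ
      have hnj : Real.pi / 12 * σ + Real.pi ^ 2 / 8 ≤ -(Real.pi * σ / 6) + (2 * Real.pi * 1 - (-σ + Real.pi)) ^ 2 / 8 := by
          nlinarith [sq_nonneg σ, mul_pos (by linarith : 0 < Real.pi) hσ0]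
      nlinarith [mul_le_mul_of_nonneg_right hnj hρ0.le]
    · rw [MeasureTheory.integral_const_mul]
      gcongr
  have hsplit : ∫ σ, M σ = (∫ σ in Set.Iic (0 : ℝ), M σ) + ∫ σ in Set.Ioi (0 : ℝ), M σ :=
    (intervalIntegral.integral_Iic_add_Ioi m1.integrableOn m1.integrableOn).symm
  rw [← m2, hsplit]
  rw [MeasureTheory.integral_sub hki m1.integrableOn] at b1
  calc _ = ‖((∫ σ in Set.Ioi (0 : ℝ), Kk (σ / τ) * Tt τ σ) - ∫ σ in Set.Ioi (0 : ℝ), M σ) - ∫ σ in Set.Iic (0 : ℝ), M σ‖ := by congr 1; ring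
    _ ≤ 12 / c * (Real.exp (-(Real.pi ^ 2 / 8 * ρ)) * 4) + Real.exp (-(Real.pi ^ 2 / 8 * ρ)) * 4 :=
      (norm_sub_le _ _).trans (add_le_add b1 b2)
    _ ≤ 12 / c * (Real.exp (-(Real.pi ^ 2 / 8 * ρ)) * 4) + 1 / c * (Real.exp (-(Real.pi ^ 2 / 8 * ρ)) * 4) := by
      have : 1 ≤ 1 / c := by rw [le_div_iff₀ hc0]; linarith
      have h2 := (Real.exp_pos (-(Real.pi ^ 2 / 8 * ρ)))
      nlinarith
    _ ≤ _ := by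
      have : 0 < 1 / c * Real.exp (-(Real.pi ^ 2 / 8 * ρ)) := by positivity
      have e : 12 / c * (Real.exp (-(Real.pi ^ 2 / 8 * ρ)) * 4) + 1 / c * (Real.exp (-(Real.pi ^ 2 / 8 * ρ)) * 4) = 52 * (1 / c * Real.exp (-(Real.pi ^ 2 / 8 * ρ))) := by ring
      have e2 : 100 / c * Real.exp (-(Real.pi ^ 2 / 8 * ρ)) = 100 * (1 / c * Real.exp (-(Real.pi ^ 2 / 8 * ρ))) := by ring
      rw [e, e2]; linarith

theorem cone_asymp {K : ℝ} (hK : 0 < K) : ∃ C : ℝ, 0 < C ∧ ∀ τ : ℂ, 0 < τ.re → |τ.im| ≤ K * τ.re → 1 ≤ (τ⁻¹).re →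
    ∃ D E : ℂ, Hf (exp (-τ)) * (2 * τ) * D = (8 * Real.pi * τ) ^ (1 / 2 : ℂ) * exp ((Real.pi ^ 2 / 72 : ℝ) / τ) + E ∧
      ‖E‖ ≤ C ∧ ‖D - (√2 : ℝ) * exp (τ / 8)‖ ≤ 4 * (Real.exp (τ.re / 8) * Real.exp (-(Real.pi ^ 2 * (τ⁻¹).re))) := by
  obtain ⟨c, hc0, hc1, hcK⟩ := exists_cone_const K hK
  refine ⟨100 / c, by positivity, fun τ ht hc hρ => ?_⟩
  have hτ : τ ≠ 0 := by rintro rfl; simp at ht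
  obtain ⟨D, hD1, hD2⟩ := thf_transform ht hρ
  have h1 := Hf_mul_thf (norm_q_lt ht)
  have h2 := Bf_integral hK ht hc
  have h3 := integral_err hc0 hc1 hcK ht hc hρ
  set X := ∫ σ in Set.Ioi (0 : ℝ), Kk (σ / τ) * Tt τ σ
  set Y := (8 * Real.pi * τ : ℂ) ^ (1 / 2 : ℂ)
  refine ⟨D, (X - Y * exp (-(Real.pi ^ 2 / (9 * τ)))) * exp (Real.pi ^ 2 / (8 * τ)), ?_, ?_, hD2⟩
  · have e : exp ((Real.pi ^ 2 / 72 : ℝ) / τ) = exp (-(Real.pi ^ 2 / (9 * τ))) * exp (Real.pi ^ 2 / (8 * τ)) := by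
      rw [← exp_add]; congr 1; push_cast; field_simp; ring
    rw [e]
    apply mul_left_cancel₀ (cst_ne ht)
    linear_combination (-(Hf (exp (-τ)) * (2 * τ))) * hD1 + (2 * τ * exp (Real.pi ^ 2 / (8 * τ))) * h1 + exp (Real.pi ^ 2 / (8 * τ)) * h2
  · rw [norm_mul]
    have e : ‖exp (Real.pi ^ 2 / (8 * τ))‖ = Real.exp (Real.pi ^ 2 / 8 * (τ⁻¹).re) := by
      have : (Real.pi : ℂ) ^ 2 / (8 * τ) = ((Real.pi ^ 2 / 8 : ℝ) : ℂ) / τ := by push_cast; field_simp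
      rw [this, norm_exp, re_real_div]
    rw [e]
    calc _ ≤ 100 / c * Real.exp (-(Real.pi ^ 2 / 8 * (τ⁻¹).re)) * Real.exp (Real.pi ^ 2 / 8 * (τ⁻¹).re) := by gcongr
      _ = 100 / c := by rw [mul_assoc, ← Real.exp_add]; simp

end Part7

section Part8

open Complex

/-! ### Part 8 : minor arcs -/

noncomputable def GE (q : ℂ) (n m : ℕ) : ℂ := ∑ j ∈ Finset.range n, (q ^ (2 * j + 2)) ^ m
noncomputable def GO (q : ℂ) (n m : ℕ) : ℂ := ∑ j ∈ Finset.range n, (q ^ (2 * j + 1)) ^ m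
noncomputable def tm (q : ℂ) (n m : ℕ) : ℂ :=
  ((-1) ^ (m + 1) * GO q n m + (zz ^ m + zz⁻¹ ^ m) * GE q n m) / m

lemma tm_succ (q : ℂ) (n m : ℕ) : tm q (n + 1) m = tm q n m +
    ((-1) ^ (m + 1) * (q ^ (2 * n + 1)) ^ m / m + (zz * q ^ (2 * n + 2)) ^ m / m
      + (zz⁻¹ * q ^ (2 * n + 2)) ^ m / m) := by
  simp only [tm, GE, GO, Finset.sum_range_succ, mul_pow]
  ring

lemma Ht_log {q : ℂ} (hq : ‖q‖ < 1) (n : ℕ) :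
    ∃ E, HasSum (tm q n) E ∧ ‖Ht q n‖ = ‖q‖ ^ (n ^ 2) * Real.exp E.re := by
  induction n with
  | zero =>
    refine ⟨0, ?_, by simp [Ht]⟩
    have : tm q 0 = fun _ => 0 := by funext m; simp [tm, GE, GO]
    rw [this]; exact hasSum_zero
  | succ n ih =>
    obtain ⟨E, hE, hn⟩ := ih
    have a1 : ‖q ^ (2 * n + 1)‖ < 1 := norm_pow_lt_one hq (by omega)
    have a2 : ‖q ^ (2 * n + 2)‖ < 1 := norm_pow_lt_one hq (by omega)
    have a3 : ‖zz * q ^ (2 * n + 2)‖ < 1 := by rw [norm_mul, norm_zz, one_mul]; exact a2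
    have a4 : ‖zz⁻¹ * q ^ (2 * n + 2)‖ < 1 := by rw [norm_mul, norm_zz_inv, one_mul]; exact a2
    have h1 := Complex.hasSum_taylorSeries_log a1
    have h2 := Complex.hasSum_taylorSeries_neg_log a3
    have h3 := Complex.hasSum_taylorSeries_neg_log a4
    refine ⟨_, (hE.add ((h1.add h2).add h3)).congr_fun (fun m => tm_succ q n m), ?_⟩
    have n1 : 1 + q ^ (2 * n + 1) ≠ 0 := by
      have := one_sub_ne (c := -1) (by simp) a1
      simpa using this
    have n2 := one_sub_ne norm_zz a2
    have n3 := one_sub_ne norm_zz_inv a2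
    have e : q ^ (4 * n + 4) = (q ^ (2 * n + 2)) ^ 2 := by rw [← pow_mul]; ring_nf
    rw [Ht_succ, norm_mul, hn, rho, e, quad_factor, norm_div, norm_mul (1 - zz * q ^ (2 * n + 2))]
    simp only [add_re, neg_re, Real.exp_add, Real.exp_neg, Complex.log_re]
    rw [Real.exp_log (norm_pos_iff.2 n1), Real.exp_log (norm_pos_iff.2 n2), Real.exp_log (norm_pos_iff.2 n3)]
    have b2 := norm_pos_iff.2 n2
    have b3 := norm_pos_iff.2 n3
    rw [show (n + 1) ^ 2 = n ^ 2 + (2 * n + 1) by ring, pow_add ‖q‖, norm_mul, norm_pow, div_eq_mul_inv, mul_inv]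
    ring

lemma GO_mul (q : ℂ) (n m : ℕ) : GO q n m * q ^ m = GE q n m := by
  rw [GO, GE, Finset.sum_mul]
  refine Finset.sum_congr rfl fun j _ => ?_
  rw [← mul_pow]; congr 1

lemma GE_mul (q : ℂ) (n m : ℕ) : GE q n m * (1 - q ^ (2 * m)) = q ^ (2 * m) * (1 - (q ^ (2 * m)) ^ n) := by
  induction n with
  | zero => simp [GE]
  | succ n ih =>
    rw [GE, Finset.sum_range_succ, ← GE, add_mul, ih]
    have : (q ^ (2 * n + 2)) ^ m = (q ^ (2 * m)) ^ (n + 1) := by rw [← pow_mul, ← pow_mul]; ring_nf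
    rw [this]; ring

lemma oddsum_le {b : ℝ} (hb : 0 < b) (n : ℕ) :
    ∑ j ∈ Finset.range n, Real.exp (-((2 * j + 1) * b)) ≤ 1 / (2 * b) := by
  have h : (∑ j ∈ Finset.range n, Real.exp (-((2 * j + 1) * b))) * (Real.exp b - Real.exp (-b)) = 1 - Real.exp (-(2 * n * b)) := by
    induction n with
    | zero => simp
    | succ n ih =>
      rw [Finset.sum_range_succ, add_mul, ih, mul_sub, ← Real.exp_add, ← Real.exp_add]
      push_cast
      ring_nf
  have h2 : b ≤ Real.sinh b := Real.self_le_sinh_iff.2 hb.le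
  rw [Real.sinh_eq] at h2
  rw [le_div_iff₀ (by positivity)]
  have h3 := Real.exp_pos (-(2 * n * b))
  have h4 : 0 ≤ ∑ j ∈ Finset.range n, Real.exp (-((2 * j + 1) * b)) := Finset.sum_nonneg fun _ _ => (Real.exp_pos _).le
  nlinarith

lemma norm_GO_le {q : ℂ} {t : ℝ} (ht : 0 < t) (hq : ‖q‖ = Real.exp (-t)) (n : ℕ) {m : ℕ} (hm : 1 ≤ m) :
    ‖GO q n m‖ ≤ 1 / (2 * (m * t)) := by
  have hm0 : (0 : ℝ) < m := by exact_mod_cast hm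
  refine le_trans ?_ (oddsum_le (by positivity) n)
  refine (norm_sum_le _ _).trans (Finset.sum_le_sum fun j _ => ?_)
  rw [norm_pow, norm_pow, hq, ← Real.exp_nat_mul, ← Real.exp_nat_mul]
  refine Real.exp_le_exp.2 (le_of_eq ?_)
  push_cast; ring

lemma norm_GE_le {q : ℂ} {t : ℝ} (ht : 0 < t) (hq : ‖q‖ = Real.exp (-t)) (n : ℕ) {m : ℕ} (hm : 1 ≤ m) :
    ‖GE q n m‖ ≤ 1 / (2 * (m * t)) := by
  have hm0 : (0 : ℝ) < m := by exact_mod_cast hm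
  refine le_trans ?_ (oddsum_le (by positivity) n)
  refine (norm_sum_le _ _).trans (Finset.sum_le_sum fun j _ => ?_)
  rw [norm_pow, norm_pow, hq, ← Real.exp_nat_mul, ← Real.exp_nat_mul]
  refine Real.exp_le_exp.2 ?_
  push_cast
  have : 0 < (m : ℝ) * t := by positivity
  nlinarith

lemma norm_cz_le (m : ℕ) : ‖zz ^ m + zz⁻¹ ^ m‖ ≤ 2 := by
  refine (norm_add_le _ _).trans ?_
  rw [norm_pow, norm_pow, norm_zz, norm_zz_inv]; norm_num

lemma norm_tm_le {q : ℂ} {t : ℝ} (ht : 0 < t) (hq : ‖q‖ = Real.exp (-t)) (n : ℕ) {m : ℕ} (hm : 1 ≤ m) :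
    ‖tm q n m‖ ≤ 3 / (2 * t) * (1 / (m : ℝ) ^ 2) := by
  have hm0 : (0 : ℝ) < m := by exact_mod_cast hm
  have h1 := norm_GO_le ht hq n hm
  have h2 := norm_GE_le ht hq n hm
  rw [tm, norm_div, Complex.norm_natCast]
  have h3 : ‖(-1) ^ (m + 1) * GO q n m + (zz ^ m + zz⁻¹ ^ m) * GE q n m‖ ≤ 3 * (1 / (2 * (m * t))) := by
    refine (norm_add_le _ _).trans ?_
    rw [norm_mul, norm_mul, norm_pow, norm_neg, norm_one, one_pow, one_mul]
    have := mul_le_mul (norm_cz_le m) h2 (norm_nonneg _) (by norm_num)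
    linarith
  refine (div_le_div_of_nonneg_right h3 hm0.le).trans (le_of_eq ?_)
  field_simp

lemma re_E_le {q : ℂ} {t : ℝ} (ht : 0 < t) (hq : ‖q‖ = Real.exp (-t)) (n : ℕ) {E : ℂ} (hE : HasSum (tm q n) E) :
    E.re ≤ ∑ m ∈ Finset.range 61, (tm q n m).re + 1 / 40 / t := by
  have h1 : HasSum (fun m => (tm q n m).re) E.re := Complex.hasSum_re hE
  have h2 := (Filter.tendsto_add_atTop_iff_nat 61).2 h1.tendsto_sum_nat
  refine le_of_tendsto h2 (Filter.Eventually.of_forall fun N => ?_)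
  have h3 : ∑ m ∈ Finset.range (N + 61), (tm q n m).re ≤ ∑ m ∈ Finset.range 61, (tm q n m).re
      + 3 / (2 * t) * (1 / 60 - 1 / (60 + N)) := by
    induction N with
    | zero => simp
    | succ N ih =>
      rw [show N + 1 + 61 = (N + 61) + 1 by ring, Finset.sum_range_succ]
      have a := (Complex.re_le_norm _).trans (norm_tm_le ht hq n (m := N + 61) (by omega))
      have b : 1 / (((N + 61 : ℕ) : ℝ)) ^ 2 ≤ 1 / (60 + N) - 1 / (60 + ((N + 1 : ℕ) : ℝ)) := by
        push_cast
        rw [div_sub_div _ _ (by positivity) (by positivity), div_le_div_iff₀ (by positivity) (by positivity)]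
        nlinarith
      have c := mul_le_mul_of_nonneg_left b (show 0 ≤ 3 / (2 * t) by positivity)
      rw [mul_sub] at c ih ⊢
      linarith
  refine h3.trans ?_
  have : 3 / (2 * t) * (1 / 60 - 1 / (60 + (N : ℝ))) ≤ 1 / 40 / t := by
    have : (0 : ℝ) ≤ 1 / (60 + N) := by positivity
    calc _ ≤ 3 / (2 * t) * (1 / 60) := mul_le_mul_of_nonneg_left (by linarith) (by positivity)
      _ = _ := by field_simp; norm_num
  linarith

lemma key_real {A : ℝ} (hA : 0 < A) (B : ℝ) (n : ℕ) :
    -(A ^ 2 + B ^ 2) / 8 ≤ A * (A - Real.exp (-(n * A)) * (A * Real.cos (n * B) - B * Real.sin (n * B))) := by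
  have hpi := Real.pi_gt_three
  wlog hB : 0 ≤ B generalizing B
  · have := this (-B) (by linarith)
    rw [mul_neg, Real.cos_neg, Real.sin_neg] at this
    convert this using 3 <;> ring
  have he0 := Real.exp_pos (-(n * A))
  have he1 : Real.exp (-(n * A)) ≤ 1 := Real.exp_le_one_iff.2 (by have : 0 ≤ (n : ℝ) * A := by positivity
                                                                  linarith)
  by_cases hb : n * B ≤ Real.pi
  · have hs : 0 ≤ Real.sin (n * B) := Real.sin_nonneg_of_nonneg_of_le_pi (by positivity) hb
    have hc := Real.cos_le_one (n * B)
    have h0 : 0 ≤ B * Real.sin (n * B) := by positivity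
    have h1 : Real.exp (-(n * A)) * (A * Real.cos (n * B) - B * Real.sin (n * B)) ≤ A := by
      calc _ ≤ Real.exp (-(n * A)) * A := mul_le_mul_of_nonneg_left (by nlinarith) he0.le
        _ ≤ 1 * A := by gcongr
        _ = A := one_mul _
    have : 0 ≤ A * (A - Real.exp (-(n * A)) * (A * Real.cos (n * B) - B * Real.sin (n * B))) :=
      mul_nonneg hA.le (by linarith)
    nlinarith [sq_nonneg A, sq_nonneg B]
  · push Not at hb
    have hB0 : 0 < B := by
      rcases hB.eq_or_lt with h | h
      · rw [← h] at hb; simp at hb; linarith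
      · exact h
    have ha : 3 * A / B ≤ n * A := by
      rw [div_le_iff₀ hB0]; nlinarith
    have he : Real.exp (-(n * A)) * (B + 3 * A) ≤ B := by
      have h1 := Real.add_one_le_exp (n * A)
      have h2 : Real.exp (-(n * A)) * Real.exp (n * A) = 1 := by rw [← Real.exp_add]; simp
      have h3 : B + 3 * A ≤ B * Real.exp (n * A) := by
        calc B + 3 * A = B * (3 * A / B + 1) := by field_simp; ring
          _ ≤ _ := mul_le_mul_of_nonneg_left (by linarith) hB0.le
      nlinarith
    set R := √(A ^ 2 + B ^ 2) with hR
    have hR0 : 0 ≤ R := Real.sqrt_nonneg _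
    have hR2 : R ^ 2 = A ^ 2 + B ^ 2 := Real.sq_sqrt (by positivity)
    have hcs : A * Real.cos (n * B) - B * Real.sin (n * B) ≤ R := by
      refine Real.le_sqrt_of_sq_le ?_
      nlinarith [sq_nonneg (A * Real.sin (n * B) + B * Real.cos (n * B)), Real.sin_sq_add_cos_sq (n * B)]
    have hRB : R * B ≤ B ^ 2 + A ^ 2 / 2 := by
      refine abs_le_of_sq_le_sq' ?_ (by positivity) |>.2
      rw [mul_pow, hR2]
      nlinarith [sq_nonneg (A ^ 2)]
    have h5 : Real.exp (-(n * A)) * (A * Real.cos (n * B) - B * Real.sin (n * B)) * (B + 3 * A) ≤ B ^ 2 + A ^ 2 / 2 := by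
      calc _ = (Real.exp (-(n * A)) * (B + 3 * A)) * (A * Real.cos (n * B) - B * Real.sin (n * B)) := by ring
        _ ≤ (Real.exp (-(n * A)) * (B + 3 * A)) * R := mul_le_mul_of_nonneg_left hcs (by positivity)
        _ ≤ B * R := by gcongr
        _ ≤ _ := by linarith
    set Y := Real.exp (-(n * A)) * (A * Real.cos (n * B) - B * Real.sin (n * B)) with hY
    have h6 : 0 ≤ (A * (A - Y) - -(A ^ 2 + B ^ 2) / 8) * (B + 3 * A) := by
      have h7 : 0 ≤ B * (B ^ 2 - 5 * A * B + 9 * A ^ 2) := mul_nonneg hB (by nlinarith [sq_nonneg (2 * B - 5 * A), sq_nonneg A])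
      have h8 : 0 < A ^ 3 := by positivity
      have h9 := mul_le_mul_of_nonneg_left h5 hA.le
      nlinarith
    have := nonneg_of_mul_nonneg_left h6 (by positivity)
    linarith

lemma inv_exp_sub {z : ℂ} (hz : ‖z‖ ≤ 1 / 2) (hz0 : z ≠ 0) :
    ‖z‖ / 2 ≤ ‖exp z - 1‖ ∧ ‖1 / (exp z - 1) - 1 / z‖ ≤ 2 := by
  have h := Complex.norm_exp_sub_one_sub_id_le (x := z) (by linarith)
  have hp := norm_pos_iff.2 hz0
  have h1 : ‖z‖ / 2 ≤ ‖exp z - 1‖ := by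
    have := norm_sub_norm_le z (z - (exp z - 1))
    rw [sub_sub_cancel, norm_sub_rev z] at this
    nlinarith
  refine ⟨h1, ?_⟩
  have hne : exp z - 1 ≠ 0 := norm_pos_iff.1 (by linarith)
  rw [div_sub_div _ _ hne hz0, norm_div, norm_mul, div_le_iff₀ (by positivity)]
  have e : ‖1 * z - (exp z - 1) * 1‖ = ‖exp z - 1 - z‖ := by rw [one_mul, mul_one, norm_sub_rev]
  rw [e]
  nlinarith

/-- lower bound for the real part near a resonance. -/
lemma re_geom_ge {z G : ℂ} (n : ℕ) (hA : 0 < z.re) (hz : ‖z‖ ≤ 1 / 2) (hG : G * (exp z - 1) = 1 - exp (-z) ^ n) :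
    -1 / 8 - 4 * z.re ≤ z.re * G.re := by
  have hz0 : z ≠ 0 := by rintro rfl; simp at hA
  obtain ⟨h1, h2⟩ := inv_exp_sub hz hz0
  have hp := norm_pos_iff.2 hz0
  have hne : exp z - 1 ≠ 0 := norm_pos_iff.1 (by linarith)
  set x := exp (-z) ^ n with hx
  have hx1 : ‖1 - x‖ ≤ 2 := by
    refine (norm_sub_le _ _).trans ?_
    have : ‖x‖ ≤ 1 := by
      rw [hx, norm_pow, Complex.norm_exp]
      exact pow_le_one₀ (Real.exp_pos _).le (Real.exp_le_one_iff.2 (by simp; exact hA.le))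
    rw [norm_one]; linarith
  have h3 : G = (1 - x) * (1 / z) + (1 - x) * (1 / (exp z - 1) - 1 / z) := by
    rw [← hG]; field_simp; ring
  have h4 : ‖(1 - x) * (1 / (exp z - 1) - 1 / z)‖ ≤ 4 := by
    rw [norm_mul]
    have := mul_le_mul hx1 h2 (norm_nonneg _) (by norm_num)
    linarith
  have h5 := (abs_le.1 ((Complex.abs_re_le_norm _).trans h4)).1
  have hxe : x = exp ((-(n * z.re) : ℝ) + (-(n * z.im) : ℝ) * I) := by
    rw [hx, ← Complex.exp_nat_mul]; congr 1
    apply Complex.ext <;> simp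
  have h6 : ((1 - x) * (1 / z)).re * (z.re ^ 2 + z.im ^ 2) =
      z.re - Real.exp (-(n * z.re)) * (z.re * Real.cos (n * -z.im) - -z.im * Real.sin (n * -z.im)) := by
    have hns : z.re ^ 2 + z.im ^ 2 ≠ 0 := by positivity
    have hx2 : x.re = Real.exp (-(n * z.re)) * Real.cos (n * -z.im) := by
      rw [hxe, Complex.exp_re]; simp
    have hx3 : x.im = Real.exp (-(n * z.re)) * Real.sin (n * -z.im) := by
      rw [hxe, Complex.exp_im]; simp
    rw [one_div, mul_re, inv_re, inv_im, sub_re, sub_im, one_re, one_im, hx2, hx3, normSq_apply, ← sq, ← sq]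
    field_simp
    ring
  have h7 := key_real hA (-z.im) n
  rw [← h6, neg_sq] at h7
  have hns : 0 < z.re ^ 2 + z.im ^ 2 := by positivity
  have h8 : -1 / 8 ≤ z.re * ((1 - x) * (1 / z)).re := by
    have : 0 ≤ (z.re * ((1 - x) * (1 / z)).re + 1 / 8) * (z.re ^ 2 + z.im ^ 2) := by linarith
    have := nonneg_of_mul_nonneg_left this hns
    linarith
  rw [h3, add_re, mul_add]
  nlinarith

end Part8

section Part9

open Complex

noncomputable def qq (p : ℝ × ℝ) : ℂ := exp (-((p.1 : ℂ) - p.2 * I))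

lemma norm_qq (p : ℝ × ℝ) : ‖qq p‖ = Real.exp (-p.1) := by
  rw [qq, Complex.norm_exp]; simp

lemma qq_ne (p : ℝ × ℝ) : qq p ≠ 0 := Complex.exp_ne_zero _

lemma continuous_qq : Continuous qq := by
  unfold qq; fun_prop

lemma qq_zero (φ : ℝ) : qq (0, φ) = exp (φ * I) := by simp [qq]

def cz (m : ℕ) : ℤ :=
  if m % 6 = 0 then 2 else if m % 6 = 1 then 1 else if m % 6 = 2 then -1 else
    if m % 6 = 3 then -2 else if m % 6 = 4 then -1 else 1

lemma cz_eq (m : ℕ) : zz ^ m + zz⁻¹ ^ m = cz m := by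
  have h6 : ∀ x : ℂ, x ^ 6 = 1 → x ^ m = x ^ (m % 6) := by
    intro x hx
    conv_lhs => rw [← Nat.div_add_mod m 6, pow_add, pow_mul, hx, one_pow, one_mul]
  rw [h6 zz zz_six, h6 zz⁻¹ (by rw [inv_pow, zz_six, inv_one]), cz]
  have h := zz_quad
  have h3 := zz_cube
  have hr : m % 6 < 6 := Nat.mod_lt _ (by norm_num)
  rw [zz_inv]
  generalize m % 6 = r at hr
  interval_cases r
  · norm_num
  · norm_num
  · norm_num; linear_combination 2 * h
  · norm_num; linear_combination 3 * h
  · norm_num; linear_combination (2 * zz ^ 2 - 2 * zz + 2) * h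
  · norm_num; linear_combination (5 * zz ^ 2 - 5 * zz) * h

lemma abs_cz_le (m : ℕ) : |(cz m : ℝ)| ≤ 2 := by
  rw [cz]; split_ifs <;> norm_num

lemma GO_eq {q : ℂ} (hq : q ≠ 0) (n m : ℕ) : GO q n m = q⁻¹ ^ m * GE q n m := by
  rw [← GO_mul, inv_pow]; field_simp

lemma tm_eq {q : ℂ} (hq : q ≠ 0) (n m : ℕ) : tm q n m = ((-1) ^ (m + 1) * q⁻¹ ^ m + cz m) * GE q n m / m := by
  rw [tm, GO_eq hq, cz_eq]; ring

lemma tm_nonres {m : ℕ} (hm : 1 ≤ m) {φ0 : ℝ} (hw : exp (φ0 * I) ^ (2 * m) ≠ 1) {η : ℝ} (hη : 0 < η) :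
    ∀ᶠ p in nhds ((0 : ℝ), φ0), 0 < p.1 → ∀ n, p.1 * (tm (qq p) n m).re ≤ η := by
  have hm0 : (0 : ℝ) < m := by exact_mod_cast hm
  have hm1 : (1 : ℝ) ≤ m := by exact_mod_cast hm
  have hc : ContinuousAt (fun p : ℝ × ℝ => p.1 * ((‖qq p‖⁻¹ ^ m + 2) * (2 / ‖1 - qq p ^ (2 * m)‖))) ((0 : ℝ), φ0) := by
    have h1 := continuous_qq.continuousAt (x := ((0 : ℝ), φ0))
    have h2 : ‖qq ((0 : ℝ), φ0)‖ ≠ 0 := norm_ne_zero_iff.2 (qq_ne _)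
    have h3 : ‖1 - qq ((0 : ℝ), φ0) ^ (2 * m)‖ ≠ 0 := by
      rw [norm_ne_zero_iff, qq_zero, sub_ne_zero]; exact hw.symm
    fun_prop (disch := assumption)
  have hev := hc.eventually (gt_mem_nhds (show (0 : ℝ) * _ < η by rw [zero_mul]; exact hη))
  filter_upwards [hev] with p hp ht n
  have hq1 : ‖qq p‖ < 1 := by rw [norm_qq]; exact Real.exp_zero ▸ Real.exp_lt_exp.2 (by linarith)
  have hx : ‖qq p ^ (2 * m)‖ < 1 := norm_pow_lt_one hq1 (by omega)
  have hne : 1 - qq p ^ (2 * m) ≠ 0 := by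
    have := one_sub_ne (c := 1) (by simp) hx
    simpa using this
  have hGE : ‖GE (qq p) n m‖ ≤ 2 / ‖1 - qq p ^ (2 * m)‖ := by
    rw [le_div_iff₀ (norm_pos_iff.2 hne), ← norm_mul, GE_mul, norm_mul]
    have h1 : ‖1 - (qq p ^ (2 * m)) ^ n‖ ≤ 2 := by
      refine (norm_sub_le _ _).trans ?_
      rw [norm_one, norm_pow]
      have := pow_le_one₀ (n := n) (norm_nonneg _) hx.le
      linarith
    nlinarith [norm_nonneg (qq p ^ (2 * m)), norm_nonneg (1 - (qq p ^ (2 * m)) ^ n)]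
  have h2 : ‖((-1) ^ (m + 1) * (qq p)⁻¹ ^ m + cz m : ℂ)‖ ≤ ‖qq p‖⁻¹ ^ m + 2 := by
    refine (norm_add_le _ _).trans ?_
    have : ‖(cz m : ℂ)‖ ≤ 2 := by rw [← cz_eq]; exact norm_cz_le m
    simp only [norm_mul, norm_pow, norm_neg, norm_one, one_pow, one_mul, norm_inv]
    linarith
  have h3 : ‖tm (qq p) n m‖ ≤ (‖qq p‖⁻¹ ^ m + 2) * (2 / ‖1 - qq p ^ (2 * m)‖) := by
    rw [tm_eq (qq_ne p), norm_div, norm_mul, Complex.norm_natCast]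
    refine (div_le_self (by positivity) hm1).trans ?_
    exact mul_le_mul h2 hGE (norm_nonneg _) (by positivity)
  exact (mul_le_mul_of_nonneg_left ((Complex.re_le_norm _).trans h3) ht.le).trans hp.le

lemma tm_zero {m : ℕ} (hm : 1 ≤ m) :
    ∀ᶠ p in nhds ((0 : ℝ), (0 : ℝ)), 0 < p.1 → 8000 * p.1 ≤ |p.2| → ∀ n, p.1 * (tm (qq p) n m).re ≤ 1 / 1000 := by
  have hm0 : (0 : ℝ) < m := by exact_mod_cast hm
  have hm1 : (1 : ℝ) ≤ m := by exact_mod_cast hm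
  have hc1 : ContinuousAt (fun p : ℝ × ℝ => ‖qq p‖⁻¹ ^ m) ((0 : ℝ), (0 : ℝ)) := by
    have h1 := continuous_qq.continuousAt (x := ((0 : ℝ), (0 : ℝ)))
    have h2 : ‖qq ((0 : ℝ), (0 : ℝ))‖ ≠ 0 := norm_ne_zero_iff.2 (qq_ne _)
    fun_prop (disch := assumption)
  have hc2 : ContinuousAt (fun p : ℝ × ℝ => ‖2 * (m : ℂ) * (p.1 - p.2 * I)‖) ((0 : ℝ), (0 : ℝ)) := by fun_prop
  have hev1 := hc1.eventually (gt_mem_nhds (show _ < (2 : ℝ) by dsimp only; rw [qq_zero]; simp))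
  have hev2 := hc2.eventually (gt_mem_nhds (show _ < (1 / 2 : ℝ) by simp))
  filter_upwards [hev1, hev2] with p h1 h2 ht hK n
  set z : ℂ := 2 * (m : ℂ) * (p.1 - p.2 * I) with hz
  have hzre : z.re = 2 * m * p.1 := by
    rw [hz, show (2 * (m : ℂ)) = ((2 * m : ℝ) : ℂ) by push_cast; ring, re_ofReal_mul]; simp
  have hzim : z.im = 2 * m * (-p.2) := by
    rw [hz, show (2 * (m : ℂ)) = ((2 * m : ℝ) : ℂ) by push_cast; ring, im_ofReal_mul]; simp
  have hA : 0 < z.re := by rw [hzre]; positivity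
  have hz0 : z ≠ 0 := by intro h; rw [h] at hA; simp at hA
  have hxe : qq p ^ (2 * m) = exp (-z) := by
    rw [qq, ← Complex.exp_nat_mul, hz]; congr 1; push_cast; ring
  have hq1 : ‖qq p‖ < 1 := by rw [norm_qq]; exact Real.exp_zero ▸ Real.exp_lt_exp.2 (by linarith)
  have hx : ‖qq p ^ (2 * m)‖ < 1 := norm_pow_lt_one hq1 (by omega)
  have hG : GE (qq p) n m * (exp z - 1) = 1 - exp (-z) ^ n := by
    have := GE_mul (qq p) n m
    rw [hxe] at this
    have e : exp z * exp (-z) = 1 := by rw [← exp_add]; simp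
    linear_combination exp z * this + (GE (qq p) n m + 1 - exp (-z) ^ n) * e
  have hzn : 2 * m * |p.2| ≤ ‖z‖ := by
    refine le_trans (le_of_eq ?_) (Complex.abs_im_le_norm z)
    rw [hzim, abs_mul, abs_neg, abs_of_pos (show (0 : ℝ) < 2 * m by positivity)]
  have h3 := (inv_exp_sub h2.le hz0).1
  have hGE : ‖GE (qq p) n m‖ * (m * |p.2|) ≤ 2 := by
    have h4 : ‖1 - exp (-z) ^ n‖ ≤ 2 := by
      refine (norm_sub_le _ _).trans ?_
      rw [norm_one, norm_pow, ← hxe]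
      have := pow_le_one₀ (n := n) (norm_nonneg _) hx.le
      linarith
    rw [← hG, norm_mul] at h4
    refine le_trans (mul_le_mul_of_nonneg_left ?_ (norm_nonneg _)) h4
    linarith
  have hGE2 : p.1 * ‖GE (qq p) n m‖ ≤ 2 / 8000 := by
    have h5 : ‖GE (qq p) n m‖ * (8000 * p.1) ≤ ‖GE (qq p) n m‖ * (m * |p.2|) := by
      refine mul_le_mul_of_nonneg_left ?_ (norm_nonneg _)
      nlinarith [abs_nonneg p.2]
    linarith
  have h6 : ‖((-1) ^ (m + 1) * (qq p)⁻¹ ^ m + cz m : ℂ)‖ ≤ 4 := by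
    refine (norm_add_le _ _).trans ?_
    have : ‖(cz m : ℂ)‖ ≤ 2 := by rw [← cz_eq]; exact norm_cz_le m
    simp only [norm_mul, norm_pow, norm_neg, norm_one, one_pow, one_mul, norm_inv]
    linarith
  have h7 : ‖tm (qq p) n m‖ ≤ 4 * ‖GE (qq p) n m‖ := by
    rw [tm_eq (qq_ne p), norm_div, norm_mul, Complex.norm_natCast]
    refine (div_le_self (by positivity) hm1).trans ?_
    gcongr
  have h8 := mul_le_mul_of_nonneg_left ((Complex.re_le_norm _).trans h7) ht.le
  linarith

lemma tm_res {m : ℕ} (hm : 1 ≤ m) {φ0 : ℝ} {ε : ℤ} (hε : ε = 1 ∨ ε = -1) (hw : exp (φ0 * I) ^ m = ε)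
    {η : ℝ} (hη : 0 < η) {d : ℝ} (hd : d = (-1) ^ (m + 1) * (ε : ℝ) + cz m) :
    ∀ᶠ p in nhds ((0 : ℝ), φ0), 0 < p.1 → ∀ n, p.1 * (tm (qq p) n m).re ≤ max d (-d / 8) / (2 * m ^ 2) + η := by
  have hm0 : (0 : ℝ) < m := by exact_mod_cast hm
  have hm1 : (1 : ℝ) ≤ m := by exact_mod_cast hm
  have hε2 : (ε : ℂ) * ε = 1 := by rcases hε with h | h <;> rw [h] <;> norm_num
  have hdabs : |d| ≤ 3 := by
    rw [hd]
    refine (abs_add_le _ _).trans ?_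
    have := abs_cz_le m
    have h1 : |(-1) ^ (m + 1) * (ε : ℝ)| = 1 := by
      rw [abs_mul, abs_pow]; rcases hε with h | h <;> rw [h] <;> norm_num
    linarith
  have hc1 : ContinuousAt (fun p : ℝ × ℝ => 12 * m * p.1 + ‖(qq p)⁻¹ ^ m - ε‖) ((0 : ℝ), φ0) := by
    have h1 := continuous_qq.continuousAt (x := ((0 : ℝ), φ0))
    have h2 : qq ((0 : ℝ), φ0) ≠ 0 := qq_ne _
    fun_prop (disch := assumption)
  have hc2 : ContinuousAt (fun p : ℝ × ℝ => ‖2 * (m : ℂ) * (p.1 - (p.2 - φ0) * I)‖) ((0 : ℝ), φ0) := by fun_prop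
  have hev1 := hc1.eventually (gt_mem_nhds (show _ < η by
    dsimp only; rw [qq_zero, inv_pow, hw, show ((ε : ℂ))⁻¹ = ε from inv_eq_of_mul_eq_one_right hε2]; simpa using hη))
  have hev2 := hc2.eventually (gt_mem_nhds (show _ < (1 / 2 : ℝ) by simp))
  filter_upwards [hev1, hev2] with p h1 h2 ht n
  set z : ℂ := 2 * (m : ℂ) * (p.1 - (p.2 - φ0) * I) with hz
  have hzre : z.re = 2 * m * p.1 := by
    rw [hz, show (2 * (m : ℂ)) = ((2 * m : ℝ) : ℂ) by push_cast; ring, re_ofReal_mul]; simp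
  have hA : 0 < z.re := by rw [hzre]; positivity
  have hxe : qq p ^ (2 * m) = exp (-z) := by
    have : exp (φ0 * I) ^ (2 * m) = 1 := by rw [mul_comm 2 m, pow_mul, hw, sq, hε2]
    rw [← mul_one (exp (-z)), ← this, ← Complex.exp_nat_mul, ← Complex.exp_add, qq, ← Complex.exp_nat_mul, hz]
    congr 1; push_cast; ring
  have hG : GE (qq p) n m * (exp z - 1) = 1 - exp (-z) ^ n := by
    have := GE_mul (qq p) n m
    rw [hxe] at this
    have e : exp z * exp (-z) = 1 := by rw [← exp_add]; simp
    linear_combination exp z * this + (GE (qq p) n m + 1 - exp (-z) ^ n) * e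
  have h3 := re_geom_ge n hA h2.le hG
  rw [hzre] at h3
  have h4 := norm_GE_le ht (norm_qq p) n hm
  rw [le_div_iff₀ (by positivity)] at h4
  set G := GE (qq p) n m with hGd
  have h5 : 2 * m * p.1 * G.re ≤ 1 := by
    have := Complex.re_le_norm G
    nlinarith [mul_pos hm0 ht]
  set δ := ‖(qq p)⁻¹ ^ m - ε‖ with hδ
  have e1 : tm (qq p) n m = ((d : ℝ) * G + (-1) ^ (m + 1) * ((qq p)⁻¹ ^ m - ε) * G) / (m : ℝ) := by
    rw [tm_eq (qq_ne p), hd]; push_cast; ring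
  have h6 : ((-1) ^ (m + 1) * ((qq p)⁻¹ ^ m - ε) * G).re ≤ δ * ‖G‖ := by
    refine (Complex.re_le_norm _).trans (le_of_eq ?_)
    simp only [norm_mul, norm_pow, norm_neg, norm_one, one_pow, one_mul, hδ]
  have h7 : p.1 * (tm (qq p) n m).re * (2 * m ^ 2) ≤ d * (2 * m * p.1 * G.re) + δ := by
    rw [e1, div_ofReal_re, add_re, re_ofReal_mul]
    have hδ0 : 0 ≤ δ := norm_nonneg _
    have : (2 * m * p.1) * ((-1) ^ (m + 1) * ((qq p)⁻¹ ^ m - ε) * G).re ≤ δ * 1 := by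
      refine (mul_le_mul_of_nonneg_left h6 (by positivity)).trans ?_
      calc _ = δ * (‖G‖ * (2 * (m * p.1))) := by ring
        _ ≤ δ * 1 := mul_le_mul_of_nonneg_left h4 hδ0
    have e2 : p.1 * ((d * G.re + ((-1) ^ (m + 1) * ((qq p)⁻¹ ^ m - ε) * G).re) / m) * (2 * (m : ℝ) ^ 2)
      = d * (2 * m * p.1 * G.re) + (2 * m * p.1) * ((-1) ^ (m + 1) * ((qq p)⁻¹ ^ m - ε) * G).re := by
      field_simp
    rw [e2]; linarith
  have h8 : d * (2 * m * p.1 * G.re) ≤ max d (-d / 8) + 24 * m * p.1 := by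
    rcases le_total 0 d with h | h
    · have := le_max_left d (-d / 8)
      have : 0 ≤ 24 * m * p.1 := by positivity
      nlinarith
    · have := le_max_right d (-d / 8)
      have h9 : -d ≤ 3 := by rw [abs_le] at hdabs; linarith
      have : 0 < m * p.1 := by positivity
      nlinarith
  have h10 : (0 : ℝ) < 2 * m ^ 2 := by positivity
  rw [← sub_le_iff_le_add, le_div_iff₀ h10, sub_mul]
  have h11 : 12 * m * p.1 + δ ≤ η := h1.le
  have h12 : (2 : ℝ) ≤ 2 * m ^ 2 := by nlinarith
  have h13 : η * 2 ≤ η * (2 * m ^ 2) := by gcongr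
  have hδ0 : 0 ≤ δ := norm_nonneg _
  linarith

end Part9

section Part10

open Complex

def Wd (k : ℕ) (s : ℤ) (m : ℕ) : ℤ := (-1) ^ (m + 1) * s ^ (m / k) + cz m

def Wq (k : ℕ) (s : ℤ) (m : ℕ) : ℚ :=
  if k ∣ m then max (Wd k s m : ℚ) (-(Wd k s m : ℚ) / 8) / (2 * m ^ 2) else 0

set_option maxRecDepth 100000 in
lemma Wq_sum : ∀ k ∈ Finset.range 61, ∀ s ∈ ({1, -1} : Finset ℤ), (s = -1 ∨ (k ≠ 1 ∧ k ≠ 2 ∧ k ≠ 4)) →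
    ∑ m ∈ Finset.range 61, Wq k s m ≤ 1 / 10 := by
  decide +kernel

lemma tm_m0 (q : ℂ) (n : ℕ) : tm q n 0 = 0 := by simp [tm]

lemma exists_V {φ0 : ℝ} (hw : exp (φ0 * I) ≠ 1) : ∃ V : ℕ → ℝ, (∀ m ∈ Finset.range 61,
    ∀ᶠ p in nhds ((0 : ℝ), φ0), 0 < p.1 → ∀ n, p.1 * (tm (qq p) n m).re ≤ V m + 1 / 30000) ∧
    ∑ m ∈ Finset.range 61, V m ≤ 1 / 10 := by
  set w := exp (φ0 * I) with hwd
  set k := orderOf (w ^ 2) with hk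
  have hkm : ∀ m, k ∣ m ↔ w ^ (2 * m) = 1 := by
    intro m; rw [hk, orderOf_dvd_iff_pow_eq_one, pow_mul]
  have h30 : (0 : ℝ) < 1 / 30000 := by norm_num
  by_cases hk61 : k = 0 ∨ 61 ≤ k
  · refine ⟨fun _ => 0, fun m hm => ?_, by simp⟩
    rw [Finset.mem_range] at hm
    rcases Nat.eq_zero_or_pos m with rfl | hm1
    · simp only [tm_m0]
      exact Filter.Eventually.of_forall fun p _ n => by simp
    · have : w ^ (2 * m) ≠ 1 := by
        rw [Ne, ← hkm]
        intro h
        have := Nat.le_of_dvd hm1 h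
        rcases hk61 with h1 | h1
        · rw [h1] at h; simp at h; omega
        · omega
      simpa using tm_nonres hm1 this h30
  · push Not at hk61
    have hk0 : 0 < k := Nat.pos_of_ne_zero hk61.1
    have hs : ∃ s : ℤ, (s = 1 ∨ s = -1) ∧ w ^ k = s := by
      have h1 : w ^ (2 * k) = 1 := (hkm k).1 dvd_rfl
      have h2 : (w ^ k) ^ 2 = 1 := by rw [← pow_mul, mul_comm]; exact h1
      rcases mul_self_eq_one_iff.1 ((sq (w ^ k)).symm.trans h2) with h | h
      · exact ⟨1, Or.inl rfl, by simpa using h⟩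
      · exact ⟨-1, Or.inr rfl, by simpa using h⟩
    obtain ⟨s, hs1, hs⟩ := hs
    have hcond : s = -1 ∨ (k ≠ 1 ∧ k ≠ 2 ∧ k ≠ 4) := by
      rcases hs1 with rfl | h
      · right
        rw [Int.cast_one] at hs
        refine ⟨fun h => ?_, fun h => ?_, fun h => ?_⟩
        · rw [h, pow_one] at hs; exact hw hs
        · rw [h] at hs
          have := (hkm 1).2 (by simpa using hs)
          rw [h] at this; norm_num at this
        · rw [h] at hs
          have := (hkm 2).2 (by simpa using hs)
          rw [h] at this; norm_num at this
      · exact Or.inl h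
    refine ⟨fun m => ((Wq k s m : ℚ) : ℝ), fun m hm => ?_, ?_⟩
    · rw [Finset.mem_range] at hm
      rcases Nat.eq_zero_or_pos m with rfl | hm1
      · simp only [tm_m0]
        refine Filter.Eventually.of_forall fun p _ n => ?_
        simp [Wq]
      · by_cases hd : k ∣ m
        · have e1 : w ^ m = ((s ^ (m / k) : ℤ) : ℂ) := by
            rw [Int.cast_pow, ← hs, ← pow_mul, Nat.mul_div_cancel' hd]
          have e2 : s ^ (m / k) = 1 ∨ s ^ (m / k) = -1 := by
            rcases hs1 with rfl | rfl
            · left; simp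
            · exact neg_one_pow_eq_or ℤ _
          have := tm_res hm1 e2 e1 h30 (d := (Wd k s m : ℝ)) (by rw [Wd]; push_cast; ring)
          filter_upwards [this] with p hp ht n
          refine (hp ht n).trans (le_of_eq ?_)
          simp only [Wq, if_pos hd]
          push_cast
          ring
        · have := tm_nonres hm1 (mt (hkm m).2 hd) h30
          simpa [Wq, hd] using this
    · have := Wq_sum k (Finset.mem_range.2 hk61.2) s (by simpa using hs1) hcond
      have h2 : ((∑ m ∈ Finset.range 61, Wq k s m : ℚ) : ℝ) ≤ ((1 / 10 : ℚ) : ℝ) := by exact_mod_cast this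
      push_cast at h2
      exact h2

lemma local_ev {φ0 : ℝ} (hφ : φ0 ∈ Set.Icc (-Real.pi) Real.pi) :
    ∀ᶠ p in nhds ((0 : ℝ), φ0), 0 < p.1 → 8000 * p.1 ≤ |p.2| → ∀ n,
      p.1 * ∑ m ∈ Finset.range 61, (tm (qq p) n m).re ≤ 103 / 1000 := by
  by_cases hw : exp (φ0 * I) = 1
  · have h0 : φ0 = 0 := by
      rw [Complex.exp_eq_one_iff] at hw
      obtain ⟨n, hn⟩ := hw
      have h1 : φ0 = n * (2 * Real.pi) := by
        have := congrArg Complex.im hn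
        simpa using this
      have hpi := Real.pi_pos
      have h2 : n = 0 := by
        have a : (n : ℝ) < 1 := by
          by_contra h; push Not at h; nlinarith [hφ.2]
        have b : (-1 : ℝ) < n := by
          by_contra h; push Not at h; nlinarith [hφ.1]
        have a' : n < 1 := by exact_mod_cast a
        have b' : -1 < n := by exact_mod_cast b
        omega
      rw [h1, h2]; simp
    rw [h0]
    have h1 : ∀ m ∈ Finset.range 61, ∀ᶠ p in nhds ((0 : ℝ), (0 : ℝ)), 0 < p.1 → 8000 * p.1 ≤ |p.2| →
        ∀ n, p.1 * (tm (qq p) n m).re ≤ 1 / 1000 := by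
      intro m _
      rcases Nat.eq_zero_or_pos m with rfl | hm1
      · simp only [tm_m0]
        exact Filter.Eventually.of_forall fun p _ _ n => by simp
      · exact tm_zero hm1
    filter_upwards [(Filter.eventually_all_finset _).2 h1] with p hp ht hK n
    rw [Finset.mul_sum]
    refine (Finset.sum_le_sum fun m hm => hp m hm ht hK n).trans ?_
    norm_num
  · obtain ⟨V, h1, h2⟩ := exists_V hw
    filter_upwards [(Filter.eventually_all_finset _).2 h1] with p hp ht hK n
    rw [Finset.mul_sum]
    refine (Finset.sum_le_sum fun m hm => hp m hm ht n).trans ?_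
    rw [Finset.sum_add_distrib]
    simp only [Finset.sum_const, Finset.card_range]
    norm_num at h2 ⊢
    linarith

lemma minor_arcs : ∀ᶠ t : ℝ in nhds 0, 0 < t → ∀ φ ∈ Set.Icc (-Real.pi) Real.pi, 8000 * t ≤ |φ| →
    ‖Hf (exp (-((t : ℂ) - φ * I)))‖ ≤ 2 / t * Real.exp (13 / 100 / t) := by
  have h := isCompact_Icc (a := -Real.pi) (b := Real.pi) |>.eventually_forall_of_forall_eventually
    (x₀ := (0 : ℝ)) (P := fun t φ => 0 < t → 8000 * t ≤ |φ| → ∀ n,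
      t * ∑ m ∈ Finset.range 61, (tm (qq (t, φ)) n m).re ≤ 103 / 1000) (fun φ hφ => local_ev hφ)
  filter_upwards [h, gt_mem_nhds (show (0 : ℝ) < 1 by norm_num)] with t h1 ht1 ht φ hφ hK
  have h2 := h1 φ hφ ht hK
  have hq := norm_qq (t, φ)
  dsimp only at hq
  change ‖Hf (qq (t, φ))‖ ≤ _
  set q := qq (t, φ) with hqd
  have hq1 : ‖q‖ < 1 := by rw [hq]; exact Real.exp_zero ▸ Real.exp_lt_exp.2 (by linarith)
  have hterm : ∀ n, ‖Ht q n‖ ≤ ‖q‖ ^ n * Real.exp (13 / 100 / t) := by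
    intro n
    obtain ⟨E, hE, hn⟩ := Ht_log hq1 n
    rw [hn]
    have h3 := re_E_le ht hq n hE
    refine mul_le_mul ?_ (Real.exp_le_exp.2 ?_) (Real.exp_pos _).le (by positivity)
    · exact pow_le_pow_of_le_one (norm_nonneg _) hq1.le (Nat.le_self_pow (by norm_num) n)
    · have h4 : ∑ m ∈ Finset.range 61, (tm q n m).re ≤ 103 / 1000 / t := by
        rw [le_div_iff₀ ht, mul_comm]; exact h2 n
      have h5 : 103 / 1000 / t + 1 / 40 / t ≤ 13 / 100 / t := by
        rw [← add_div]; gcongr; norm_num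
      linarith
  have hs : HasSum (fun n => ‖q‖ ^ n * Real.exp (13 / 100 / t)) ((1 - ‖q‖)⁻¹ * Real.exp (13 / 100 / t)) :=
    (hasSum_geometric_of_lt_one (norm_nonneg _) hq1).mul_right _
  refine (tsum_of_norm_bounded hs hterm).trans ?_
  refine mul_le_mul_of_nonneg_right ?_ (Real.exp_pos _).le
  rw [hq, inv_eq_one_div, div_le_div_iff₀ (by rw [hq] at hq1; linarith) ht]
  have h6 : Real.exp (-t) ≤ 1 - t / 2 := by
    have h7 := Real.add_one_le_exp t
    have h8 : Real.exp (-t) * Real.exp t = 1 := by rw [← Real.exp_add]; simp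
    have h9 := Real.exp_pos (-t)
    nlinarith
  linarith

end Part10

section Part11

open Complex

/-! ### Part 9 : the saddle point -/

noncomputable def bt : ℝ := Real.pi ^ 2 / 72

lemma bt_gt : 131 / 1000 < bt := by
  rw [bt]; nlinarith [Real.pi_gt_d2]

lemma bt_pos : 0 < bt := lt_trans (by norm_num) bt_gt

lemma bt_lt : bt < 1 := by
  rw [bt]; nlinarith [Real.pi_lt_d2, Real.pi_pos]

noncomputable def uu (L x : ℝ) : ℂ := 1 - ((x / √L : ℝ) : ℂ) * I

lemma uu_re (L x : ℝ) : (uu L x).re = 1 := by simp [uu]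
lemma uu_im (L x : ℝ) : (uu L x).im = -(x / √L) := by
  rw [uu, sub_im, im_ofReal_mul]; simp

lemma uu_ne (L x : ℝ) : uu L x ≠ 0 := by
  intro h; have := uu_re L x; rw [h] at this; simp at this

lemma uu_inv_re (L x : ℝ) : ((uu L x)⁻¹).re = 1 / (1 + (x / √L) ^ 2) := by
  rw [inv_re, normSq_apply, uu_re, uu_im]; ring_nf

noncomputable def tt (L x : ℝ) : ℂ := ((bt / L : ℝ) : ℂ) * uu L x

noncomputable def gg (L x : ℝ) : ℂ :=
  ((√bt / √L * Real.exp (-2 * L) : ℝ) : ℂ) * (Hf (exp (-tt L x)) * exp (L * uu L x))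

lemma tt_re (L x : ℝ) : (tt L x).re = bt / L := by rw [tt, re_ofReal_mul, uu_re, mul_one]

lemma continuous_gg {L : ℝ} (hL : 0 < L) : Continuous (gg L) := by
  have hu : Continuous (uu L) := by unfold uu; fun_prop
  have ht : Continuous (tt L) := by unfold tt; fun_prop
  have hH : Continuous fun x => Hf (exp (-tt L x)) := by
    refine differentiableOn_Hf.continuousOn.comp_continuous (by fun_prop) fun x => ?_
    rw [mem_ball_zero_iff]
    refine norm_q_lt ?_
    rw [tt_re]; exact div_pos bt_pos hL
  unfold gg; fun_prop

/-- the structural decomposition of `gg` on the major arc. -/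
lemma gg_decomp : ∃ C : ℝ, 0 < C ∧ ∀ L x : ℝ, 1 + 8000 ^ 2 ≤ L → |x| ≤ 8000 * √L →
    ∃ D E : ℂ, gg L x = ((√bt / √L : ℝ) : ℂ) * ((8 * Real.pi * tt L x) ^ (1 / 2 : ℂ) / (2 * tt L x)) * D⁻¹ *
      exp (-((x ^ 2 : ℝ) : ℂ) * (uu L x)⁻¹) + E ∧ ‖E‖ ≤ C * Real.exp (-(L / 2)) ∧
      ‖D - (√2 : ℝ) * exp (tt L x / 8)‖ ≤ 4 * (Real.exp (bt / L / 8) * Real.exp (-(Real.pi ^ 2 * (L / (1 + 8000 ^ 2))))) ∧ 1 ≤ ‖D‖ := by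
  obtain ⟨C, hC, h⟩ := cone_asymp (K := 8000) (by norm_num)
  have hb := bt_pos
  refine ⟨C / (2 * √bt), by positivity, fun L x hL hx => ?_⟩
  have hL0 : 0 < L := by linarith
  have hsL : 0 < √L := Real.sqrt_pos.2 hL0
  have hsb : 0 < √bt := Real.sqrt_pos.2 hb
  have hxL : |x / √L| ≤ 8000 := by
    rw [abs_div, abs_of_pos hsL, div_le_iff₀ hsL]; exact hx
  have hxL2 : (x / √L) ^ 2 ≤ 8000 ^ 2 := by rw [← sq_abs]; gcongr
  have htre := tt_re L x
  have htpos : 0 < bt / L := by positivity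
  have htne : tt L x ≠ 0 := by intro h0; rw [h0] at htre; simp at htre; linarith
  have hinv : (tt L x)⁻¹ = ((L / bt : ℝ) : ℂ) * (uu L x)⁻¹ := by
    rw [tt, mul_inv, ← ofReal_inv, inv_div]
  have hinvre : L / (1 + 8000 ^ 2) ≤ ((tt L x)⁻¹).re := by
    rw [hinv, re_ofReal_mul, uu_inv_re]
    calc L / (1 + 8000 ^ 2) = L / 1 * (1 / (1 + 8000 ^ 2)) := by ring
      _ ≤ L / bt * (1 / (1 + (x / √L) ^ 2)) := by
        have := bt_lt.le
        gcongr
  have h1le : 1 ≤ L / (1 + 8000 ^ 2) := by rw [le_div_iff₀ (by norm_num)]; linarith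
  obtain ⟨D, E, h1, h2, h3⟩ := h (tt L x) (by rw [htre]; exact htpos) (by
    rw [htre, tt, im_ofReal_mul, uu_im, abs_mul, abs_neg, abs_of_pos htpos, mul_comm]; gcongr) (h1le.trans hinvre)
  have h3' : ‖D - (√2 : ℝ) * exp (tt L x / 8)‖ ≤ 4 * (Real.exp (bt / L / 8) * Real.exp (-(Real.pi ^ 2 * (L / (1 + 8000 ^ 2))))) := by
    refine h3.trans ?_
    rw [htre]
    refine mul_le_mul_of_nonneg_left (mul_le_mul_of_nonneg_left (Real.exp_le_exp.2 ?_) (by positivity)) (by positivity)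
    have : Real.pi ^ 2 * (L / (1 + 8000 ^ 2)) ≤ Real.pi ^ 2 * ((tt L x)⁻¹).re := mul_le_mul_of_nonneg_left hinvre (by positivity)
    linarith
  have hD : 1 ≤ ‖D‖ := by
    have a1 : ‖((√2 : ℝ) : ℂ) * exp (tt L x / 8)‖ = √2 * Real.exp (bt / L / 8) := by
      rw [norm_mul, Complex.norm_of_nonneg (by positivity), Complex.norm_exp]
      have : (tt L x / 8).re = bt / L / 8 := by
        rw [show (8 : ℂ) = ((8 : ℝ) : ℂ) by norm_num, div_ofReal_re, htre]
      rw [this]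
    have a2 : Real.exp (-(Real.pi ^ 2 * (L / (1 + 8000 ^ 2)))) ≤ 1 / 10 := by
      have b1 : (9 : ℝ) ≤ Real.pi ^ 2 * (L / (1 + 8000 ^ 2)) := by
        have : (9 : ℝ) ≤ Real.pi ^ 2 := by nlinarith [Real.pi_gt_three]
        nlinarith
      have b2 := Real.add_one_le_exp (Real.pi ^ 2 * (L / (1 + 8000 ^ 2)))
      rw [Real.exp_neg, inv_eq_one_div]
      gcongr
      linarith
    have a3 : (1 : ℝ) ≤ Real.exp (bt / L / 8) := Real.one_le_exp (by positivity)
    have a4 := norm_sub_norm_le ((√2 : ℝ) * exp (tt L x / 8)) ((√2 : ℝ) * exp (tt L x / 8) - D)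
    rw [sub_sub_cancel, a1, norm_sub_rev _ D] at a4
    have a5 : (1.41 : ℝ) ≤ √2 := Real.le_sqrt_of_sq_le (by norm_num)
    have a6 : 4 * (Real.exp (bt / L / 8) * Real.exp (-(Real.pi ^ 2 * (L / (1 + 8000 ^ 2))))) ≤ 4 * (Real.exp (bt / L / 8) * (1 / 10)) := by gcongr
    nlinarith
  have hDne : D ≠ 0 := norm_pos_iff.1 (by linarith)
  have hun := uu_ne L x
  have hHf : Hf (exp (-tt L x)) = ((8 * Real.pi * tt L x) ^ (1 / 2 : ℂ) * exp ((Real.pi^2/72:ℝ)/tt L x) + E) * ((2 * tt L x)⁻¹ * D⁻¹) := by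
    rw [← h1]; field_simp
  refine ⟨D, ((√bt / √L * Real.exp (-2 * L) : ℝ) : ℂ) * (E * ((2 * tt L x)⁻¹ * D⁻¹) * exp (L * uu L x)), ?_, ?_, h3', hD⟩
  · rw [gg, hHf]
    have e1 : exp (-((x ^ 2 : ℝ) : ℂ) * (uu L x)⁻¹) = ((Real.exp (-2 * L) : ℝ) : ℂ) * exp ((Real.pi^2/72:ℝ)/tt L x) * exp (L * uu L x) := by
      rw [ofReal_exp, ← exp_add, ← exp_add]
      congr 1
      rw [div_eq_mul_inv, hinv]
      have e2 : (((Real.pi ^ 2 / 72 : ℝ)) : ℂ) * (((L / bt : ℝ) : ℂ) * (uu L x)⁻¹) = L * (uu L x)⁻¹ := by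
        rw [← mul_assoc, ← ofReal_mul, ← bt, mul_div_cancel₀ _ hb.ne']
      rw [e2]
      have e3 : (uu L x - 1) ^ 2 * (L : ℂ) = -((x ^ 2 : ℝ) : ℂ) := by
        have e4 : (((x / √L) ^ 2 * L : ℝ) : ℂ) = ((x ^ 2 : ℝ) : ℂ) := by
          rw [div_pow, Real.sq_sqrt hL0.le, div_mul_cancel₀ _ hL0.ne']
        rw [← e4, uu, ofReal_mul, ofReal_pow]
        linear_combination ((x / √L : ℝ) : ℂ) ^ 2 * L * I_sq
      rw [← e3]
      field_simp
      push_cast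
      ring
    rw [e1]
    push_cast
    field_simp
  · have c1 : ‖(2 * tt L x)⁻¹ * D⁻¹‖ ≤ L / (2 * bt) := by
      rw [norm_mul, norm_inv, norm_inv, norm_mul]
      have : bt / L ≤ ‖tt L x‖ := by rw [← htre]; exact Complex.re_le_norm _
      have c2 : ‖D‖⁻¹ ≤ 1 := inv_le_one_of_one_le₀ hD
      calc (‖(2 : ℂ)‖ * ‖tt L x‖)⁻¹ * ‖D‖⁻¹ ≤ (2 * (bt / L))⁻¹ * 1 := by
            rw [Complex.norm_ofNat]
            gcongr
        _ = _ := by field_simp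
    have c3 : ‖exp (L * uu L x)‖ = Real.exp L := by
      rw [Complex.norm_exp, re_ofReal_mul, uu_re, mul_one]
    have c4 : √L ≤ Real.exp (L / 2) := by
      have := Real.add_one_le_exp L
      rw [Real.exp_half]
      exact Real.sqrt_le_sqrt (by linarith)
    rw [norm_mul, norm_mul, norm_mul E, c3, Complex.norm_of_nonneg (by positivity)]
    calc √bt / √L * Real.exp (-2 * L) * (‖E‖ * ‖(2 * tt L x)⁻¹ * D⁻¹‖ * Real.exp L)
        ≤ √bt / √L * Real.exp (-2 * L) * (C * (L / (2 * bt)) * Real.exp L) := by gcongr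
      _ = C / (2 * √bt) * (√L * (Real.exp (-2 * L) * Real.exp L)) := by
        field_simp
        rw [Real.sq_sqrt hL0.le, Real.sq_sqrt hb.le]
        ring
      _ ≤ C / (2 * √bt) * (Real.exp (L / 2) * (Real.exp (-2 * L) * Real.exp L)) := by gcongr
      _ = C / (2 * √bt) * Real.exp (-(L / 2)) := by rw [← Real.exp_add, ← Real.exp_add]; ring_nf

end Part11

section Part12

open Complex

lemma cpow_half_mul {c : ℝ} (hc : 0 < c) {u : ℂ} (hu : u ≠ 0) :
    ((c : ℂ) * u) ^ (1 / 2 : ℂ) = ((√c : ℝ) : ℂ) * u ^ (1 / 2 : ℂ) := by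
  have hc' : (c : ℂ) ≠ 0 := ofReal_ne_zero.2 hc.ne'
  rw [cpow_def_of_ne_zero (mul_ne_zero hc' hu), cpow_def_of_ne_zero hu, Complex.log_ofReal_mul hc hu, add_mul, exp_add,
    Real.sqrt_eq_rpow, ofReal_cpow hc.le, cpow_def_of_ne_zero hc', ofReal_log hc.le]
  push_cast
  rfl

noncomputable def pref (L x : ℝ) : ℂ :=
  ((√bt / √L : ℝ) : ℂ) * ((8 * Real.pi * tt L x) ^ (1 / 2 : ℂ) / (2 * tt L x))

lemma pref_eq {L : ℝ} (hL : 0 < L) (x : ℝ) :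
    pref L x = ((√(2 * Real.pi) : ℝ) : ℂ) * (uu L x ^ (1 / 2 : ℂ) / uu L x) := by
  have hb := bt_pos
  have hun := uu_ne L x
  have hpi := Real.pi_pos
  have hsL : 0 < √L := Real.sqrt_pos.2 hL
  have hsb : 0 < √bt := Real.sqrt_pos.2 hb
  have e1 : 8 * (Real.pi : ℂ) * tt L x = ((8 * Real.pi * bt / L : ℝ) : ℂ) * uu L x := by
    rw [tt]; push_cast; ring
  have e2 : √(8 * Real.pi * bt / L) = 2 * √(2 * Real.pi) * √bt / √L := by
    rw [show 8 * Real.pi * bt / L = (2 * √(2 * Real.pi) * √bt / √L) ^ 2 by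
      rw [div_pow, mul_pow, mul_pow, Real.sq_sqrt hL.le, Real.sq_sqrt hb.le, Real.sq_sqrt (by positivity)]; ring]
    exact Real.sqrt_sq (by positivity)
  have e3 : √bt / √L * (2 * √(2 * Real.pi) * √bt / √L) / (2 * (bt / L)) = √(2 * Real.pi) := by
    have e4 : √bt / √L * (2 * √(2 * Real.pi) * √bt / √L) = 2 * √(2 * Real.pi) * (√bt ^ 2 / √L ^ 2) := by ring
    rw [e4, Real.sq_sqrt hL.le, Real.sq_sqrt hb.le]
    field_simp
  have e5 : ((√bt / √L : ℝ) : ℂ) * ((2 * √(2 * Real.pi) * √bt / √L : ℝ) : ℂ) / (2 * ((bt / L : ℝ) : ℂ)) = ((√(2 * Real.pi) : ℝ) : ℂ) := by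
    exact_mod_cast congrArg ofReal e3
  rw [pref, e1, cpow_half_mul (by positivity) hun, e2, tt]
  calc _ = ((√bt / √L : ℝ) : ℂ) * ((2 * √(2 * Real.pi) * √bt / √L : ℝ) : ℂ) / (2 * ((bt / L : ℝ) : ℂ)) * (uu L x ^ (1 / 2 : ℂ) / uu L x) := by
        generalize uu L x ^ (1 / 2 : ℂ) = y
        ring
    _ = _ := by rw [e5]

lemma norm_pref_le {L : ℝ} (hL : 0 < L) (x : ℝ) : ‖pref L x‖ ≤ √(2 * Real.pi) := by
  rw [pref_eq hL, norm_mul, Complex.norm_of_nonneg (by positivity)]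
  refine mul_le_of_le_one_right (by positivity) ?_
  have h1 : 1 ≤ ‖uu L x‖ := by
    have := Complex.re_le_norm (uu L x); rwa [uu_re] at this
  have h2 : ‖uu L x ^ (1 / 2 : ℂ)‖ ^ 2 = ‖uu L x‖ := by
    rw [← norm_pow]; congr 1
    simp
  rw [norm_div, div_le_one (by linarith)]
  have h3 := norm_nonneg (uu L x ^ (1 / 2 : ℂ))
  by_contra h
  push Not at h
  nlinarith

lemma gg_bound : ∃ B : ℝ, ∀ L x : ℝ, 1 + 8000 ^ 2 ≤ L → |x| ≤ 8000 * √L →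
    ‖gg L x‖ ≤ B * Real.exp (-(1 / (2 * (1 + 8000 ^ 2))) * x ^ 2) := by
  obtain ⟨C, hC, h⟩ := gg_decomp
  refine ⟨√(2 * Real.pi) + C, fun L x hL hx => ?_⟩
  obtain ⟨D, E, h1, h2, h3, h4⟩ := h L x hL hx
  have hL0 : 0 < L := by linarith
  have hsL : 0 < √L := Real.sqrt_pos.2 hL0
  have hxL : |x / √L| ≤ 8000 := by
    rw [abs_div, abs_of_pos hsL, div_le_iff₀ hsL]; exact hx
  have hxL2 : (x / √L) ^ 2 ≤ 8000 ^ 2 := by rw [← sq_abs]; gcongr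
  have hx2 : x ^ 2 ≤ 8000 ^ 2 * L := by
    rw [div_pow, Real.sq_sqrt hL0.le, div_le_iff₀ hL0] at hxL2; exact hxL2
  rw [h1, ← pref, add_mul]
  refine (norm_add_le _ _).trans (add_le_add ?_ ?_)
  · rw [norm_mul, norm_mul, norm_inv, Complex.norm_exp]
    have a1 := norm_pref_le hL0 x
    have a2 : ‖D‖⁻¹ ≤ 1 := inv_le_one_of_one_le₀ h4
    have a3 : (-((x ^ 2 : ℝ) : ℂ) * (uu L x)⁻¹).re ≤ -(1 / (2 * (1 + 8000 ^ 2))) * x ^ 2 := by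
      rw [← ofReal_neg, re_ofReal_mul, uu_inv_re]
      have : 1 / (2 * (1 + 8000 ^ 2) : ℝ) ≤ 1 / (1 + (x / √L) ^ 2) := by
        apply one_div_le_one_div_of_le (by positivity); linarith
      nlinarith [sq_nonneg x]
    calc _ ≤ √(2 * Real.pi) * 1 * Real.exp (-(1 / (2 * (1 + 8000 ^ 2))) * x ^ 2) :=
          mul_le_mul (mul_le_mul a1 a2 (by positivity) (by positivity)) (Real.exp_le_exp.2 a3) (by positivity) (by positivity)
      _ = _ := by rw [mul_one]
  · refine h2.trans (mul_le_mul_of_nonneg_left (Real.exp_le_exp.2 ?_) hC.le)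
    have : 1 / (2 * (1 + 8000 ^ 2) : ℝ) * x ^ 2 ≤ 1 / (2 * (1 + 8000 ^ 2)) * (8000 ^ 2 * L) := by gcongr
    have h9 : 1 / (2 * (1 + 8000 ^ 2) : ℝ) * (8000 ^ 2 * L) ≤ L / 2 := by
      rw [div_mul_eq_mul_div, div_le_div_iff₀ (by norm_num) (by norm_num)]; linarith
    linarith

lemma uu_tendsto (x : ℝ) : Filter.Tendsto (fun L => uu L x) Filter.atTop (nhds 1) := by
  have h1 : Filter.Tendsto (fun L : ℝ => x / √L) Filter.atTop (nhds 0) :=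
    Filter.Tendsto.const_div_atTop Real.tendsto_sqrt_atTop x
  have h2 := (Complex.continuous_ofReal.tendsto 0).comp h1
  have h3 := (tendsto_const_nhds (x := (1 : ℂ))).sub (h2.mul_const I)
  simpa [uu] using h3

lemma tt_tendsto (x : ℝ) : Filter.Tendsto (fun L => tt L x) Filter.atTop (nhds 0) := by
  have h1 : Filter.Tendsto (fun L : ℝ => bt / L) Filter.atTop (nhds 0) :=
    Filter.Tendsto.const_div_atTop Filter.tendsto_id bt
  have h2 := ((Complex.continuous_ofReal.tendsto 0).comp h1).mul (uu_tendsto x)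
  simpa [tt] using h2

lemma gg_tendsto (x : ℝ) : Filter.Tendsto (fun L => gg L x) Filter.atTop
    (nhds (((√Real.pi * Real.exp (-1 * x ^ 2) : ℝ) : ℂ))) := by
  obtain ⟨C, hC, h⟩ := gg_decomp
  choose! D E h1 h2 h3 h4 using h
  have hev : ∀ᶠ L : ℝ in Filter.atTop, 1 + 8000 ^ 2 ≤ L ∧ |x| ≤ 8000 * √L := by
    refine (Filter.eventually_ge_atTop _).and ?_
    have : Filter.Tendsto (fun L : ℝ => 8000 * √L) Filter.atTop Filter.atTop :=
      Filter.Tendsto.const_mul_atTop (by norm_num) Real.tendsto_sqrt_atTop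
    exact this.eventually_ge_atTop _
  have hE : Filter.Tendsto (fun L => E L x) Filter.atTop (nhds 0) := by
    refine squeeze_zero_norm' (a := fun L => C * Real.exp (-(L / 2))) ?_ ?_
    · filter_upwards [hev] with L hL
      exact h2 L x hL.1 hL.2
    · have : Filter.Tendsto (fun L : ℝ => Real.exp (-(L / 2))) Filter.atTop (nhds 0) :=
        Real.tendsto_exp_neg_atTop_nhds_zero.comp (Filter.tendsto_id.atTop_div_const (by norm_num))
      simpa using this.const_mul C
  have hexp : Filter.Tendsto (fun L => ((√2 : ℝ) : ℂ) * exp (tt L x / 8)) Filter.atTop (nhds (√2 : ℝ)) := by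
    have := (((tt_tendsto x).div_const 8).cexp).const_mul ((√2 : ℝ) : ℂ)
    simpa using this
  have hD : Filter.Tendsto (fun L => D L x) Filter.atTop (nhds (√2 : ℝ)) := by
    have hd : Filter.Tendsto (fun L => D L x - ((√2 : ℝ) : ℂ) * exp (tt L x / 8)) Filter.atTop (nhds 0) := by
      refine squeeze_zero_norm' (a := fun L => 4 * (Real.exp (bt / L / 8) * Real.exp (-(Real.pi ^ 2 * (L / (1 + 8000 ^ 2)))))) ?_ ?_
      · filter_upwards [hev] with L hL
        exact h3 L x hL.1 hL.2
      · have a1 : Filter.Tendsto (fun L : ℝ => Real.exp (bt / L / 8)) Filter.atTop (nhds (Real.exp (0 / 8))) :=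
          (Real.continuous_exp.tendsto _).comp ((Filter.Tendsto.const_div_atTop Filter.tendsto_id bt).div_const 8)
        have a2 : Filter.Tendsto (fun L : ℝ => Real.exp (-(Real.pi ^ 2 * (L / (1 + 8000 ^ 2))))) Filter.atTop (nhds 0) :=
          Real.tendsto_exp_neg_atTop_nhds_zero.comp
            (Filter.Tendsto.const_mul_atTop (by positivity) (Filter.tendsto_id.atTop_div_const (by norm_num)))
        simpa using (a1.mul a2).const_mul 4
    simpa using hd.add hexp
  have hpref : Filter.Tendsto (fun L => pref L x) Filter.atTop (nhds ((√(2 * Real.pi) : ℝ) : ℂ)) := by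
    have a1 : Filter.Tendsto (fun L => uu L x ^ (1 / 2 : ℂ)) Filter.atTop (nhds ((1 : ℂ) ^ (1 / 2 : ℂ))) :=
      (uu_tendsto x).cpow tendsto_const_nhds (by simp)
    have a2 := (a1.div (uu_tendsto x) one_ne_zero).const_mul ((√(2 * Real.pi) : ℝ) : ℂ)
    rw [one_cpow, div_one, mul_one] at a2
    refine a2.congr' ?_
    filter_upwards [Filter.eventually_gt_atTop 0] with L hL
    rw [pref_eq hL]; rfl
  have h2ne : ((√2 : ℝ) : ℂ) ≠ 0 := by
    rw [ofReal_ne_zero]; positivity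
  have hex : Filter.Tendsto (fun L => exp (-((x ^ 2 : ℝ) : ℂ) * (uu L x)⁻¹)) Filter.atTop (nhds (exp (-((x ^ 2 : ℝ) : ℂ) * 1⁻¹))) :=
    (((uu_tendsto x).inv₀ one_ne_zero).const_mul _).cexp
  have hall := ((hpref.mul (hD.inv₀ h2ne)).mul hex).add hE
  have hlim : ((√(2 * Real.pi) : ℝ) : ℂ) * ((√2 : ℝ) : ℂ)⁻¹ * exp (-((x ^ 2 : ℝ) : ℂ) * 1⁻¹) + 0 = ((√Real.pi * Real.exp (-1 * x ^ 2) : ℝ) : ℂ) := by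
    rw [Real.sqrt_mul (by norm_num)]
    push_cast
    field_simp
    simp
  rw [hlim] at hall
  refine hall.congr' ?_
  filter_upwards [hev] with L hL
  rw [h1 L x hL.1 hL.2, ← pref]

noncomputable def GG (L : ℝ) : ℝ → ℂ := (Set.Icc (-(8000 * √L)) (8000 * √L)).indicator (gg L)

lemma GG_tendsto : Filter.Tendsto (fun L => ∫ x, GG L x) Filter.atTop (nhds (Real.pi : ℂ)) := by
  obtain ⟨B, hB⟩ := gg_bound
  have key : Filter.Tendsto (fun L => ∫ x, GG L x) Filter.atTop
      (nhds (∫ x : ℝ, ((√Real.pi * Real.exp (-1 * x ^ 2) : ℝ) : ℂ))) := by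
    refine MeasureTheory.tendsto_integral_filter_of_dominated_convergence
      (fun x => |B| * Real.exp (-(1 / (2 * (1 + 8000 ^ 2))) * x ^ 2)) ?_ ?_ ?_ ?_
    · filter_upwards [Filter.eventually_gt_atTop 0] with L hL
      exact (continuous_gg hL).aestronglyMeasurable.indicator measurableSet_Icc
    · filter_upwards [Filter.eventually_ge_atTop (1 + 8000 ^ 2)] with L hL
      refine Filter.Eventually.of_forall fun x => ?_
      rw [GG]
      by_cases hx : x ∈ Set.Icc (-(8000 * √L)) (8000 * √L)
      · rw [Set.indicator_of_mem hx]
        refine (hB L x hL (abs_le.2 hx)).trans ?_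
        exact mul_le_mul_of_nonneg_right (le_abs_self B) (Real.exp_pos _).le
      · rw [Set.indicator_of_notMem hx, norm_zero]; positivity
    · exact (integrable_exp_neg_mul_sq (by norm_num)).const_mul _
    · refine Filter.Eventually.of_forall fun x => ?_
      refine (gg_tendsto x).congr' ?_
      have : Filter.Tendsto (fun L : ℝ => 8000 * √L) Filter.atTop Filter.atTop :=
        Filter.Tendsto.const_mul_atTop (by norm_num) Real.tendsto_sqrt_atTop
      filter_upwards [this.eventually_ge_atTop |x|] with L hL
      rw [GG, Set.indicator_of_mem (show x ∈ Set.Icc _ _ from abs_le.1 hL)]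
  have e : ∫ x : ℝ, ((√Real.pi * Real.exp (-1 * x ^ 2) : ℝ) : ℂ) = (Real.pi : ℂ) := by
    rw [integral_complex_ofReal, MeasureTheory.integral_const_mul, integral_gaussian, div_one, Real.mul_self_sqrt Real.pi_pos.le]
  rwa [e] at key

end Part12

section Part13

open Complex

noncomputable def ff (n : ℕ) (t φ : ℝ) : ℂ := Hf (exp (-((t : ℂ) - φ * I))) * exp (n * ((t : ℂ) - φ * I))

lemma continuous_ff (n : ℕ) {t : ℝ} (ht : 0 < t) : Continuous (ff n t) := by
  have hH : Continuous fun φ : ℝ => Hf (exp (-((t : ℂ) - φ * I))) := by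
    refine differentiableOn_Hf.continuousOn.comp_continuous (by fun_prop) fun x => ?_
    rw [mem_ball_zero_iff]
    refine norm_q_lt ?_
    simpa using ht
  unfold ff; fun_prop

noncomputable def Ln (n : ℕ) : ℝ := √(bt * n)

lemma Ln_pos {n : ℕ} (hn : 1 ≤ n) : 0 < Ln n :=
  Real.sqrt_pos.2 (mul_pos bt_pos (by exact_mod_cast hn))

lemma Ln_tendsto : Filter.Tendsto Ln Filter.atTop Filter.atTop :=
  Real.tendsto_sqrt_atTop.comp (Filter.Tendsto.const_mul_atTop bt_pos tendsto_natCast_atTop_atTop)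

lemma n_mul_t {n : ℕ} (hn : 1 ≤ n) : (n : ℝ) * (bt / Ln n) = Ln n := by
  have h := Ln_pos hn
  have h2 : Ln n * Ln n = bt * n := Real.mul_self_sqrt (mul_nonneg bt_pos.le (by positivity))
  field_simp
  linarith

lemma sqrt_n {n : ℕ} : √(n : ℝ) = Ln n / √bt := by
  have := Real.sqrt_pos.2 bt_pos
  rw [Ln, Real.sqrt_mul bt_pos.le]
  field_simp

lemma major_eq {n : ℕ} (hn : 1 ≤ n) :
    ((√(n : ℝ) * Real.exp (-2 * Ln n) : ℝ) : ℂ) *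
      ∫ φ in (-(8000 * (bt / Ln n)))..(8000 * (bt / Ln n)), ff n (bt / Ln n) φ = ∫ x, GG (Ln n) x := by
  have hL := Ln_pos hn
  have hb := bt_pos
  have hnt := n_mul_t hn
  rw [sqrt_n]
  set L := Ln n with hLd
  have hsL : 0 < √L := Real.sqrt_pos.2 hL
  have hsb : 0 < √bt := Real.sqrt_pos.2 hb
  rw [GG, MeasureTheory.integral_indicator measurableSet_Icc, MeasureTheory.integral_Icc_eq_integral_Ioc,
    ← intervalIntegral.integral_of_le (by have : 0 ≤ √L := hsL.le
                                          linarith)]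
  have hc : bt / L / √L ≠ 0 := by positivity
  have e1 : 8000 * (bt / L) = (bt / L / √L) * (8000 * √L) := by field_simp
  have e2 : -(8000 * (bt / L)) = (bt / L / √L) * (-(8000 * √L)) := by rw [e1]; ring
  have h := intervalIntegral.integral_comp_mul_left (a := -(8000 * √L)) (b := 8000 * √L) (ff n (bt / L)) hc
  rw [← e1, ← e2] at h
  have h2 : ∫ φ in (-(8000 * (bt / L)))..(8000 * (bt / L)), ff n (bt / L) φ =
      ((bt / L / √L : ℝ) : ℂ) * ∫ x in (-(8000 * √L))..(8000 * √L), ff n (bt / L) (bt / L / √L * x) := by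
    rw [h, real_smul, ← mul_assoc, ← ofReal_mul, mul_inv_cancel₀ hc, ofReal_one, one_mul]
  rw [h2, ← mul_assoc, ← intervalIntegral.integral_const_mul]
  refine intervalIntegral.integral_congr fun x _ => ?_
  have e3 : ((bt / L : ℝ) : ℂ) - ((bt / L / √L * x : ℝ) : ℂ) * I = tt L x := by
    rw [tt, uu]; push_cast; ring
  have e4 : (n : ℂ) * tt L x = L * uu L x := by
    rw [tt, ← mul_assoc, ← ofReal_natCast, ← ofReal_mul, hnt]
  rw [ff, e3, e4, gg, ← ofReal_mul]
  congr 2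
  have e5 : √bt * √bt = bt := Real.mul_self_sqrt hb.le
  have e6 : L / √bt * (bt / L / √L) = √bt / √L := by
    rw [div_div, div_mul_div_comm, div_eq_div_iff (by positivity) (by positivity), ← e5]
    rw [Real.sqrt_mul_self hsb.le]
    ring
  rw [← e6]; ring

lemma minor_bound : ∀ᶠ n : ℕ in Filter.atTop, ∀ φ ∈ Set.Icc (-Real.pi) Real.pi, 8000 * (bt / Ln n) ≤ |φ| →
    ‖ff n (bt / Ln n) φ‖ ≤ 2 / (bt / Ln n) * Real.exp (13 / 100 / bt * Ln n) * Real.exp (Ln n) := by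
  have h0 : Filter.Tendsto (fun n => bt / Ln n) Filter.atTop (nhds 0) :=
    Filter.Tendsto.const_div_atTop Ln_tendsto bt
  filter_upwards [h0.eventually minor_arcs, Filter.eventually_ge_atTop 1] with n h hn φ hφ hK
  have hL := Ln_pos hn
  have ht : 0 < bt / Ln n := div_pos bt_pos hL
  have h1 := h ht φ hφ hK
  rw [ff, norm_mul]
  have e1 : ‖exp (n * (((bt / Ln n : ℝ) : ℂ) - φ * I))‖ = Real.exp (Ln n) := by
    rw [Complex.norm_exp, ← ofReal_natCast, re_ofReal_mul]
    have e3 : (((bt / Ln n : ℝ) : ℂ) - φ * I).re = bt / Ln n := by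
      rw [sub_re, ofReal_re, re_ofReal_mul]; simp
    rw [e3, n_mul_t hn]
  have e2 : 13 / 100 / (bt / Ln n) = 13 / 100 / bt * Ln n := by
    have := bt_pos.ne'
    field_simp
  rw [e1, ← e2]
  gcongr

lemma ac_tendsto : Filter.Tendsto (fun n : ℕ => ac n * ((√(n : ℝ) * Real.exp (-2 * Ln n) : ℝ) : ℂ)) Filter.atTop (nhds (1 / 2)) := by
  have hpi := Real.pi_pos
  have hb := bt_pos
  set R : ℕ → ℂ := fun n => ac n * ((√(n : ℝ) * Real.exp (-2 * Ln n) : ℝ) : ℂ) - (1 / (2 * Real.pi) : ℂ) * ∫ x, GG (Ln n) x with hR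
  have h0 : Filter.Tendsto (fun n => bt / Ln n) Filter.atTop (nhds 0) :=
    Filter.Tendsto.const_div_atTop Ln_tendsto bt
  have hsmall : ∀ᶠ n in Filter.atTop, 8000 * (bt / Ln n) < Real.pi := by
    have := h0.const_mul 8000
    rw [mul_zero] at this
    exact this.eventually (gt_mem_nhds hpi)
  have hRb : ∀ᶠ n in Filter.atTop, ‖R n‖ ≤ 2 / (√bt * bt) * (Ln n ^ 2 * Real.exp (-(1 - 13 / 100 / bt) * Ln n)) := by
    filter_upwards [minor_bound, hsmall, Filter.eventually_ge_atTop 1] with n hmin hs hn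
    have hL := Ln_pos hn
    have ht : 0 < bt / Ln n := div_pos bt_pos hL
    have hcont := continuous_ff n ht
    have hii : ∀ a b : ℝ, IntervalIntegrable (ff n (bt / Ln n)) MeasureTheory.volume a b := fun a b => hcont.intervalIntegrable a b
    set M := 2 / (bt / Ln n) * Real.exp (13 / 100 / bt * Ln n) * Real.exp (Ln n) with hM
    have hM0 : 0 ≤ M := by positivity
    set T := 8000 * (bt / Ln n) with hT
    have hT0 : 0 < T := by positivity
    have hac : ac n = (1 / (2 * Real.pi) : ℂ) * ∫ φ in (-Real.pi)..Real.pi, ff n (bt / Ln n) φ := ac_eq_integral n ht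
    have hsplit : ∫ φ in (-Real.pi)..Real.pi, ff n (bt / Ln n) φ = (∫ φ in (-Real.pi)..(-T), ff n (bt / Ln n) φ)
        + (∫ φ in (-T)..T, ff n (bt / Ln n) φ) + ∫ φ in T..Real.pi, ff n (bt / Ln n) φ := by
      rw [intervalIntegral.integral_add_adjacent_intervals (hii _ _) (hii _ _),
        intervalIntegral.integral_add_adjacent_intervals (hii _ _) (hii _ _)]
    have b1 : ‖∫ φ in (-Real.pi)..(-T), ff n (bt / Ln n) φ‖ ≤ M * Real.pi := by
      refine (intervalIntegral.norm_integral_le_of_norm_le_const (C := M) fun φ hφ => ?_).trans ?_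
      · rw [Set.uIoc_of_le (by linarith)] at hφ
        refine hmin φ ⟨hφ.1.le, by linarith [hφ.2]⟩ ?_
        rw [abs_of_neg (by linarith [hφ.2])]; linarith [hφ.2]
      · gcongr
        rw [abs_of_nonneg (by linarith)]; linarith
    have b2 : ‖∫ φ in T..Real.pi, ff n (bt / Ln n) φ‖ ≤ M * Real.pi := by
      refine (intervalIntegral.norm_integral_le_of_norm_le_const (C := M) fun φ hφ => ?_).trans ?_
      · rw [Set.uIoc_of_le (by linarith)] at hφ
        refine hmin φ ⟨by linarith [hφ.1], hφ.2⟩ ?_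
        rw [abs_of_pos (by linarith [hφ.1])]; linarith [hφ.1]
      · gcongr
        rw [abs_of_nonneg (by linarith)]; linarith
    have e1 : R n = (1 / (2 * Real.pi) : ℂ) * ((√(n : ℝ) * Real.exp (-2 * Ln n) : ℝ) : ℂ) *
        ((∫ φ in (-Real.pi)..(-T), ff n (bt / Ln n) φ) + ∫ φ in T..Real.pi, ff n (bt / Ln n) φ) := by
      rw [hR]
      simp only
      rw [← major_eq hn, hac, hsplit, ← hT]; ring
    have e2 : ‖(1 / (2 * Real.pi) : ℂ)‖ = 1 / (2 * Real.pi) := by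
      rw [show (1 / (2 * Real.pi) : ℂ) = ((1 / (2 * Real.pi) : ℝ) : ℂ) by push_cast; rfl, Complex.norm_of_nonneg (by positivity)]
    rw [e1, norm_mul, norm_mul, e2, Complex.norm_of_nonneg (by positivity)]
    calc 1 / (2 * Real.pi) * (√(n : ℝ) * Real.exp (-2 * Ln n)) * ‖_‖
        ≤ 1 / (2 * Real.pi) * (√(n : ℝ) * Real.exp (-2 * Ln n)) * (M * Real.pi + M * Real.pi) := by
          gcongr
          exact (norm_add_le _ _).trans (add_le_add b1 b2)
      _ = √(n : ℝ) * (2 / (bt / Ln n)) * (Real.exp (-2 * Ln n) * Real.exp (13 / 100 / bt * Ln n) * Real.exp (Ln n)) := by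
          rw [hM]; field_simp; ring
      _ = 2 / (√bt * bt) * (Ln n ^ 2 * Real.exp (-(1 - 13 / 100 / bt) * Ln n)) := by
          rw [← Real.exp_add, ← Real.exp_add, sqrt_n]
          have : -2 * Ln n + 13 / 100 / bt * Ln n + Ln n = -(1 - 13 / 100 / bt) * Ln n := by ring
          rw [this]
          have := Real.sqrt_pos.2 hb
          field_simp
  have hc : 0 < 1 - 13 / 100 / bt := by
    rw [sub_pos, div_lt_one hb]; linarith [bt_gt]
  have hR0 : Filter.Tendsto R Filter.atTop (nhds 0) := by
    refine squeeze_zero_norm' hRb ?_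
    have h1 : Filter.Tendsto (fun x : ℝ => x ^ (2 : ℝ) * Real.exp (-(1 - 13 / 100 / bt) * x)) Filter.atTop (nhds 0) :=
      tendsto_rpow_mul_exp_neg_mul_atTop_nhds_zero 2 _ hc
    have h2 := (h1.comp Ln_tendsto).const_mul (2 / (√bt * bt))
    rw [mul_zero] at h2
    refine h2.congr fun n => ?_
    simp only [Function.comp, Real.rpow_two]
  have h3 := hR0.add ((GG_tendsto.comp Ln_tendsto).const_mul (1 / (2 * Real.pi) : ℂ))
  have e : (0 : ℂ) + 1 / (2 * Real.pi) * Real.pi = 1 / 2 := by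
    have : (Real.pi : ℂ) ≠ 0 := ofReal_ne_zero.2 hpi.ne'
    field_simp
    ring
  rw [e] at h3
  refine h3.congr fun n => ?_
  simp only [hR, Function.comp]
  ring

end Part13

section Part14

open Complex

lemma Ln_eq (n : ℕ) : Ln n = Real.pi / 24 * √(8 * (n : ℝ)) := by
  rw [Ln, bt, show Real.pi ^ 2 / 72 * (n : ℝ) = (Real.pi / 24) ^ 2 * (8 * n) by ring, Real.sqrt_mul (by positivity),
    Real.sqrt_sq (by positivity)]

lemma sqrt8_tendsto : Filter.Tendsto (fun n : ℕ => √(8 * (n : ℝ))) Filter.atTop Filter.atTop :=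
  Real.tendsto_sqrt_atTop.comp (Filter.Tendsto.const_mul_atTop (by norm_num) tendsto_natCast_atTop_atTop)

lemma sqrt_diff_tendsto : Filter.Tendsto (fun n : ℕ => √(8 * (n : ℝ)) - √(8 * (n : ℝ) - 1)) Filter.atTop (nhds 0) := by
  refine squeeze_zero' (Filter.Eventually.of_forall fun n => ?_) ?_ (Filter.Tendsto.const_div_atTop sqrt8_tendsto 1)
  · have : √(8 * (n : ℝ) - 1) ≤ √(8 * (n : ℝ)) := Real.sqrt_le_sqrt (by linarith)
    linarith
  · filter_upwards [Filter.eventually_ge_atTop 1] with n hn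
    have hn1 : (1 : ℝ) ≤ n := by exact_mod_cast hn
    have h1 : 0 < √(8 * (n : ℝ)) := Real.sqrt_pos.2 (by linarith)
    have h2 : √(8 * (n : ℝ)) * √(8 * (n : ℝ)) = 8 * n := Real.mul_self_sqrt (by linarith)
    have h3 : √(8 * (n : ℝ) - 1) * √(8 * (n : ℝ) - 1) = 8 * n - 1 := Real.mul_self_sqrt (by linarith)
    have h4 : 0 ≤ √(8 * (n : ℝ) - 1) := Real.sqrt_nonneg _
    have h5 : √(8 * (n : ℝ) - 1) ≤ √(8 * (n : ℝ)) := Real.sqrt_le_sqrt (by linarith)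
    rw [le_div_iff₀ h1]
    nlinarith

lemma ratio_tendsto : Filter.Tendsto (fun n : ℕ => √(8 * (n : ℝ) - 1) / (2 * √2 * Real.cosh (Real.pi * √(8 * (n : ℝ) - 1) / 12)) /
    (√(n : ℝ) * Real.exp (-2 * Ln n))) Filter.atTop (nhds 2) := by
  have hd := sqrt_diff_tendsto
  have a1 : Filter.Tendsto (fun n : ℕ => 1 - (√(8 * (n : ℝ)) - √(8 * (n : ℝ) - 1)) / √(8 * (n : ℝ))) Filter.atTop (nhds (1 - 0)) :=
    tendsto_const_nhds.sub (hd.div_atTop sqrt8_tendsto)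
  have hM : Filter.Tendsto (fun n : ℕ => √(8 * (n : ℝ) - 1)) Filter.atTop Filter.atTop := by
    have h := sqrt8_tendsto.atTop_add (hd.neg)
    refine h.congr fun n => ?_
    ring
  have a2 : Filter.Tendsto (fun n : ℕ => 2 * Real.exp (Real.pi / 12 * (√(8 * (n : ℝ)) - √(8 * (n : ℝ) - 1))) /
      (1 + Real.exp (-(Real.pi / 6 * √(8 * (n : ℝ) - 1))))) Filter.atTop (nhds (2 * Real.exp (Real.pi / 12 * 0) / (1 + 0))) := by
    refine Filter.Tendsto.div (((Real.continuous_exp.tendsto _).comp (hd.const_mul _)).const_mul 2) ?_ (by norm_num)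
    refine tendsto_const_nhds.add (Real.tendsto_exp_neg_atTop_nhds_zero.comp ?_)
    exact Filter.Tendsto.const_mul_atTop (by positivity) hM
  have a3 := a1.mul a2
  have e : (1 - 0) * (2 * Real.exp (Real.pi / 12 * 0) / (1 + 0)) = (2 : ℝ) := by simp
  rw [e] at a3
  refine a3.congr' ?_
  filter_upwards [Filter.eventually_ge_atTop 1] with n hn
  have hn1 : (1 : ℝ) ≤ n := by exact_mod_cast hn
  have e8 : √(8 * (n : ℝ)) = 2 * √2 * √(n : ℝ) := by
    rw [show 8 * (n : ℝ) = 2 ^ 2 * (2 * n) by ring, Real.sqrt_mul (by norm_num), Real.sqrt_sq (by norm_num), Real.sqrt_mul (by norm_num)]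
    ring
  have hsn : 0 < √(n : ℝ) := Real.sqrt_pos.2 (by linarith)
  rw [Ln_eq, Real.cosh_eq]
  set S := √(8 * (n : ℝ) - 1) with hS
  set P := √(8 * (n : ℝ)) with hP
  have hP0 : 0 < P := Real.sqrt_pos.2 (by linarith)
  have e1 : Real.exp (Real.pi / 12 * (P - S)) = Real.exp (Real.pi / 12 * P) / Real.exp (Real.pi * S / 12) := by
    rw [← Real.exp_sub]; ring_nf
  have e2 : Real.exp (-2 * (Real.pi / 24 * P)) = (Real.exp (Real.pi / 12 * P))⁻¹ := by
    rw [← Real.exp_neg]; ring_nf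
  have e3 : Real.exp (-(Real.pi / 6 * S)) = (Real.exp (Real.pi * S / 12))⁻¹ / Real.exp (Real.pi * S / 12) := by
    rw [← Real.exp_neg, ← Real.exp_sub]; ring_nf
  have e4 : 1 - (P - S) / P = S / (2 * √2 * √(n : ℝ)) := by rw [← e8]; field_simp; ring
  rw [e1, e2, e3, e4, Real.exp_neg]
  have hX := Real.exp_pos (Real.pi / 12 * P)
  have hY := Real.exp_pos (Real.pi * S / 12)
  generalize Real.exp (Real.pi / 12 * P) = X at *
  generalize Real.exp (Real.pi * S / 12) = Y at *
  field_simp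

theorem Acoef_one_sixth_asymptotic0 :
    Filter.Tendsto
      (fun n : ℕ => Acoef 1 6 n * ((√(8 * (n : ℝ) - 1) : ℝ) : ℂ) /
        (((2 * √2 : ℝ) : ℂ) * ((Real.cosh (Real.pi * √(8 * (n : ℝ) - 1) / 12) : ℝ) : ℂ)))
      Filter.atTop (nhds 1) := by
  have h := ac_tendsto.mul ((Complex.continuous_ofReal.tendsto 2).comp ratio_tendsto)
  have e : (1 / 2 : ℂ) * ((2 : ℝ) : ℂ) = 1 := by norm_num
  rw [e] at h
  refine h.congr' ?_
  filter_upwards [Filter.eventually_ge_atTop 1] with n hn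
  rw [Acoef_eq_ac]
  have hn1 : (1 : ℝ) ≤ n := by exact_mod_cast hn
  have hz : √(n : ℝ) * Real.exp (-2 * Ln n) ≠ 0 := by
    have : 0 < √(n : ℝ) := Real.sqrt_pos.2 (by linarith)
    positivity
  simp only [Function.comp]
  rw [mul_assoc, ← ofReal_mul, mul_div_cancel₀ _ hz, ofReal_div, ofReal_mul (2 * √2)]
  ring

end Part14

theorem Acoef_one_sixth_asymptotic :
    Filter.Tendsto
      (fun n : ℕ =>
        Acoef 1 6 n * ((Real.sqrt (8 * (n : ℝ) - 1) : ℝ) : ℂ) /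
          (((2 * Real.sqrt 2 : ℝ) : ℂ) *
            ((Real.cosh (Real.pi * Real.sqrt (8 * (n : ℝ) - 1) / 12) : ℝ) : ℂ)))
      Filter.atTop (nhds 1) := by
  exact Acoef_one_sixth_asymptotic0
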